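/- arXiv:2505.15826 — 3 statements merged into one kernel-verified Lean document; each statement's English description precedes it below -/
import Mathlib

section
/- (Lackner–Panholzer, Theorem 4.4) For all n ≥ 1 and all 0 ≤ m ≤ n, the total number M_{n,m} of (n,m)-mapping parking functions and the total number F_{n,m} of (n,m)-tree parking functions satisfy M_{n,m} = n · F_{n,m}. -/
/-- A rooted labelled tree on the vertex set `Fin n`, encoded by its root and its parent
map: the root is its own parent and every vertex reaches the root by iterating the parent
map (this data is equivalent to a tree on `{1,…,n}` with a distinguished root). -/
structure LabelledRootedTree (n : ℕ) where
  root : Fin n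
  parent : Fin n → Fin n
  parent_root : parent root = root
  reaches_root : ∀ v : Fin n, ∃ k : ℕ, parent^[k] v = root

/-- The parking procedure driven by a step map `f` on `Fin n` (the parent map of a tree, or
an `n`-mapping).  `occ` is the list of occupied vertices; the drivers in the list arrive in
order, and the driver starting at `v` parks at `f^[i] v` for the least `i` such that
`f^[i] v` is unoccupied (searching `i < n` suffices, since the forward orbit of `v` has at
most `n` distinct vertices, all appearing among the first `n` iterates, in visit order).
The result is `none` if some driver finds every vertex on its route occupied. -/
def parkAux (n : ℕ) (f : Fin n → Fin n) : List (Fin n) → List (Fin n) → Option (List (Fin n))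
  | occ, [] => some occ
  | occ, v :: rest =>
    match (List.range n).find? (fun i => decide (f^[i] v ∉ occ)) with
    | none => none
    | some i => parkAux n f (f^[i] v :: occ) rest

/-- `s : Fin m → Fin n` is a parking function for the step map `f` on `Fin n`:
all `m` drivers, arriving in order with preferences `s 1, …, s m`, park successfully. -/
def ParkingSucceeds {n m : ℕ} (f : Fin n → Fin n) (s : Fin m → Fin n) : Prop :=
  (parkAux n f [] (List.ofFn s)).isSome

/-- `s` is a tree parking function for the rooted labelled tree `T`: each driver `k` starts
at `s k` and drives towards the root, parking at the first unoccupied vertex. -/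
def IsTreeParking {n m : ℕ} (T : LabelledRootedTree n) (s : Fin m → Fin n) : Prop :=
  ParkingSucceeds T.parent s

/-- `M_{n,m}`: the number of pairs `(f, s)` with `f` an `n`-mapping and
`s ∈ {1,…,n}^m` a mapping parking function for `f`. -/
noncomputable def MCount (n m : ℕ) : ℕ :=
  Nat.card {p : (Fin n → Fin n) × (Fin m → Fin n) // ParkingSucceeds p.1 p.2}

/-- `F_{n,m}`: the number of pairs `(T, s)` with `T` a rooted labelled tree on `{1,…,n}`
and `s ∈ {1,…,n}^m` a tree parking function for `T`. -/
noncomputable def FCount (n m : ℕ) : ℕ :=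
  Nat.card {p : LabelledRootedTree n × (Fin m → Fin n) // IsTreeParking p.1 p.2}

/-!
Fix the preferences `s` and let `n` be the number of vertices. If `s` parks under `f`, the edges
of `f` used by the drivers form a rooted forest: a driver only crosses occupied vertices and stops
at a free one. Conversely every map that contains these edges produces the same routes. Hence the
maps under which `s` parks are partitioned according to their route forest, the class of a forest
with `k` components consisting of all maps that extend it. There are `n ^ k` such maps, since the
value at each of the `k` roots is free, and `n ^ (k - 1)` of them are rooted trees, by Pitman's
double counting. So trees make up a proportion `1 / n` of each class.
-/

theorem iterate_eq_iterate_of_forall_lt {V : Type*} {f h : V → V} {v : V} {i : ℕ}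
    (heq : ∀ j < i, h (f^[j] v) = f (f^[j] v)) : ∀ j ≤ i, h^[j] v = f^[j] v := by
  intro j hj
  induction j with
  | zero => rfl
  | succ j ih =>
    rw [Function.iterate_succ_apply', Function.iterate_succ_apply', ih (by omega), heq j hj]

theorem ncard_sep_not_add_one_of_existsUnique {α : Type*} {s : Set α} {p : α → Prop}
    (hs : s.Finite) (h : ∃! a, a ∈ s ∧ p a) : {a ∈ s | ¬ p a}.ncard + 1 = s.ncard := by
  obtain ⟨r, ⟨hrs, hr⟩, hr_unique⟩ := h
  have hdiff : {a ∈ s | ¬ p a} = s \ {r} := by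
    ext a
    simp only [Set.mem_ofPred_eq, Set.mem_sdiff, Set.mem_singleton_iff]
    exact and_congr_right fun has => not_congr ⟨fun ha => hr_unique a ⟨has, ha⟩, fun ha => ha ▸ hr⟩
  rw [hdiff, Set.ncard_sdiff_singleton_add_one hrs hs]

theorem card_subtype_eq_sum_card_fiber {α β : Type*} [Finite α] [Fintype β] (p : α → Prop)
    (φ : α → β) : Nat.card {a // p a} = ∑ b, Nat.card {a // p a ∧ φ a = b} := by
  rw [← Nat.card_congr (Equiv.sigmaFiberEquiv fun a : {a // p a} => φ a), Nat.card_sigma]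
  exact Finset.sum_congr rfl fun b _ =>
    Nat.card_congr (Equiv.subtypeSubtypeEquivSubtypeInter p fun a => φ a = b)

theorem card_prod_subtype_eq_sum {α β : Type*} [Finite α] [Fintype β] (p : α → β → Prop) :
    Nat.card {x : α × β // p x.1 x.2} = ∑ b, Nat.card {a // p a b} := by
  rw [← Nat.card_sigma]
  exact Nat.card_congr <| ((Equiv.prodComm α β).subtypeEquiv fun _ => Iff.rfl).trans
    (Equiv.subtypeProdEquivSigmaSubtype fun b a => p a b)

section Reaches

variable {V : Type*} {f : V → V} {x y z : V}

/-- `y` lies on the forward orbit of `x` under `f`. -/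
def Reaches (f : V → V) (x y : V) : Prop := ∃ k : ℕ, f^[k] x = y

theorem Reaches.refl (f : V → V) (x : V) : Reaches f x x := ⟨0, rfl⟩

theorem ne_of_not_reaches (h : ¬ Reaches f x y) : x ≠ y := fun hxy =>
  h (hxy ▸ Reaches.refl f x)

theorem Reaches.trans (hxy : Reaches f x y) (hyz : Reaches f y z) : Reaches f x z := by
  obtain ⟨a, rfl⟩ := hxy
  obtain ⟨b, rfl⟩ := hyz
  exact ⟨b + a, Function.iterate_add_apply f b a x⟩

theorem Reaches.head (h : Reaches f (f x) y) : Reaches f x y :=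
  Reaches.trans ⟨1, rfl⟩ h

theorem Reaches.eq_of_isFixedPt (hxy : Reaches f x y) (hxz : Reaches f x z)
    (hy : Function.IsFixedPt f y) (hz : Function.IsFixedPt f z) : y = z := by
  obtain ⟨a, rfl⟩ := hxy
  obtain ⟨b, rfl⟩ := hxz
  calc f^[a] x = f^[b] (f^[a] x) := (hy.iterate b).symm
    _ = f^[a] (f^[b] x) := Function.Commute.iterate_iterate_self f b a x
    _ = f^[b] x := hz.iterate a

end Reaches

section Forest

variable {V : Type*} {f g h : V → V} {u w x y : V}

/-- The parent map of a rooted forest; the roots are the fixed points. -/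
def IsForestMap (f : V → V) : Prop := ∀ x, ∃ r, Function.IsFixedPt f r ∧ Reaches f x r

/-- The parent map of a rooted tree; the root is the unique fixed point. -/
def IsTreeMap (f : V → V) : Prop := ∃ r, Function.IsFixedPt f r ∧ ∀ x, Reaches f x r

/-- `h` arises from `f` by redirecting fixed points of `f`. When `f` is a forest map, this says
that `h` keeps every edge of the forest and gives an arbitrary value to each root. -/
def Extends (f h : V → V) : Prop := ∀ x, ¬ Function.IsFixedPt f x → h x = f x

theorem Extends.refl (f : V → V) : Extends f f := fun _ _ => rfl

theorem Extends.isFixedPt (hfh : Extends f h) (hx : Function.IsFixedPt h x) :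
    Function.IsFixedPt f x := by
  by_contra hfx
  exact hfx ((hfh x hfx).symm.trans hx)

theorem Extends.trans (hfg : Extends f g) (hgh : Extends g h) : Extends f h := fun x hx =>
  (hgh x fun hgx => hx (hfg.isFixedPt hgx)).trans (hfg x hx)

theorem Extends.reaches (hfh : Extends f h) (hxy : Reaches f x y) : Reaches h x y := by
  obtain ⟨k, hk⟩ := hxy
  induction k generalizing x with
  | zero => exact ⟨0, hk⟩
  | succ k ih =>
    by_cases hx : Function.IsFixedPt f x
    · exact ⟨0, (hx.iterate (k + 1)).symm.trans hk⟩
    · exact Reaches.head (hfh x hx ▸ ih hk)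

theorem extends_update [DecidableEq V] (hu : Function.IsFixedPt f u) (w : V) :
    Extends f (Function.update f u w) := fun x hx =>
  Function.update_of_ne (by rintro rfl; exact hx hu) w f

theorem IsForestMap.existsUnique_root (hf : IsForestMap f) (x : V) :
    ∃! r, Function.IsFixedPt f r ∧ Reaches f x r := by
  obtain ⟨r, hr, hxr⟩ := hf x
  exact ⟨r, ⟨hr, hxr⟩, fun r' ⟨hr', hxr'⟩ => hxr'.eq_of_isFixedPt hxr hr' hr⟩

theorem IsTreeMap.isForestMap (hf : IsTreeMap f) : IsForestMap f := fun x =>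
  let ⟨r, hr, hreach⟩ := hf
  ⟨r, hr, hreach x⟩

theorem IsTreeMap.existsUnique_isFixedPt (hf : IsTreeMap f) : ∃! r, Function.IsFixedPt f r := by
  obtain ⟨r, hr, hreach⟩ := hf
  exact ⟨r, hr, fun r' hr' => (Reaches.refl f r').eq_of_isFixedPt (hreach r') hr' hr⟩

theorem IsForestMap.isTreeMap (hf : IsForestMap f) (huniq : ∃! r, Function.IsFixedPt f r) :
    IsTreeMap f := by
  obtain ⟨r, hr, hr_unique⟩ := huniq
  refine ⟨r, hr, fun x => ?_⟩
  obtain ⟨r', hr', hxr'⟩ := hf x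
  exact hr_unique r' hr' ▸ hxr'

theorem IsForestMap.isFixedPt_of_reaches_apply (hf : IsForestMap f) (hu : Reaches f (f u) u) :
    Function.IsFixedPt f u := by
  obtain ⟨a, ha⟩ := hu
  obtain ⟨r, hr, b, rfl⟩ := hf u
  have hper : u ∈ Function.periodicPts f := ⟨a + 1, a.succ_pos, ha⟩
  rw [← Function.minimalPeriod_eq_one_iff_isFixedPt] at hr ⊢
  rwa [Function.minimalPeriod_apply_iterate hper] at hr

theorem IsForestMap.update [DecidableEq V] (hf : IsForestMap f) (hu : Function.IsFixedPt f u)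
    (hwu : ¬ Reaches f w u) : IsForestMap (Function.update f u w) := by
  have hext : Extends f (Function.update f u w) := extends_update hu w
  have hfixed {r : V} (hr : Function.IsFixedPt f r) (hru : r ≠ u) :
      Function.IsFixedPt (Function.update f u w) r := by
    rwa [Function.IsFixedPt, Function.update_of_ne hru]
  intro x
  obtain ⟨r, hr, hxr⟩ := hf x
  by_cases hru : r = u
  · subst hru
    obtain ⟨r', hr', hwr'⟩ := hf w
    have hrw : Reaches (Function.update f r w) r w :=
      ⟨1, by rw [Function.iterate_one, Function.update_self]⟩
    exact ⟨r', hfixed hr' fun h => hwu (h ▸ hwr'),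
      ((hext.reaches hxr).trans hrw).trans (hext.reaches hwr')⟩
  · exact ⟨r, hfixed hr hru, hext.reaches hxr⟩

theorem fixedPoints_update [DecidableEq V] (hwu : w ≠ u) :
    Function.fixedPoints (Function.update f u w) = Function.fixedPoints f \ {u} := by
  ext x
  by_cases hx : x = u
  · simp [hx, Function.IsFixedPt, hwu]
  · simp [hx, Function.IsFixedPt]

theorem Extends.not_reaches_of_isTreeMap (hfh : Extends f h) (hh : IsTreeMap h)
    (hhu : ¬ Function.IsFixedPt h u) : ¬ Reaches f (h u) u := fun hreach =>
  hhu (hh.isForestMap.isFixedPt_of_reaches_apply (hfh.reaches hreach))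

theorem Extends.update_left [DecidableEq V] (hfh : Extends f h) (u : V) :
    Extends (Function.update f u (h u)) h := by
  intro x hx
  by_cases hxu : x = u
  · subst hxu
    exact (Function.update_self x (h x) f).symm
  · have hval : Function.update f u (h u) x = f x := Function.update_of_ne hxu (h u) f
    rw [Function.IsFixedPt, hval] at hx
    rw [hval, hfh x hx]

theorem Extends.apply_eq_of_update [DecidableEq V] (hwu : w ≠ u)
    (hfh : Extends (Function.update f u w) h) : h u = w := by
  rw [hfh u (by rwa [Function.IsFixedPt, Function.update_self]), Function.update_self]

theorem Extends.existsUnique_isFixedPt (hfh : Extends f h) (hh : IsTreeMap h) :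
    ∃! r, r ∈ Function.fixedPoints f ∧ Function.IsFixedPt h r := by
  obtain ⟨r, hr, hr_unique⟩ := hh.existsUnique_isFixedPt
  exact ⟨r, ⟨hfh.isFixedPt hr, hr⟩, fun r' ⟨_, hr'⟩ => hr_unique r' hr'⟩

theorem IsTreeMap.eq_of_extends (hf : IsTreeMap f) (hh : IsTreeMap h)
    (hfh : Extends f h) : h = f := by
  obtain ⟨r, hr, -⟩ := hh.existsUnique_isFixedPt
  funext x
  by_cases hx : Function.IsFixedPt f x
  · obtain rfl : x = r := hf.existsUnique_isFixedPt.unique hx (hfh.isFixedPt hr)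
    exact hr.trans hx.symm
  · exact hfh x hx

end Forest

section Counting

variable {V : Type*} {f : V → V}

theorem card_extends (f : V → V) [Finite V] :
    Nat.card {h // Extends f h} = Nat.card V ^ (Function.fixedPoints f).ncard := by
  classical
  have e : {h // Extends f h} ≃ (Function.fixedPoints f → V) :=
    { toFun h r := h.1 r
      invFun c := ⟨fun x => if hx : x ∈ Function.fixedPoints f then c ⟨x, hx⟩ else f x,
        fun _ hx => dif_neg hx⟩
      left_inv h := by
        ext x
        by_cases hx : x ∈ Function.fixedPoints f
        · simp only [hx, dite_true]
        · simp only [hx, dite_false, h.2 x hx]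
      right_inv c := by
        ext r
        simp only [r.2, dite_true] }
  rw [Nat.card_congr e, Nat.card_fun, Nat.card_coe_set_eq]

/-- Pitman's double counting: choosing a tree that extends `f` and a root `u` of `f` that is not
the root of the tree amounts to grafting the component of `u` onto a vertex `w` outside it and then
extending the resulting forest to a tree. -/
def treeExtensionGraftEquiv [DecidableEq V] (f : V → V) :
    (Σ h : {h // Extends f h ∧ IsTreeMap h},
      {u ∈ Function.fixedPoints f | ¬ Function.IsFixedPt h.1 u}) ≃
    Σ w : V, Σ u : {u ∈ Function.fixedPoints f | ¬ Reaches f w u},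
      {h // Extends (Function.update f u.1 w) h ∧ IsTreeMap h} where
  toFun := fun ⟨⟨h, hfh, hh⟩, ⟨u, hu, hhu⟩⟩ =>
    ⟨h u, ⟨u, hu, hfh.not_reaches_of_isTreeMap hh hhu⟩, ⟨h, hfh.update_left u, hh⟩⟩
  invFun := fun ⟨w, ⟨u, hu, hwu⟩, ⟨h, hfh, hh⟩⟩ =>
    have hne : w ≠ u := ne_of_not_reaches hwu
    ⟨⟨h, (extends_update hu w).trans hfh, hh⟩,
      ⟨u, hu, fun hhu => hne ((hfh.apply_eq_of_update hne).symm.trans hhu)⟩⟩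
  left_inv := fun ⟨⟨_, _, _⟩, ⟨_, _, _⟩⟩ => rfl
  right_inv := by
    rintro ⟨w, ⟨u, hu, hwu⟩, ⟨h, hfh, hh⟩⟩
    have hne : w ≠ u := ne_of_not_reaches hwu
    obtain rfl : h u = w := hfh.apply_eq_of_update hne
    rfl

variable [Finite V]

theorem IsForestMap.card_tree_extends (hf : IsForestMap f) {k : ℕ}
    (hk : (Function.fixedPoints f).ncard = k + 1) :
    Nat.card {h // Extends f h ∧ IsTreeMap h} = Nat.card V ^ k := by
  classical
  have := Fintype.ofFinite V
  induction k generalizing f with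
  | zero =>
    obtain ⟨r, hr⟩ := Set.ncard_eq_one.mp hk
    have htree : IsTreeMap f := hf.isTreeMap ⟨r, hr.ge rfl, fun r' hr' => hr.le hr'⟩
    rw [pow_zero, Nat.card_eq_one_iff_exists]
    exact ⟨⟨f, Extends.refl f, htree⟩, fun h => Subtype.ext (htree.eq_of_extends h.2.2 h.2.1)⟩
  | succ k ih =>
    have hlost (h : {h // Extends f h ∧ IsTreeMap h}) :
        {u ∈ Function.fixedPoints f | ¬ Function.IsFixedPt h.1 u}.ncard = k + 1 :=
      Nat.succ_injective <|
        (ncard_sep_not_add_one_of_existsUnique (Set.toFinite _)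
          (h.2.1.existsUnique_isFixedPt h.2.2)).trans hk
    have hother (w : V) : {u ∈ Function.fixedPoints f | ¬ Reaches f w u}.ncard = k + 1 :=
      Nat.succ_injective <|
        (ncard_sep_not_add_one_of_existsUnique (Set.toFinite _)
          (hf.existsUnique_root w)).trans hk
    have hgraft (w : V) (u : {u ∈ Function.fixedPoints f | ¬ Reaches f w u}) :
        Nat.card {h // Extends (Function.update f u.1 w) h ∧ IsTreeMap h} = Nat.card V ^ k := by
      obtain ⟨u, hu, hwu⟩ := u
      have hne : w ≠ u := ne_of_not_reaches hwu
      refine ih (hf.update hu hwu) ?_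
      rw [fixedPoints_update hne, Set.ncard_sdiff_singleton_of_mem hu, hk, Nat.add_sub_cancel]
    have hcount := Nat.card_congr (treeExtensionGraftEquiv f)
    simp only [Nat.card_sigma, Nat.card_coe_set_eq, hlost, hother, hgraft, Finset.sum_const,
      Finset.card_univ, ← Nat.card_eq_fintype_card, smul_eq_mul] at hcount
    refine Nat.eq_of_mul_eq_mul_right (Nat.add_one_pos k) (hcount.trans ?_)
    ring

theorem IsForestMap.card_extends_eq_card_mul [Nonempty V] (hf : IsForestMap f) :
    Nat.card {h // Extends f h} = Nat.card V * Nat.card {h // Extends f h ∧ IsTreeMap h} := by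
  obtain ⟨r, hr, -⟩ := hf (Classical.arbitrary V)
  obtain ⟨k, hk⟩ := Nat.exists_eq_add_one_of_ne_zero
    (Set.ncard_ne_zero_of_mem (Function.mem_fixedPoints.mpr hr))
  rw [card_extends, hf.card_tree_extends hk, hk, Nat.pow_succ']

theorem card_eq_card_mul_card_isTreeMap [Nonempty V] {p : (V → V) → Prop}
    {core : (V → V) → (V → V)} (hforest : ∀ f, p f → IsForestMap (core f))
    (hextends : ∀ f, p f → ∀ h, p h ∧ core h = core f ↔ Extends (core f) h) :
    Nat.card {f // p f} = Nat.card V * Nat.card {f // p f ∧ IsTreeMap f} := by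
  classical
  have := Fintype.ofFinite V
  rw [card_subtype_eq_sum_card_fiber p core,
    card_subtype_eq_sum_card_fiber (fun f => p f ∧ IsTreeMap f) core, Finset.mul_sum]
  refine Finset.sum_congr rfl fun g _ => ?_
  simp only [and_right_comm (b := IsTreeMap _)]
  by_cases hg : ∃ f, p f ∧ core f = g
  · obtain ⟨f, hf, rfl⟩ := hg
    simp only [hextends f hf]
    exact (hforest f hf).card_extends_eq_card_mul
  · simp only [not_exists.mp hg, false_and, Nat.card_of_isEmpty, mul_zero]

end Counting

section Escapes

variable {V : Type*} {f : V → V} {W : Finset V}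

/-- Every orbit of `f` meets the complement of `W`; as `W` is finite, this says that the edges of
`f` that leave vertices of `W` form no cycle. -/
def Escapes (f : V → V) (W : Finset V) : Prop := ∀ x, ∃ y, y ∉ W ∧ Reaches f x y

theorem Escapes.not_isFixedPt (hW : Escapes f W) {x : V} (hx : x ∈ W) :
    ¬ Function.IsFixedPt f x := by
  intro hfix
  obtain ⟨y, hy, k, rfl⟩ := hW x
  exact hy ((hfix.iterate k).symm ▸ hx)

variable [DecidableEq V]

theorem Escapes.isFixedPt_piecewise_iff (hW : Escapes f W) {x : V} :
    Function.IsFixedPt (W.piecewise f id) x ↔ x ∉ W := by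
  by_cases hx : x ∈ W
  · simpa [Function.IsFixedPt, hx] using hW.not_isFixedPt hx
  · simp [Function.IsFixedPt, hx]

theorem Escapes.extends_piecewise_iff (hW : Escapes f W) {h : V → V} :
    Extends (W.piecewise f id) h ↔ ∀ x ∈ W, h x = f x := by
  simp only [Extends, hW.isFixedPt_piecewise_iff, not_not]
  exact forall₂_congr fun x hx => by rw [W.piecewise_eq_of_mem f id hx]

theorem Escapes.isForestMap_piecewise (hW : Escapes f W) : IsForestMap (W.piecewise f id) := by
  intro x
  obtain ⟨y, hy, k, hk⟩ := hW x
  induction k generalizing x with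
  | zero => exact ⟨y, hW.isFixedPt_piecewise_iff.mpr hy, 0, hk⟩
  | succ k ih =>
    by_cases hx : x ∈ W
    · obtain ⟨r, hr, hxr⟩ := ih (f x) hk
      exact ⟨r, hr, Reaches.head (by rwa [W.piecewise_eq_of_mem f id hx])⟩
    · exact ⟨x, hW.isFixedPt_piecewise_iff.mpr hx, Reaches.refl _ x⟩

theorem Escapes.union_image_iterate (hW : Escapes f W) {v : V} {i : ℕ} (hi : f^[i] v ∉ W)
    (hpath : ∀ j < i, f^[j] v ≠ f^[i] v) :
    Escapes f (W ∪ (Finset.range i).image fun j => f^[j] v) := by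
  intro x
  simp only [Finset.mem_union, Finset.mem_image, Finset.mem_range, not_or, not_exists, not_and]
  obtain ⟨y, hy, hxy⟩ := hW x
  by_cases hy_path : ∃ j < i, f^[j] v = y
  · obtain ⟨j, hj, rfl⟩ := hy_path
    have hreach : Reaches f (f^[j] v) (f^[i] v) :=
      ⟨i - j, by rw [← Function.iterate_add_apply, Nat.sub_add_cancel hj.le]⟩
    exact ⟨f^[i] v, ⟨hi, hpath⟩, hxy.trans hreach⟩
  · exact ⟨y, ⟨hy, fun j hj hjy => hy_path ⟨j, hj, hjy⟩⟩, hxy⟩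

end Escapes

section Parking

variable {n : ℕ} {f h : Fin n → Fin n}

/-- The number of steps that a driver starting at `v` makes before parking, or `none` if the
driver is unsuccessful. -/
def parkingSteps (f : Fin n → Fin n) (occ : List (Fin n)) (v : Fin n) : Option ℕ :=
  (List.range n).find? fun i => decide (f^[i] v ∉ occ)

/-- The vertices that some driver leaves while looking for a place, that is, the tails of the
edges used by the parking procedure. An unsuccessful driver ends the procedure. -/
def crossed (f : Fin n → Fin n) : List (Fin n) → List (Fin n) → Finset (Fin n)
  | _, [] => ∅
  | occ, v :: rest =>
    match parkingSteps f occ v with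
    | none => ∅
    | some i => (Finset.range i).image (fun j => f^[j] v) ∪ crossed f (f^[i] v :: occ) rest

theorem parkingSteps_eq_some_iff {occ : List (Fin n)} {v : Fin n} {i : ℕ} :
    parkingSteps f occ v = some i ↔ i < n ∧ f^[i] v ∉ occ ∧ ∀ j < i, f^[j] v ∈ occ := by
  simp [parkingSteps, List.find?_range_eq_some, and_left_comm]

theorem parkAux_cons_of_parkingSteps {occ rest : List (Fin n)} {v : Fin n} {i : ℕ}
    (hi : parkingSteps f occ v = some i) :
    parkAux n f occ (v :: rest) = parkAux n f (f^[i] v :: occ) rest := by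
  rw [parkingSteps] at hi
  rw [parkAux, hi]

theorem crossed_cons_of_parkingSteps {occ rest : List (Fin n)} {v : Fin n} {i : ℕ}
    (hi : parkingSteps f occ v = some i) :
    crossed f occ (v :: rest) =
      (Finset.range i).image (fun j => f^[j] v) ∪ crossed f (f^[i] v :: occ) rest := by
  rw [crossed, hi]

theorem exists_parkingSteps_of_isSome {occ rest : List (Fin n)} {v : Fin n}
    (hpark : (parkAux n f occ (v :: rest)).isSome) : ∃ i, parkingSteps f occ v = some i := by
  by_contra! hnone
  have hfind := Option.eq_none_iff_forall_ne_some.mpr hnone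
  rw [parkingSteps] at hfind
  rw [parkAux, hfind] at hpark
  exact Bool.false_ne_true hpark

theorem parkAux_eq_and_crossed_eq {occ l : List (Fin n)} (hpark : (parkAux n f occ l).isSome)
    (heq : ∀ x ∈ crossed f occ l, h x = f x) :
    parkAux n h occ l = parkAux n f occ l ∧ crossed h occ l = crossed f occ l := by
  induction l generalizing occ with
  | nil => exact ⟨rfl, rfl⟩
  | cons v rest ih =>
    obtain ⟨i, hi⟩ := exists_parkingSteps_of_isSome hpark
    simp only [crossed_cons_of_parkingSteps hi, Finset.forall_mem_union, Finset.forall_mem_image,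
      Finset.mem_range] at heq
    have hiter : ∀ j ≤ i, h^[j] v = f^[j] v := iterate_eq_iterate_of_forall_lt heq.1
    have hi' : parkingSteps h occ v = some i := by
      obtain ⟨hin, hfree, hocc⟩ := parkingSteps_eq_some_iff.mp hi
      exact parkingSteps_eq_some_iff.mpr ⟨hin, hiter i le_rfl ▸ hfree,
        fun j hj => hiter j hj.le ▸ hocc j hj⟩
    have himage : (Finset.range i).image (fun j => h^[j] v) =
        (Finset.range i).image (fun j => f^[j] v) :=
      Finset.image_congr fun j hj => hiter j (Finset.mem_range.mp hj).le
    rw [parkAux_cons_of_parkingSteps hi] at hpark ⊢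
    obtain ⟨hparkAux, hcrossed⟩ := ih hpark heq.2
    rw [parkAux_cons_of_parkingSteps hi', crossed_cons_of_parkingSteps hi,
      crossed_cons_of_parkingSteps hi', hiter i le_rfl, himage, hcrossed]
    exact ⟨hparkAux, rfl⟩

-- A driver stops at a vertex that nobody has crossed yet, so its route closes no cycle.
theorem Escapes.union_crossed {occ : List (Fin n)} {W : Finset (Fin n)} (hW : Escapes f W)
    (hWocc : ∀ x ∈ W, x ∈ occ) (l : List (Fin n)) : Escapes f (W ∪ crossed f occ l) := by
  induction l generalizing occ W with
  | nil => simpa only [crossed, Finset.union_empty] using hW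
  | cons v rest ih =>
    cases hi : parkingSteps f occ v with
    | none => simpa only [crossed, hi, Finset.union_empty] using hW
    | some i =>
      obtain ⟨-, hfree, hocc⟩ := parkingSteps_eq_some_iff.mp hi
      rw [crossed_cons_of_parkingSteps hi, ← Finset.union_assoc]
      refine ih (hW.union_image_iterate (fun hmem => hfree (hWocc _ hmem))
        fun j hj e => hfree (e ▸ hocc j hj)) ?_
      simp only [Finset.forall_mem_union, Finset.forall_mem_image, Finset.mem_range]
      exact ⟨fun x hx => List.mem_cons_of_mem _ (hWocc x hx),
        fun j hj => List.mem_cons_of_mem _ (hocc j hj)⟩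

theorem escapes_crossed (f : Fin n → Fin n) (l : List (Fin n)) : Escapes f (crossed f [] l) := by
  have hempty : Escapes f ∅ := fun x => ⟨x, Finset.notMem_empty x, Reaches.refl f x⟩
  simpa only [Finset.empty_union] using
    hempty.union_crossed (occ := []) (fun x hx => absurd hx (Finset.notMem_empty x)) l

/-- The forest formed by the edges of `f` used when the drivers with preferences `s` park. -/
def routeForest {m : ℕ} (s : Fin m → Fin n) (f : Fin n → Fin n) : Fin n → Fin n :=
  (crossed f [] (List.ofFn s)).piecewise f id

theorem parkingSucceeds_and_routeForest_eq_iff_extends {m : ℕ} {s : Fin m → Fin n}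
    (hf : ParkingSucceeds f s) :
    ParkingSucceeds h s ∧ routeForest s h = routeForest s f ↔ Extends (routeForest s f) h := by
  constructor
  · rintro ⟨-, heq⟩
    exact heq ▸ (escapes_crossed h _).extends_piecewise_iff.mpr fun _ _ => rfl
  · intro hext
    have hagree := (escapes_crossed f _).extends_piecewise_iff.mp hext
    obtain ⟨hparkAux, hcrossed⟩ := parkAux_eq_and_crossed_eq hf hagree
    refine ⟨by rwa [ParkingSucceeds, hparkAux], ?_⟩
    rw [routeForest, routeForest, hcrossed]
    exact Finset.piecewise_congr _ hagree fun _ _ => rfl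

end Parking

/-- A rooted labelled tree amounts to its parent map, since the root is the only fixed point. -/
noncomputable def labelledRootedTreeEquiv (n : ℕ) :
    LabelledRootedTree n ≃ {f : Fin n → Fin n // IsTreeMap f} where
  toFun T := ⟨T.parent, T.root, T.parent_root, T.reaches_root⟩
  invFun f := ⟨f.2.choose, f.1, f.2.choose_spec.1, f.2.choose_spec.2⟩
  left_inv := by
    rintro ⟨root, parent, hroot, hreach⟩
    have htree : IsTreeMap parent := ⟨root, hroot, hreach⟩
    have hchoose : htree.choose = root :=
      htree.existsUnique_isFixedPt.unique htree.choose_spec.1 hroot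
    exact (LabelledRootedTree.mk.injEq ..).mpr ⟨hchoose, rfl⟩
  right_inv _ := rfl

instance (n : ℕ) : Finite (LabelledRootedTree n) := .of_equiv _ (labelledRootedTreeEquiv n).symm

theorem card_isTreeParking {n m : ℕ} (s : Fin m → Fin n) :
    Nat.card {T : LabelledRootedTree n // IsTreeParking T s} =
      Nat.card {f // ParkingSucceeds f s ∧ IsTreeMap f} := by
  simp only [and_comm (a := ParkingSucceeds _ s)]
  exact Nat.card_congr <|
    ((labelledRootedTreeEquiv n).subtypeEquiv fun _ => Iff.rfl).trans
      (Equiv.subtypeSubtypeEquivSubtypeInter IsTreeMap fun f => ParkingSucceeds f s)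

theorem card_parkingSucceeds_eq_mul_card_isTreeParking {n m : ℕ} [NeZero n] (s : Fin m → Fin n) :
    Nat.card {f : Fin n → Fin n // ParkingSucceeds f s} =
      n * Nat.card {T : LabelledRootedTree n // IsTreeParking T s} := by
  rw [card_isTreeParking, card_eq_card_mul_card_isTreeMap (core := routeForest s)
    (fun f _ => (escapes_crossed f _).isForestMap_piecewise)
    (fun f hf h => parkingSucceeds_and_routeForest_eq_iff_extends hf), Nat.card_fin]

/-- (Lackner–Panholzer, Theorem 4.4) For all `n ≥ 1` and `0 ≤ m ≤ n`,
`M_{n,m} = n · F_{n,m}`. -/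
theorem lackner_panholzer_theorem_4_4 (n m : ℕ) (hn : 1 ≤ n) (hm : m ≤ n) :
    MCount n m = n * FCount n m := by
  have : NeZero n := ⟨Nat.one_le_iff_ne_zero.mp hn⟩
  calc MCount n m
      = ∑ s : Fin m → Fin n, Nat.card {f : Fin n → Fin n // ParkingSucceeds f s} :=
        card_prod_subtype_eq_sum ParkingSucceeds
    _ = ∑ s : Fin m → Fin n, n * Nat.card {T : LabelledRootedTree n // IsTreeParking T s} :=
        Finset.sum_congr rfl fun s _ => card_parkingSucceeds_eq_mul_card_isTreeParking s
    _ = n * ∑ s : Fin m → Fin n, Nat.card {T : LabelledRootedTree n // IsTreeParking T s} :=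
        (Finset.mul_sum ..).symm
    _ = n * FCount n m := by rw [FCount, card_prod_subtype_eq_sum IsTreeParking]
end

section
/- (Lackner–Panholzer, Theorem 4.5) For all n ≥ 1 and 0 ≤ m ≤ n, the total number M_{n,m} of (n,m)-mapping parking functions equals M_{n,m} = ((n−1)!·m!·n^(n−m)/(n−m)!) · Σ_{j=0}^{m} binomial(2m−n−j, m−j) · (n−j)·(2n)^j / j!, where binomial(a,b) for integer a (possibly negative) and nonnegative integer b denotes the generalized binomial coefficient a(a−1)⋯(a−b+1)/b!, and the identity is an identity of rational numbers. -/
/-- The generalized binomial coefficient `binomial(a,b) = a(a-1)⋯(a-b+1)/b!` for an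
arbitrary integer `a` and a natural number `b`, as a rational number. -/
def genChoose (a : ℤ) (b : ℕ) : ℚ :=
  (∏ i ∈ Finset.range b, ((a : ℚ) - (i : ℚ))) / (Nat.factorial b : ℚ)

/-!
Whether all drivers park, and on which set `O` of vertices, does not depend on their order of
arrival: it is a Hall-type condition on the preferences. Replacing the vertices outside `O` by
exits, a configuration consists of `m` vertices, `k = n - m` exits and `m` drivers that fill all
vertices. With weights `1 / (m!)²`, cutting off the vertices that flow to one exit shows that the
generating function of such configurations is `S_k = H^k M`, where `M = S_0` and `H` counts
configurations in which all vertices flow to a single exit. Removing the last driver yields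
`m [z^m] S_k = (m + k) [z^m] (W S_k)` with `W = z (z H)'`. The cases `k = 0, 1` give
`M = 1 / (1 - W)` and `z H = W (1 - W)`, hence `W = z (W - W²)'`. This differential equation
determines the coefficients of all powers of `W` by a recursion in the exponent, and
`z^k S_k = W^k (1 - W)^(k - 1)` expands into the stated sum.
-/

namespace MappingParking

open Finset Function
open scoped Nat PowerSeries

section ParksAt

variable {A : Type*} {f : A → A} {O B : Finset A} {x v w : A}

/-- A driver with preference `x` parks at `v` when exactly the vertices of `O` are occupied. -/
inductive ParksAt (f : A → A) (O : Finset A) : A → A → Prop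
  | here {v : A} (hv : v ∉ O) : ParksAt f O v v
  | drive {x v : A} (hx : x ∈ O) (h : ParksAt f O (f x) v) : ParksAt f O x v

namespace ParksAt

lemma notMem (h : ParksAt f O x v) : v ∉ O := by
  induction h with
  | here hv => exact hv
  | drive _ _ ih => exact ih

lemma unique (hv : ParksAt f O x v) (hw : ParksAt f O x w) : v = w := by
  induction hv with
  | here hv =>
    cases hw with
    | here => rfl
    | drive hx => exact absurd hx hv
  | drive hx _ ih =>
    cases hw with
    | here hx' => exact absurd hx hx'
    | drive _ h => exact ih h

lemma mem_insert [DecidableEq A] (h : ParksAt f O x v) : x ∈ insert v O := by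
  cases h with
  | here => exact mem_insert_self _ _
  | drive hx => exact mem_insert_of_mem hx

lemma mem_of_predClosed (h : ParksAt f O x v) (hB : ∀ u ∈ O, f u ∈ B → u ∈ B) (hv : v ∈ B) :
    x ∈ B := by
  induction h with
  | here => exact hv
  | drive hx _ ih => exact hB _ hx (ih hv)

lemma iff_exists_iterate :
    ParksAt f O x v ↔ ∃ i, f^[i] x = v ∧ v ∉ O ∧ ∀ j < i, f^[j] x ∈ O := by
  constructor
  · intro h
    induction h with
    | here hv => exact ⟨0, rfl, hv, by simp⟩
    | drive hx _ ih =>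
      obtain ⟨i, hi, hv, hlt⟩ := ih
      refine ⟨i + 1, hi, hv, fun j hj => ?_⟩
      cases j with
      | zero => exact hx
      | succ j => exact hlt j (by omega)
  · rintro ⟨i, hi, hv, hlt⟩
    induction i generalizing x with
    | zero =>
      obtain rfl : x = v := hi
      exact .here hv
    | succ i ih => exact .drive (hlt 0 i.succ_pos) (ih hi fun j hj => hlt (j + 1) (by omega))

end ParksAt

end ParksAt

section Outcome

variable {A C : Type*}

open scoped Classical in
/-- The number of drivers whose preferred vertex lies in `B`. -/
noncomputable def arrivals [Fintype C] (s : C → A) (B : Finset A) : ℕ :=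
  #{c | s c ∈ B}

/-- `O` is the set of vertices occupied after all drivers with preferences `s` have parked
successfully. The condition is of Hall type and does not refer to the order of arrival: no car
parked in a set `B` closed under predecessors can have come from outside `B`. -/
structure ParksOnto [Fintype C] (f : A → A) (O : Finset A) (s : C → A) : Prop where
  card_eq : Fintype.card C = #O
  mem : ∀ c, s c ∈ O
  card_le_arrivals : ∀ B ⊆ O, (∀ u ∈ O, f u ∈ B → u ∈ B) → #B ≤ arrivals s B

/-- All drivers with preferences `s` park inside `O`, possibly without filling it. This is the
weakening of `ParksOnto` that is inherited by initial segments of the queue of drivers. -/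
structure ParksInto [Fintype C] (f : A → A) (O : Finset A) (s : C → A) : Prop where
  mem : ∀ c, s c ∈ O
  arrivals_le_card : ∀ W ⊆ O, (∀ u ∈ W, f u ∈ O → f u ∈ W) → arrivals s W ≤ #W

variable {f : A → A} {O P : Finset A} {x v : A}

lemma ParksOnto.parksInto [Fintype C] {s : C → A} (h : ParksOnto f O s) : ParksInto f O s := by
  classical
  refine ⟨h.mem, fun W hWO hW => ?_⟩
  have hcompl : #(O \ W) ≤ arrivals s (O \ W) :=
    h.card_le_arrivals _ sdiff_subset fun u hu hfu => by
      rw [mem_sdiff] at hfu ⊢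
      exact ⟨hu, fun huW => hfu.2 (hW u huW hfu.1)⟩
  have hsplit : arrivals s W + arrivals s (O \ W) = #O := by
    rw [← h.card_eq, ← card_univ, ← card_filter_add_card_filter_not (s := univ) (s · ∈ W)]
    simp [arrivals, h.mem]
  have := card_sdiff_add_card_eq_card hWO
  omega

section Snoc

variable {m : ℕ} {s : Fin m → A}

open scoped Classical in
lemma arrivals_snoc (s : Fin m → A) (x : A) (B : Finset A) :
    arrivals (Fin.snoc s x : Fin (m + 1) → A) B = arrivals s B + if x ∈ B then 1 else 0 := by
  simp [arrivals, card_filter, Fin.sum_univ_castSucc, -sum_boole]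

lemma parksOnto_fin_zero_iff {s : Fin 0 → A} : ParksOnto f O s ↔ O = ∅ := by
  constructor
  · intro h
    simpa [eq_comm] using h.card_eq
  · rintro rfl
    exact ⟨rfl, fun c => c.elim0, fun B hB _ => by simp [subset_empty.1 hB]⟩

lemma ParksInto.of_snoc (h : ParksInto f O (Fin.snoc s x : Fin (m + 1) → A)) : ParksInto f O s := by
  refine ⟨fun c => by simpa using h.mem c.castSucc, fun W hWO hW => ?_⟩
  exact le_self_add.trans (arrivals_snoc s x W ▸ h.arrivals_le_card W hWO hW)

lemma ParksOnto.snoc [DecidableEq A] (h : ParksOnto f P s) (hx : ParksAt f P x v) :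
    ParksOnto f (insert v P) (Fin.snoc s x : Fin (m + 1) → A) := by
  have hv := hx.notMem
  refine ⟨?_, ?_, fun B hB hclosed => ?_⟩
  · rw [card_insert_of_notMem hv, ← h.card_eq, Fintype.card_fin, Fintype.card_fin]
  · refine Fin.lastCases (by simpa using hx.mem_insert) fun c => ?_
    simpa using mem_insert_of_mem (h.mem c)
  · have herase : #(B.erase v) ≤ arrivals s (B.erase v) :=
      h.card_le_arrivals _ (subset_insert_iff.1 hB) fun u hu hfu =>
        mem_erase.2 ⟨fun huv => hv (huv ▸ hu),
          hclosed u (mem_insert_of_mem hu) (mem_of_mem_erase hfu)⟩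
    have harrivals : arrivals s (B.erase v) = arrivals s B := by
      have hne : ∀ c, s c ≠ v := fun c hc => hv (hc ▸ h.mem c)
      exact congrArg card (by ext c; simp [hne])
    by_cases hvB : v ∈ B
    · have hxB := hx.mem_of_predClosed (fun u hu => hclosed u (mem_insert_of_mem hu)) hvB
      rw [arrivals_snoc, if_pos hxB, ← card_erase_add_one hvB, ← harrivals]
      exact Nat.succ_le_succ herase
    · rw [erase_eq_of_notMem hvB] at herase
      exact herase.trans (arrivals_snoc s x B ▸ le_self_add)

-- If the last driver found no place, the occupied vertices from which `O` cannot be left would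
-- attract more drivers than they can hold.
lemma ParksOnto.exists_parksAt (h : ParksOnto f P s) (hPO : P ⊆ O)
    (hO : ParksInto f O (Fin.snoc s x : Fin (m + 1) → A)) : ∃ v ∈ O, ParksAt f P x v := by
  classical
  have hxO : x ∈ O := by simpa using hO.mem (Fin.last m)
  by_cases hxP : x ∈ P
  swap
  · exact ⟨x, hxO, .here hxP⟩
  by_contra hx
  let W := {u ∈ P | ¬ ∃ v ∈ O, ParksAt f P u v}
  have hWP : W ⊆ P := filter_subset _ _
  have hupper : arrivals (Fin.snoc s x : Fin (m + 1) → A) W ≤ #W := by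
    refine hO.arrivals_le_card W (hWP.trans hPO) fun u hu hfu => ?_
    obtain ⟨huP, hu⟩ := mem_filter.1 hu
    have hfuP : f u ∈ P := by
      by_contra hfuP
      exact hu ⟨f u, hfu, .drive huP (.here hfuP)⟩
    exact mem_filter.2 ⟨hfuP, fun ⟨v, hv, hr⟩ => hu ⟨v, hv, .drive huP hr⟩⟩
  have hlower : #W ≤ arrivals s W := by
    refine h.card_le_arrivals W hWP fun u hu hfu => mem_filter.2 ⟨hu, fun ⟨v, hv, hr⟩ => ?_⟩
    cases hr with
    | here hu' => exact hu' hu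
    | drive _ hr => exact (mem_filter.1 hfu).2 ⟨v, hv, hr⟩
  rw [arrivals_snoc, if_pos (mem_filter.2 ⟨hxP, hx⟩)] at hupper
  omega

lemma ParksInto.exists_parksOnto (h : ParksInto f O s) : ∃ P ⊆ O, ParksOnto f P s := by
  classical
  induction m with
  | zero => exact ⟨∅, empty_subset O, parksOnto_fin_zero_iff.2 rfl⟩
  | succ m ih =>
    cases s using Fin.snocCases with | snoc s x
    obtain ⟨P, hPO, hP⟩ := ih h.of_snoc
    obtain ⟨v, hvO, hv⟩ := hP.exists_parksAt hPO h
    exact ⟨insert v P, insert_subset hvO hPO, hP.snoc hv⟩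

lemma parksOnto_snoc_iff [DecidableEq A] :
    ParksOnto f O (Fin.snoc s x : Fin (m + 1) → A) ↔
      ∃ v ∈ O, ParksOnto f (O.erase v) s ∧ ParksAt f (O.erase v) x v := by
  constructor
  · intro h
    obtain ⟨P, hPO, hP⟩ := h.parksInto.of_snoc.exists_parksOnto
    obtain ⟨v, hvO, hv⟩ := hP.exists_parksAt hPO h.parksInto
    obtain rfl : insert v P = O :=
      eq_of_subset_of_card_le (insert_subset hvO hPO) (h.card_eq ▸ (hP.snoc hv).card_eq ▸ le_rfl)
    exact ⟨v, hvO, by rwa [erase_insert hv.notMem], by rwa [erase_insert hv.notMem]⟩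
  · rintro ⟨v, hvO, hP, hv⟩
    simpa [insert_erase hvO] using hP.snoc hv

lemma ParksOnto.unique (hO : ParksOnto f O s) (hP : ParksOnto f P s) : O = P := by
  classical
  induction m generalizing O P with
  | zero => rw [parksOnto_fin_zero_iff.1 hO, parksOnto_fin_zero_iff.1 hP]
  | succ m ih =>
    cases s using Fin.snocCases with | snoc s x
    obtain ⟨v, hvO, hOv, hv⟩ := parksOnto_snoc_iff.1 hO
    obtain ⟨w, hwP, hPw, hw⟩ := parksOnto_snoc_iff.1 hP
    have herase : O.erase v = P.erase w := ih hOv hPw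
    obtain rfl : v = w := hv.unique (herase ▸ hw)
    rw [← insert_erase hvO, herase, insert_erase hwP]

end Snoc

end Outcome

section Procedure

variable {n m : ℕ} {f : Fin n → Fin n} {occ : List (Fin n)} {x v : Fin n}

lemma iterate_injOn_of_notMem {A : Type*} {f : A → A} {O : Set A} {x : A} {i : ℕ}
    (hi : f^[i] x ∉ O) (hlt : ∀ j < i, f^[j] x ∈ O) : Set.InjOn (f^[·] x) (Set.Iic i) := by
  have hne : ∀ a b, a < b → b ≤ i → f^[a] x ≠ f^[b] x := fun a b hab hbi heq => by
    have hback : f^[i - b + a] x = f^[i] x := by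
      rw [iterate_add_apply, heq, ← iterate_add_apply, Nat.sub_add_cancel hbi]
    exact hi (hback ▸ hlt _ (by omega))
  intro a ha b hb heq
  rcases lt_trichotomy a b with hab | hab | hab
  · exact absurd heq (hne a b hab hb)
  · exact hab
  · exact absurd heq.symm (hne b a hab ha)

lemma exists_find?_eq_some_iff_parksAt :
    (∃ i, (List.range n).find? (fun i => decide (f^[i] x ∉ occ)) = some i ∧ f^[i] x = v) ↔
      ParksAt f occ.toFinset x v := by
  simp only [List.find?_range_eq_some, List.mem_range, decide_eq_true_eq, Bool.not_eq_true',
    decide_eq_false_iff_not, not_not, ParksAt.iff_exists_iterate, List.mem_toFinset]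
  constructor
  · rintro ⟨i, ⟨hi, -, hlt⟩, rfl⟩
    exact ⟨i, rfl, hi, hlt⟩
  · rintro ⟨i, rfl, hi, hlt⟩
    have hcard : #(Iic i) ≤ #(univ : Finset (Fin n)) :=
      card_le_card_of_injOn (f^[·] x) (by simp)
        (by simpa using iterate_injOn_of_notMem (O := {a | a ∈ occ}) hi hlt)
    exact ⟨i, ⟨hi, by simpa using hcard, hlt⟩, rfl⟩

lemma parkAux_concat (f : Fin n → Fin n) (occ L : List (Fin n)) (x : Fin n) :
    parkAux n f occ (L ++ [x]) = (parkAux n f occ L).bind fun occ' =>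
      ((List.range n).find? fun i => decide (f^[i] x ∉ occ')).map (f^[·] x :: occ') := by
  induction L generalizing occ with
  | nil =>
    simp only [List.nil_append, parkAux, Option.bind_some]
    cases (List.range n).find? fun i => decide (f^[i] x ∉ occ) <;> rfl
  | cons y L ih =>
    simp only [List.cons_append, parkAux]
    cases (List.range n).find? fun i => decide (f^[i] y ∉ occ) with
    | none => rfl
    | some i => exact ih _

lemma parkAux_ofFn_snoc_eq_some_iff {s : Fin m → Fin n} :
    parkAux n f [] (List.ofFn (Fin.snoc s x : Fin (m + 1) → Fin n)) = some occ ↔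
      ∃ occ' v, parkAux n f [] (List.ofFn s) = some occ' ∧ ParksAt f occ'.toFinset x v ∧
        occ = v :: occ' := by
  have hofFn : List.ofFn (Fin.snoc s x : Fin (m + 1) → Fin n) = List.ofFn s ++ [x] := by
    rw [List.ofFn_succ']
    simp
  simp only [hofFn, parkAux_concat, Option.bind_eq_some_iff, Option.map_eq_some_iff,
    ← exists_find?_eq_some_iff_parksAt]
  constructor
  · rintro ⟨occ', hocc', i, hi, rfl⟩
    exact ⟨occ', _, hocc', ⟨i, hi, rfl⟩, rfl⟩
  · rintro ⟨occ', _, hocc', ⟨i, hi, rfl⟩, rfl⟩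
    exact ⟨occ', hocc', i, hi, rfl⟩

lemma exists_parkAux_eq_some_iff_parksOnto {s : Fin m → Fin n} {O : Finset (Fin n)} :
    (∃ occ, parkAux n f [] (List.ofFn s) = some occ ∧ occ.toFinset = O) ↔ ParksOnto f O s := by
  induction m generalizing O with
  | zero => simp [parkAux, parksOnto_fin_zero_iff, eq_comm]
  | succ m ih =>
    cases s using Fin.snocCases with | snoc s x
    simp only [parksOnto_snoc_iff, parkAux_ofFn_snoc_eq_some_iff, ← ih]
    constructor
    · rintro ⟨_, ⟨occ, v, hocc, hv, rfl⟩, rfl⟩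
      rw [List.toFinset_cons]
      refine ⟨v, mem_insert_self _ _, ?_⟩
      rw [erase_insert hv.notMem]
      exact ⟨⟨occ, hocc, rfl⟩, hv⟩
    · rintro ⟨v, hvO, ⟨occ, hocc, hO⟩, hv⟩
      refine ⟨v :: occ, ⟨occ, v, hocc, hO ▸ hv, rfl⟩, ?_⟩
      rw [List.toFinset_cons, hO, insert_erase hvO]

lemma parkingSucceeds_iff_exists_parksOnto {s : Fin m → Fin n} :
    ParkingSucceeds f s ↔ ∃ O, ParksOnto f O s := by
  simp [ParkingSucceeds, Option.isSome_iff_exists, ← exists_parkAux_eq_some_iff_parksOnto]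

end Procedure

section OccupiedVertices

lemma card_subtype_exists_mem {ι α : Type*} [Finite α] (S : Finset ι) (p : ι → α → Prop)
    (hp : ∀ i j a, p i a → p j a → i = j) :
    Nat.card {a // ∃ i ∈ S, p i a} = ∑ i ∈ S, Nat.card {a // p i a} := by
  classical
  have := Fintype.ofFinite α
  simp only [Nat.card_eq_fintype_card, Fintype.card_subtype]
  rw [← card_biUnion fun i _ j _ hij => disjoint_left.2 fun a hi hj =>
    hij (hp i j a (mem_filter.1 hi).2 (mem_filter.1 hj).2)]
  congr 1
  ext a
  simp

variable {n m : ℕ}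

lemma mCount_eq_sum_parksOnto :
    MCount n m = ∑ O ∈ powersetCard m (univ : Finset (Fin n)),
      Nat.card {p : (Fin n → Fin n) × (Fin m → Fin n) // ParksOnto p.1 O p.2} := by
  rw [← card_subtype_exists_mem _
    (fun O (p : (Fin n → Fin n) × (Fin m → Fin n)) => ParksOnto p.1 O p.2)
    fun _ _ _ => ParksOnto.unique]
  refine Nat.card_congr (Equiv.subtypeEquivRight fun p => ?_)
  rw [parkingSucceeds_iff_exists_parksOnto]
  refine exists_congr fun O => (and_iff_right_of_imp fun h => ?_).symm
  exact mem_powersetCard.2 ⟨subset_univ O, by simpa using h.card_eq.symm⟩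

lemma card_parksOnto_succ {A : Type*} [Finite A] [DecidableEq A] (O : Finset A) :
    Nat.card {p : (A → A) × (Fin (m + 1) → A) // ParksOnto p.1 O p.2} =
      ∑ v ∈ O, Nat.card {p : ((A → A) × (Fin m → A)) × A //
        ParksOnto p.1.1 (O.erase v) p.1.2 ∧ ParksAt p.1.1 (O.erase v) p.2 v} := by
  have hunique : ∀ v w (p : ((A → A) × (Fin m → A)) × A),
      (ParksOnto p.1.1 (O.erase v) p.1.2 ∧ ParksAt p.1.1 (O.erase v) p.2 v) →
        (ParksOnto p.1.1 (O.erase w) p.1.2 ∧ ParksAt p.1.1 (O.erase w) p.2 w) → v = w :=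
    fun v w p hv hw => hv.2.unique (hv.1.unique hw.1 ▸ hw.2)
  rw [← card_subtype_exists_mem _ _ hunique]
  let snoc : ((A → A) × (Fin m → A)) × A ≃ (A → A) × (Fin (m + 1) → A) :=
    (Equiv.prodAssoc _ _ _).trans
      (Equiv.prodCongrRight fun _ => (Equiv.prodComm _ _).trans (Fin.snocEquiv fun _ => A))
  exact (Nat.card_congr (snoc.subtypeEquiv fun p => parksOnto_snoc_iff.symm)).symm

end OccupiedVertices

section Configuration

variable {V E C : Type*}

/-- `B` contains, with each vertex, all vertices from which a car drives to it. The map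
`f : V → V ⊕ E` is a road network with exits: a car at `u` next visits `w` if `f u = .inl w` and
leaves through the exit `x` if `f u = .inr x`. -/
def PredClosed (f : V → V ⊕ E) (B : Finset V) : Prop :=
  ∀ u, ∀ w ∈ B, f u = .inl w → u ∈ B

/-- The drivers with preferences `s` fill `V` completely and no car leaves through an exit of `f`,
expressed by the same order-free condition as `ParksOnto`. -/
structure Fills [Fintype V] [Fintype C] (f : V → V ⊕ E) (s : C → V) : Prop where
  card_eq : Fintype.card C = Fintype.card V
  card_le_arrivals : ∀ B, PredClosed f B → #B ≤ arrivals s B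

/-- A map on `V` with exits in `E`, together with preferences of drivers filling `V`. -/
@[ext]
structure Configuration (V E C : Type*) [Fintype V] [Fintype C] where
  map : V → V ⊕ E
  pref : C → V
  fills : Fills map pref

noncomputable instance [Fintype V] [Fintype C] [Finite E] : Fintype (Configuration V E C) :=
  have : Injective fun p : Configuration V E C => (p.map, p.pref) :=
    fun _ _ h => Configuration.ext (Prod.ext_iff.1 h).1 (Prod.ext_iff.1 h).2
  have := Finite.of_injective _ this
  Fintype.ofFinite _

/-- A car at `u` that never parks leaves through the exit `x`. -/
inductive DrainsTo (f : V → V ⊕ E) (x : E) : V → Prop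
  | exit {u : V} (hu : f u = .inr x) : DrainsTo f x u
  | step {u w : V} (hu : f u = .inl w) (hw : DrainsTo f x w) : DrainsTo f x u

open scoped Classical in
/-- The vertices draining to the exit `x`; together with `x` they form a tree rooted at `x`. -/
noncomputable def basin [Fintype V] (f : V → V ⊕ E) (x : E) : Finset V :=
  {u | DrainsTo f x u}

/-- A configuration with a single exit to which every vertex drains. Adding the exit as the root
makes the map a rooted tree. -/
abbrev TreeConfiguration (V C : Type*) [Fintype V] [Fintype C] :=
  {p : Configuration V Unit C // ∀ u, DrainsTo p.map () u}

lemma drainsTo_iff {f : V → V ⊕ E} {x : E} {u : V} :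
    DrainsTo f x u ↔ Sum.elim (DrainsTo f x) (· = x) (f u) := by
  constructor
  · rintro (hu | ⟨hu, hw⟩)
    · simp [hu]
    · simpa [hu] using hw
  · rcases hu : f u with w | y
    · exact .step hu
    · rintro rfl
      exact .exit hu

@[simp]
lemma mem_basin [Fintype V] {f : V → V ⊕ E} {x : E} {u : V} : u ∈ basin f x ↔ DrainsTo f x u := by
  simp [basin]

end Configuration

section LeftPart

variable {A V E : Type*}

/-- The embedding of the first summand along a decomposition `A ≃ V ⊕ E`. -/
def leftEmb (e : A ≃ V ⊕ E) : V ↪ A :=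
  Embedding.inl.trans e.symm.toEmbedding

@[simp]
lemma leftEmb_apply (e : A ≃ V ⊕ E) (u : V) : leftEmb e u = e.symm (.inl u) := rfl

variable [Fintype V]

/-- The subset of `A` corresponding to `V` along a decomposition `A ≃ V ⊕ E`. -/
def leftPart (e : A ≃ V ⊕ E) : Finset A :=
  univ.map (leftEmb e)

@[simp]
lemma symm_inl_mem_leftPart (e : A ≃ V ⊕ E) (u : V) : e.symm (.inl u) ∈ leftPart e := by
  simp [leftPart]

@[simp]
lemma symm_inr_notMem_leftPart (e : A ≃ V ⊕ E) (x : E) : e.symm (.inr x) ∉ leftPart e := by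
  simp [leftPart]

lemma exists_leftPart_eq [Fintype A] [Fintype E] (T : Finset A) (hV : #T = Fintype.card V)
    (hA : Fintype.card A = Fintype.card V + Fintype.card E) :
    ∃ e : A ≃ V ⊕ E, leftPart e = T := by
  classical
  have eT : T ≃ V := Fintype.equivOfCardEq (by simpa using hV)
  have eCompl : {a // a ∉ T} ≃ E := Fintype.equivOfCardEq (by
    rw [Fintype.card_subtype_compl, Fintype.card_coe]
    omega)
  refine ⟨(Equiv.sumCompl (· ∈ T)).symm.trans (eT.sumCongr eCompl), ?_⟩
  ext a
  by_cases ha : a ∈ T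
  · simpa [leftPart, ha] using ⟨eT ⟨a, ha⟩, by simp⟩
  · simp only [leftPart, mem_map, mem_univ, true_and, leftEmb_apply, ha, iff_false]
    rintro ⟨u, rfl⟩
    simp at ha

end LeftPart

section Extend

variable {A V E C : Type*}

/-- Extends a map with exits to a map of all of `A ≃ V ⊕ E` by choosing the image of each exit;
every map of `A` arises in this way exactly once. -/
def extendEquiv (e : A ≃ V ⊕ E) : (V → V ⊕ E) × (E → A) ≃ (A → A) :=
  (((Equiv.refl V).arrowCongr e.symm).prodCongr (.refl _)).trans <|
    (Equiv.sumArrowEquivProdArrow V E A).symm.trans (e.symm.arrowCongr (.refl A))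

@[simp]
lemma extendEquiv_symm_inl (e : A ≃ V ⊕ E) (f : V → V ⊕ E) (g : E → A) (u : V) :
    extendEquiv e (f, g) (e.symm (.inl u)) = e.symm (f u) := by
  simp [extendEquiv]

lemma arrivals_map [Fintype C] (i : V ↪ A) (s : C → V) (B : Finset V) :
    arrivals (i ∘ s) (B.map i) = arrivals s B :=
  congrArg card (by ext c; simp)

variable [Fintype V] {f : V → V ⊕ E} {g : E → A}

lemma parksOnto_extendEquiv_iff [Fintype C] (e : A ≃ V ⊕ E) {s : C → V} :
    ParksOnto (extendEquiv e (f, g)) (leftPart e) (leftEmb e ∘ s) ↔ Fills f s := by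
  have hcard : #(leftPart e) = Fintype.card V := by simp [leftPart]
  have hclosed : ∀ B : Finset V, PredClosed f B ↔
      ∀ u ∈ leftPart e, extendEquiv e (f, g) u ∈ B.map (leftEmb e) → u ∈ B.map (leftEmb e) :=
    fun B => by simp [leftPart, PredClosed, eq_comm (a := f _)]
  constructor
  · intro h
    refine ⟨h.card_eq.trans hcard, fun B hB => ?_⟩
    rw [← arrivals_map (leftEmb e), ← card_map (leftEmb e)]
    exact h.card_le_arrivals _ (map_subset_map.2 (subset_univ B)) ((hclosed B).1 hB)
  · refine fun h => ⟨h.card_eq.trans hcard.symm, fun c => by simp, fun B hB hBclosed => ?_⟩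
    obtain ⟨B, -, rfl⟩ := subset_map_iff.1 hB
    rw [arrivals_map, card_map]
    exact h.card_le_arrivals B ((hclosed B).2 hBclosed)

lemma parksAt_extendEquiv_iff (e : A ≃ V ⊕ E) {x : E} {y : A} :
    ParksAt (extendEquiv e (f, g)) (leftPart e) y (e.symm (.inr x)) ↔
      y = e.symm (.inr x) ∨ y ∈ (basin f x).map (leftEmb e) := by
  constructor
  · intro h
    generalize hv : e.symm (.inr x) = v at h
    induction h with
    | here => exact .inl rfl
    | @drive y v hy h ih =>
      obtain ⟨u, -, rfl⟩ := mem_map.1 hy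
      refine .inr (mem_map_of_mem _ (mem_basin.2 (drainsTo_iff.2 ?_)))
      subst hv
      simp only [leftEmb_apply, extendEquiv_symm_inl] at ih
      rcases hu : f u with w | z <;> simpa [hu] using ih
  · simp only [mem_map, mem_basin]
    rintro (rfl | ⟨u, hu, rfl⟩)
    · exact .here (symm_inr_notMem_leftPart e x)
    · induction hu with
      | exit hu =>
        exact .drive (by simp) (by simpa [hu] using .here (symm_inr_notMem_leftPart e x))
      | step hu _ ih =>
        exact .drive (by simp) (by simpa [hu] using ih)

lemma card_parksAt_extendEquiv (e : A ≃ V ⊕ E) (x : E) :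
    Nat.card {y // ParksAt (extendEquiv e (f, g)) (leftPart e) y (e.symm (.inr x))} =
      #(basin f x) + 1 := by
  classical
  have hmem : e.symm (.inr x) ∉ (basin f x).map (leftEmb e) := by simp
  rw [← card_map (leftEmb e), ← card_insert_of_notMem hmem, ← Nat.card_eq_finsetCard]
  exact Nat.card_congr (Equiv.subtypeEquivRight fun y => by simp [parksAt_extendEquiv_iff])

/-- Forgetting the images of the exits identifies the pairs parking onto the part `V` of `A` with
configurations. -/
noncomputable def extendConfigurationEquiv [Fintype C] (e : A ≃ V ⊕ E) :
    Configuration V E C × (E → A) ≃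
      {p : (A → A) × (C → A) // ParksOnto p.1 (leftPart e) p.2} :=
  Equiv.ofBijective
    (fun p => ⟨(extendEquiv e (p.1.map, p.2), leftEmb e ∘ p.1.pref),
      (parksOnto_extendEquiv_iff e).2 p.1.fills⟩) <| by
    constructor
    · rintro ⟨p, g⟩ ⟨q, g'⟩ h
      obtain ⟨hmap, hpref⟩ := Prod.ext_iff.1 (Subtype.ext_iff.1 h)
      obtain ⟨hf, rfl⟩ := Prod.ext_iff.1 ((extendEquiv e).injective hmap)
      exact Prod.ext (Configuration.ext hf ((leftEmb e).injective.comp_left hpref)) rfl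
    · rintro ⟨⟨F, S⟩, h⟩
      obtain ⟨⟨f, g⟩, rfl⟩ := (extendEquiv e).surjective F
      choose s hs using fun c => (mem_map.1 (h.mem c)).imp fun _ hu => hu.2
      obtain rfl : leftEmb e ∘ s = S := funext hs
      exact ⟨(⟨f, s, (parksOnto_extendEquiv_iff e).1 h⟩, g), rfl⟩

variable [Fintype C] [Finite E]

lemma card_parksOnto_leftPart (e : A ≃ V ⊕ E) :
    Nat.card {p : (A → A) × (C → A) // ParksOnto p.1 (leftPart e) p.2} =
      Nat.card (Configuration V E C) * Nat.card A ^ Nat.card E := by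
  rw [← Nat.card_congr (extendConfigurationEquiv e), Nat.card_prod, Nat.card_fun]

lemma card_parksOnto_leftPart_parksAt [Finite A] (e : A ≃ V ⊕ E) (x : E) :
    Nat.card {p : ((A → A) × (C → A)) × A // ParksOnto p.1.1 (leftPart e) p.1.2 ∧
        ParksAt p.1.1 (leftPart e) p.2 (e.symm (.inr x))} =
      (∑ p : Configuration V E C, (#(basin p.map x) + 1)) * Nat.card A ^ Nat.card E := by
  have := Fintype.ofFinite E
  have := Fintype.ofFinite A
  classical
  let toSigma : {p : ((A → A) × (C → A)) × A // ParksOnto p.1.1 (leftPart e) p.1.2 ∧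
        ParksAt p.1.1 (leftPart e) p.2 (e.symm (.inr x))} ≃
      Σ p : {p : (A → A) × (C → A) // ParksOnto p.1 (leftPart e) p.2},
        {y // ParksAt p.1.1 (leftPart e) y (e.symm (.inr x))} :=
    ⟨fun p => ⟨⟨p.1.1, p.2.1⟩, ⟨p.1.2, p.2.2⟩⟩, fun p => ⟨(p.1.1, p.2.1), p.1.2, p.2.2⟩,
      fun _ => rfl, fun _ => rfl⟩
  rw [Nat.card_congr (toSigma.trans (Equiv.sigmaCongrLeft (extendConfigurationEquiv e)).symm),
    Nat.card_sigma, Fintype.sum_prod_type, sum_mul]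
  refine sum_congr rfl fun p _ => ?_
  calc ∑ g : E → A, Nat.card {y //
        ParksAt (extendEquiv e (p.map, g)) (leftPart e) y (e.symm (.inr x))}
      = ∑ g : E → A, (#(basin p.map x) + 1) := sum_congr rfl fun g _ => card_parksAt_extendEquiv e x
    _ = (#(basin p.map x) + 1) * Nat.card A ^ Nat.card E := by simp [mul_comm]

end Extend

section Union

lemma sumMap_eq_inl_iff {α α' β β' : Type*} {g : α → α'} {h : β → β'} {z : α ⊕ β} {y : α'} :
    Sum.map g h z = .inl y ↔ ∃ x, z = .inl x ∧ g x = y := by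
  cases z <;> simp

lemma sumMap_eq_inr_iff {α α' β β' : Type*} {g : α → α'} {h : β → β'} {z : α ⊕ β} {y : β'} :
    Sum.map g h z = .inr y ↔ ∃ x, z = .inr x ∧ h x = y := by
  cases z <;> simp

lemma exists_sumMap_eq {X₁ X₂ Y₁ Y₂ : Type*} {g : X₁ ⊕ X₂ → Y₁ ⊕ Y₂}
    (hg : ∀ z, (g z).isLeft = z.isLeft) : ∃ g₁ g₂, Sum.map g₁ g₂ = g := by
  choose g₁ hg₁ using fun a => Sum.isLeft_iff.1 (hg (.inl a))
  choose g₂ hg₂ using fun b => Sum.isRight_iff.1 (by simpa using hg (.inr b))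
  exact ⟨g₁, g₂, funext (Sum.rec (fun a => (hg₁ a).symm) fun b => (hg₂ b).symm)⟩

variable {V V₁ V₂ E E₁ E₂ C C₁ C₂ : Type*}
variable (eV : V ≃ V₁ ⊕ V₂) (eE : E ≃ E₁ ⊕ E₂) (eC : C ≃ C₁ ⊕ C₂)

/-- The disjoint union of two maps with exits, along decompositions of the vertices and exits. -/
def unionMap (f₁ : V₁ → V₁ ⊕ E₁) (f₂ : V₂ → V₂ ⊕ E₂) : V → V ⊕ E :=
  (eV.sumCongr eE).symm ∘ Equiv.sumSumSumComm V₁ E₁ V₂ E₂ ∘ Sum.map f₁ f₂ ∘ eV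

/-- The preferences of the drivers in a disjoint union of two configurations. -/
def unionPref (s₁ : C₁ → V₁) (s₂ : C₂ → V₂) : C → V :=
  eV.symm ∘ Sum.map s₁ s₂ ∘ eC

/-- The disjoint union of two sets, along a decomposition `V ≃ V₁ ⊕ V₂`. -/
def unionSet (B₁ : Finset V₁) (B₂ : Finset V₂) : Finset V :=
  (B₁.disjSum B₂).map eV.symm.toEmbedding

variable {f₁ : V₁ → V₁ ⊕ E₁} {f₂ : V₂ → V₂ ⊕ E₂} {s₁ : C₁ → V₁} {s₂ : C₂ → V₂}
  {B₁ : Finset V₁} {B₂ : Finset V₂}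

@[simp]
lemma unionMap_symm_inl (a : V₁) :
    unionMap eV eE f₁ f₂ (eV.symm (.inl a)) =
      Sum.map (eV.symm ∘ .inl) (eE.symm ∘ .inl) (f₁ a) := by
  rcases h : f₁ a <;> simp [unionMap, h]

@[simp]
lemma unionMap_symm_inr (b : V₂) :
    unionMap eV eE f₁ f₂ (eV.symm (.inr b)) =
      Sum.map (eV.symm ∘ .inr) (eE.symm ∘ .inr) (f₂ b) := by
  rcases h : f₂ b <;> simp [unionMap, h]

@[simp]
lemma unionPref_symm_inl (c : C₁) :
    unionPref eV eC s₁ s₂ (eC.symm (.inl c)) = eV.symm (.inl (s₁ c)) := by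
  simp [unionPref]

@[simp]
lemma unionPref_symm_inr (c : C₂) :
    unionPref eV eC s₁ s₂ (eC.symm (.inr c)) = eV.symm (.inr (s₂ c)) := by
  simp [unionPref]

lemma unionMap_inj {f₁' : V₁ → V₁ ⊕ E₁} {f₂' : V₂ → V₂ ⊕ E₂} :
    unionMap eV eE f₁ f₂ = unionMap eV eE f₁' f₂' ↔ f₁ = f₁' ∧ f₂ = f₂' := by
  have hinl := Sum.map_injective.2
    ⟨eV.symm.injective.comp Sum.inl_injective, eE.symm.injective.comp Sum.inl_injective⟩
  have hinr := Sum.map_injective.2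
    ⟨eV.symm.injective.comp Sum.inr_injective, eE.symm.injective.comp Sum.inr_injective⟩
  simp [funext_iff, eV.symm.surjective.forall, hinl.eq_iff, hinr.eq_iff]

lemma unionPref_inj {s₁' : C₁ → V₁} {s₂' : C₂ → V₂} :
    unionPref eV eC s₁ s₂ = unionPref eV eC s₁' s₂' ↔ s₁ = s₁' ∧ s₂ = s₂' := by
  simp [funext_iff, eC.symm.surjective.forall]

@[simp]
lemma symm_inl_mem_unionSet {a : V₁} : eV.symm (.inl a) ∈ unionSet eV B₁ B₂ ↔ a ∈ B₁ := by
  simp [unionSet]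

@[simp]
lemma symm_inr_mem_unionSet {b : V₂} : eV.symm (.inr b) ∈ unionSet eV B₁ B₂ ↔ b ∈ B₂ := by
  simp [unionSet]

lemma card_unionSet : #(unionSet eV B₁ B₂) = #B₁ + #B₂ := by
  simp [unionSet]

lemma exists_unionSet_eq (B : Finset V) : ∃ B₁ B₂, unionSet eV B₁ B₂ = B :=
  ⟨(B.map eV.toEmbedding).toLeft, (B.map eV.toEmbedding).toRight, by
    simp [unionSet, toLeft_disjSum_toRight, map_map]⟩

lemma predClosed_unionSet_iff :
    PredClosed (unionMap eV eE f₁ f₂) (unionSet eV B₁ B₂) ↔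
      PredClosed f₁ B₁ ∧ PredClosed f₂ B₂ := by
  simp [PredClosed, eV.symm.surjective.forall, sumMap_eq_inl_iff]

@[simp]
lemma arrivals_empty [Fintype C] (s : C → V) : arrivals s ∅ = 0 := by
  simp [arrivals]

lemma arrivals_unionPref [Fintype C] [Fintype C₁] [Fintype C₂] :
    arrivals (unionPref eV eC s₁ s₂) (unionSet eV B₁ B₂) = arrivals s₁ B₁ + arrivals s₂ B₂ := by
  classical
  rw [arrivals, arrivals, arrivals, ← card_unionSet eC]
  congr 1
  ext c
  obtain ⟨c | c, rfl⟩ := eC.symm.surjective c <;> simp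

lemma fills_union_iff [Fintype V] [Fintype V₁] [Fintype V₂] [Fintype C] [Fintype C₁] [Fintype C₂] :
    Fills (unionMap eV eE f₁ f₂) (unionPref eV eC s₁ s₂) ↔ Fills f₁ s₁ ∧ Fills f₂ s₂ := by
  have hV : Fintype.card V = Fintype.card V₁ + Fintype.card V₂ := by
    simpa using Fintype.card_congr eV
  have hC : Fintype.card C = Fintype.card C₁ + Fintype.card C₂ := by
    simpa using Fintype.card_congr eC
  constructor
  · intro h
    have hle₁ : ∀ B₁, PredClosed f₁ B₁ → #B₁ ≤ arrivals s₁ B₁ := fun B₁ hB₁ => by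
      have := h.card_le_arrivals (unionSet eV B₁ ∅)
        ((predClosed_unionSet_iff eV eE).2 ⟨hB₁, by simp [PredClosed]⟩)
      simpa [card_unionSet, arrivals_unionPref] using this
    have hle₂ : ∀ B₂, PredClosed f₂ B₂ → #B₂ ≤ arrivals s₂ B₂ := fun B₂ hB₂ => by
      have := h.card_le_arrivals (unionSet eV ∅ B₂)
        ((predClosed_unionSet_iff eV eE).2 ⟨by simp [PredClosed], hB₂⟩)
      simpa [card_unionSet, arrivals_unionPref] using this
    have hcard₁ : Fintype.card V₁ ≤ Fintype.card C₁ := by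
      simpa [arrivals] using hle₁ univ (by simp [PredClosed])
    have hcard₂ : Fintype.card V₂ ≤ Fintype.card C₂ := by
      simpa [arrivals] using hle₂ univ (by simp [PredClosed])
    have := h.card_eq
    exact ⟨⟨by omega, hle₁⟩, ⟨by omega, hle₂⟩⟩
  · rintro ⟨h₁, h₂⟩
    refine ⟨by rw [hC, hV, h₁.card_eq, h₂.card_eq], fun B hB => ?_⟩
    obtain ⟨B₁, B₂, rfl⟩ := exists_unionSet_eq eV B
    obtain ⟨hB₁, hB₂⟩ := (predClosed_unionSet_iff eV eE).1 hB
    rw [card_unionSet, arrivals_unionPref]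
    exact add_le_add (h₁.card_le_arrivals B₁ hB₁) (h₂.card_le_arrivals B₂ hB₂)

lemma drainsTo_unionMap_iff {x : E₁} {z : V₁ ⊕ V₂} :
    DrainsTo (unionMap eV eE f₁ f₂) (eE.symm (.inl x)) (eV.symm z) ↔
      ∃ a, z = .inl a ∧ DrainsTo f₁ x a := by
  constructor
  · intro h
    generalize hu : eV.symm z = u at h
    induction h generalizing z with
    | exit hx =>
      subst hu
      rcases z with a | b
      · exact ⟨a, rfl, .exit (by simpa [sumMap_eq_inr_iff] using hx)⟩
      · simp [sumMap_eq_inr_iff] at hx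
    | step hw _ ih =>
      subst hu
      rcases z with a | b
      · rcases hfa : f₁ a with w | y
        · obtain ⟨_, hw', hdrains⟩ := @ih (.inl w) (by simpa [hfa] using hw)
          cases hw'
          exact ⟨a, rfl, .step hfa hdrains⟩
        · simp [hfa] at hw
      · rcases hfb : f₂ b with w | y
        · obtain ⟨_, hw', -⟩ := @ih (.inr w) (by simpa [hfb] using hw)
          cases hw'
        · simp [hfb] at hw
  · rintro ⟨a, rfl, ha⟩
    induction ha with
    | exit hx => exact .exit (by simp [hx])
    | step hw _ ih => exact .step (by simp [hw]) ih

lemma exists_unionPref_eq [Fintype V₁] [Fintype C₁] {s : C → V}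
    (hs : ∀ c, s c ∈ leftPart eV ↔ c ∈ leftPart eC) : ∃ s₁ s₂, unionPref eV eC s₁ s₂ = s := by
  have hside : ∀ z, ((eV ∘ s ∘ eC.symm) z).isLeft = z.isLeft := fun z => by
    have hz := hs (eC.symm z)
    obtain ⟨w, hw⟩ := eV.symm.surjective (s (eC.symm z))
    rcases z with z | z <;> rcases w with w | w <;> simp [← hw] at hz ⊢
  obtain ⟨s₁, s₂, hmap⟩ := exists_sumMap_eq hside
  refine ⟨s₁, s₂, ?_⟩
  ext c
  simp [unionPref, hmap]

variable [Fintype V] [Fintype V₁]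

lemma basin_unionMap_eq_leftPart_iff {x : E₁} :
    basin (unionMap eV eE f₁ f₂) (eE.symm (.inl x)) = leftPart eV ↔ ∀ a, DrainsTo f₁ x a := by
  simp [Finset.ext_iff, eV.symm.surjective.forall, drainsTo_unionMap_iff]

lemma exists_unionMap_eq {eE : E ≃ Unit ⊕ E₂} {f : V → V ⊕ E}
    (hf : basin f (eE.symm (.inl ())) = leftPart eV) : ∃ f₁ f₂, unionMap eV eE f₁ f₂ = f := by
  let g : V₁ ⊕ V₂ → (V₁ ⊕ Unit) ⊕ (V₂ ⊕ E₂) :=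
    (Equiv.sumSumSumComm V₁ Unit V₂ E₂).symm ∘ eV.sumCongr eE ∘ f ∘ eV.symm
  have hside : ∀ z, (g z).isLeft = z.isLeft := fun z => by
    have hz : eV.symm z ∈ leftPart eV ↔
        Sum.elim (· ∈ leftPart eV) (· = eE.symm (.inl ())) (f (eV.symm z)) := by
      simp only [← hf, mem_basin]
      exact drainsTo_iff
    rcases hw : f (eV.symm z) with w | y
    · obtain ⟨w, rfl⟩ := eV.symm.surjective w
      rcases z with z | z <;> rcases w with w | w <;> simp [hw, g] at hz ⊢
    · obtain ⟨y, rfl⟩ := eE.symm.surjective y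
      rcases z with z | z <;> rcases y with y | y <;> simp [hw, g] at hz ⊢
  obtain ⟨f₁, f₂, hmap⟩ := exists_sumMap_eq hside
  refine ⟨f₁, f₂, ?_⟩
  funext u
  simp only [unionMap, hmap, g, comp_apply, Equiv.apply_symm_apply, Equiv.symm_apply_apply]

open scoped Classical in
/-- The drivers whose preferred vertex drains to the exit `x`. -/
noncomputable def basinDrivers [Fintype C] (f : V → V ⊕ E) (s : C → V) (x : E) : Finset C :=
  {c | s c ∈ basin f x}

lemma basinDrivers_eq_leftPart_iff [Fintype C] [Fintype C₁] {f : V → V ⊕ E} {s : C → V} {x : E}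
    (hf : basin f x = leftPart eV) :
    basinDrivers f s x = leftPart eC ↔ ∀ c, s c ∈ leftPart eV ↔ c ∈ leftPart eC := by
  simp [basinDrivers, hf, Finset.ext_iff]

variable [Fintype V₂] [Fintype C] [Fintype C₁] [Fintype C₂]

/-- The disjoint union of two configurations. -/
def unionConfiguration (p₁ : Configuration V₁ E₁ C₁) (p₂ : Configuration V₂ E₂ C₂) :
    Configuration V E C :=
  ⟨unionMap eV eE p₁.map p₂.map, unionPref eV eC p₁.pref p₂.pref,
    (fills_union_iff eV eE eC).2 ⟨p₁.fills, p₂.fills⟩⟩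

-- The vertices and drivers attached to one exit form a tree configuration, and what remains is a
-- configuration without that exit.
lemma card_configuration_basin_eq_leftPart (eE : E ≃ Unit ⊕ E₂) :
    Nat.card {p : Configuration V E C // basin p.map (eE.symm (.inl ())) = leftPart eV ∧
        basinDrivers p.map p.pref (eE.symm (.inl ())) = leftPart eC} =
      Nat.card (TreeConfiguration V₁ C₁) * Nat.card (Configuration V₂ E₂ C₂) := by
  rw [← Nat.card_prod]
  refine (Nat.card_eq_of_bijective
    (fun p => ⟨unionConfiguration eV eE eC p.1.1 p.2, ?fiber⟩) ⟨?inj, ?surj⟩).symm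
  case fiber =>
    have hbasin := (basin_unionMap_eq_leftPart_iff eV eE (f₂ := p.2.map)).2 p.1.2
    refine ⟨hbasin, (basinDrivers_eq_leftPart_iff eV eC hbasin).2 ?_⟩
    simp [unionConfiguration, eC.symm.surjective.forall]
  case inj =>
    rintro ⟨⟨p₁, hp₁⟩, p₂⟩ ⟨⟨q₁, hq₁⟩, q₂⟩ h
    obtain ⟨hmap, hpref⟩ := Configuration.ext_iff.1 (Subtype.ext_iff.1 h)
    obtain ⟨hmap₁, hmap₂⟩ := (unionMap_inj eV eE).1 hmap
    obtain ⟨hpref₁, hpref₂⟩ := (unionPref_inj eV eC).1 hpref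
    exact Prod.ext (Subtype.ext (Configuration.ext hmap₁ hpref₁)) (Configuration.ext hmap₂ hpref₂)
  case surj =>
    rintro ⟨⟨f, s, hfills⟩, hbasin, hdrivers⟩
    obtain ⟨f₁, f₂, rfl⟩ := exists_unionMap_eq eV hbasin
    obtain ⟨s₁, s₂, rfl⟩ :=
      exists_unionPref_eq eV eC ((basinDrivers_eq_leftPart_iff eV eC hbasin).1 hdrivers)
    obtain ⟨hfills₁, hfills₂⟩ := (fills_union_iff eV eE eC).1 hfills
    exact ⟨(⟨⟨f₁, s₁, hfills₁⟩, (basin_unionMap_eq_leftPart_iff eV eE).1 hbasin⟩,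
      ⟨f₂, s₂, hfills₂⟩), rfl⟩

end Union

section Counting

/-- The number of maps on `m` vertices with `k` exits, together with `m` drivers filling all
vertices. -/
noncomputable def fillCount (m k : ℕ) : ℕ :=
  Nat.card (Configuration (Fin m) (Fin k) (Fin m))

/-- The number of tree configurations with `m` vertices and `m` drivers. -/
noncomputable def treeCount (m : ℕ) : ℕ :=
  Nat.card (TreeConfiguration (Fin m) (Fin m))

lemma fillCount_zero_left (k : ℕ) : fillCount 0 k = 1 := by
  have : Nonempty (Configuration (Fin 0) (Fin k) (Fin 0)) :=
    ⟨⟨Fin.elim0, Fin.elim0, rfl, fun B _ => by simp [eq_empty_of_isEmpty B]⟩⟩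
  have : Subsingleton (Configuration (Fin 0) (Fin k) (Fin 0)) :=
    ⟨fun _ _ => Configuration.ext (Subsingleton.elim _ _) (Subsingleton.elim _ _)⟩
  exact Nat.card_eq_one_iff_unique.2 ⟨this, ‹_›⟩

lemma card_configuration_basin_eq {m k : ℕ} (x : Fin (k + 1)) (T D : Finset (Fin m)) :
    Nat.card {p : Configuration (Fin m) (Fin (k + 1)) (Fin m) //
        basin p.map x = T ∧ basinDrivers p.map p.pref x = D} =
      if #T = #D then treeCount #T * fillCount (m - #T) k else 0 := by
  have hcard : ∀ S : Finset (Fin m), Fintype.card (Fin m) =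
      Fintype.card (Fin #S) + Fintype.card (Fin (m - #S)) := fun S => by
    simpa using (Nat.add_sub_of_le (card_finset_fin_le S)).symm
  obtain ⟨eV, hT⟩ := exists_leftPart_eq T (Fintype.card_fin _).symm (hcard T)
  obtain ⟨eC, hD⟩ := exists_leftPart_eq D (Fintype.card_fin _).symm (hcard D)
  obtain ⟨eE, hx⟩ : ∃ eE : Fin (k + 1) ≃ Unit ⊕ Fin k, leftPart eE = {x} :=
    exists_leftPart_eq {x} rfl (by simp [add_comm])
  obtain rfl : eE.symm (.inl ()) = x := mem_singleton.1 (hx ▸ symm_inl_mem_leftPart eE ())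
  have hcount := card_configuration_basin_eq_leftPart eV eC eE
  rw [hT, hD] at hcount
  rw [hcount]
  split_ifs with hTD
  · rw [← hTD, treeCount, fillCount]
  · have : IsEmpty (TreeConfiguration (Fin #T) (Fin #D)) :=
      ⟨fun p => hTD (by simpa using p.1.fills.card_eq.symm)⟩
    rw [Nat.card_of_isEmpty, zero_mul]

lemma sum_card_basin (m k : ℕ) (x : Fin (k + 1)) (weight : ℕ → ℕ) :
    ∑ p : Configuration (Fin m) (Fin (k + 1)) (Fin m), weight #(basin p.map x) =
      ∑ r ∈ range (m + 1), m.choose r ^ 2 * (weight r * treeCount r * fillCount (m - r) k) := by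
  classical
  have hcountDrivers : ∀ T : Finset (Fin m),
      ∑ D : Finset (Fin m), (if #T = #D then treeCount #T * fillCount (m - #T) k else 0) =
        m.choose #T * (treeCount #T * fillCount (m - #T) k) := fun T => by
    rw [← powerset_univ, sum_powerset_apply_card
      (fun d => if #T = d then treeCount #T * fillCount (m - #T) k else 0)]
    simp [Nat.lt_succ_of_le (card_finset_fin_le T)]
  calc ∑ p : Configuration (Fin m) (Fin (k + 1)) (Fin m), weight #(basin p.map x)
      = ∑ T : Finset (Fin m), ∑ D : Finset (Fin m), weight #T *
          Nat.card {p : Configuration (Fin m) (Fin (k + 1)) (Fin m) //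
            basin p.map x = T ∧ basinDrivers p.map p.pref x = D} := by
        refine (Fintype.sum_fiberwise' (fun p : Configuration (Fin m) (Fin (k + 1)) (Fin m) =>
          (basin p.map x, basinDrivers p.map p.pref x)) fun q => weight #q.1).symm.trans ?_
        simp [Fintype.sum_prod_type, mul_comm]
    _ = ∑ T : Finset (Fin m),
          weight #T * (m.choose #T * (treeCount #T * fillCount (m - #T) k)) := by
        simp_rw [card_configuration_basin_eq, ← mul_sum, hcountDrivers]
    _ = _ := by
        rw [← powerset_univ, sum_powerset_apply_card
          fun r => weight r * (m.choose r * (treeCount r * fillCount (m - r) k))]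
        simp only [card_univ, Fintype.card_fin, smul_eq_mul]
        exact sum_congr rfl fun r _ => by ring

lemma fillCount_succ_right (m k : ℕ) :
    fillCount m (k + 1) =
      ∑ r ∈ range (m + 1), m.choose r ^ 2 * (treeCount r * fillCount (m - r) k) := by
  simpa [fillCount] using sum_card_basin m k 0 fun _ => 1

section Parking

variable {A : Type*} [Fintype A] {m k : ℕ} {O : Finset A}

lemma card_parksOnto (hA : Fintype.card A = m + k) (hO : #O = m) :
    Nat.card {p : (A → A) × (Fin m → A) // ParksOnto p.1 O p.2} =
      fillCount m k * (m + k) ^ k := by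
  obtain ⟨e, rfl⟩ : ∃ e : A ≃ Fin m ⊕ Fin k, leftPart e = O :=
    exists_leftPart_eq O (by simpa using hO) (by simpa using hA)
  simp [card_parksOnto_leftPart, fillCount, hA]

lemma card_parksOnto_parksAt (hA : Fintype.card A = m + (k + 1)) (hO : #O = m) {v : A}
    (hv : v ∉ O) :
    Nat.card {p : ((A → A) × (Fin m → A)) × A // ParksOnto p.1.1 O p.1.2 ∧
        ParksAt p.1.1 O p.2 v} =
      (∑ r ∈ range (m + 1), m.choose r ^ 2 * ((r + 1) * treeCount r * fillCount (m - r) k)) *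
        (m + (k + 1)) ^ (k + 1) := by
  obtain ⟨e, rfl⟩ : ∃ e : A ≃ Fin m ⊕ Fin (k + 1), leftPart e = O :=
    exists_leftPart_eq O (by simpa using hO) (by simpa using hA)
  obtain ⟨u | x, rfl⟩ := e.symm.surjective v
  · exact absurd (symm_inl_mem_leftPart e u) hv
  · rw [card_parksOnto_leftPart_parksAt, sum_card_basin m k x (· + 1)]
    simp [hA]

end Parking

lemma mCount_add_left (m k : ℕ) :
    MCount (m + k) m = (m + k).choose m * (fillCount m k * (m + k) ^ k) := by
  rw [mCount_eq_sum_parksOnto, sum_congr rfl fun O hO =>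
    card_parksOnto (Fintype.card_fin _) (mem_powersetCard.1 hO).2]
  simp

lemma fillCount_succ_left (m k : ℕ) :
    fillCount (m + 1) k = (m + 1) * (m + 1 + k) *
      ∑ r ∈ range (m + 1), m.choose r ^ 2 * ((r + 1) * treeCount r * fillCount (m - r) k) := by
  have hcard : Fintype.card (Fin (m + 1 + k)) = m + (k + 1) := by
    rw [Fintype.card_fin]
    omega
  obtain ⟨O, -, hO⟩ : ∃ O ⊆ (univ : Finset (Fin (m + 1 + k))), #O = m + 1 :=
    exists_subset_card_eq (by simp)
  refine Nat.eq_of_mul_eq_mul_right (pow_pos (by omega : 0 < m + 1 + k) k) ?_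
  rw [← card_parksOnto (Fintype.card_fin _) hO, card_parksOnto_succ,
    sum_congr rfl fun v hv => card_parksOnto_parksAt hcard
      (by rw [card_erase_of_mem hv, hO, Nat.add_sub_cancel]) (notMem_erase v O),
    sum_const, hO, smul_eq_mul, show m + (k + 1) = m + 1 + k by omega]
  ring

lemma treeCount_zero : treeCount 0 = 1 := by
  simpa [fillCount_zero_left, eq_comm] using fillCount_succ_right 0 0

end Counting

section CoefficientExtraction

open PowerSeries

lemma coeff_X_mul_derivative {R : Type*} [CommSemiring R] (n : ℕ) (F : R⟦X⟧) :
    coeff n (X * d⁄dX R F) = n * coeff n F := by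
  cases n with
  | zero => simp
  | succ n => rw [coeff_succ_X_mul, coeff_derivative, mul_comm, Nat.cast_succ]

section CommRing

variable {R : Type*} [CommRing R] {W : R⟦X⟧}

lemma constantCoeff_eq_zero_of_eq_X_mul_derivative (hW : W = X * d⁄dX R (W - W ^ 2)) :
    constantCoeff W = 0 := by
  rw [hW, map_mul, constantCoeff_X, zero_mul]

lemma coeff_pow_mul_of_lt (hW : constantCoeff W = 0) {n j : ℕ} (hnj : n < j) (F : R⟦X⟧) :
    coeff n (W ^ j * F) = 0 :=
  X_pow_dvd_iff.1 ((pow_dvd_pow_of_dvd (X_dvd_iff.2 hW) j).mul_right F) n hnj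

lemma coeff_pow_self (hW : constantCoeff W = 0) (n : ℕ) :
    coeff n (W ^ n) = coeff 1 W ^ n := by
  obtain ⟨V, rfl⟩ := X_dvd_iff.2 hW
  rw [mul_pow, coeff_X_pow_mul', if_pos le_rfl, Nat.sub_self, ← zero_add 1, coeff_succ_X_mul]
  simp

/-- Multiplying `W = X * (W - W²)'` by `W^(j-1)` gives a first-order recursion in the exponent. -/
lemma coeff_pow_recursion (hW : W = X * d⁄dX R (W - W ^ 2)) (n : ℕ) {j : ℕ} (hj : j ≠ 0) :
    (j + 1) * (n - j) * coeff n (W ^ j) = 2 * j * n * coeff n (W ^ (j + 1)) := by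
  obtain ⟨i, rfl⟩ := Nat.exists_eq_succ_of_ne_zero hj
  have hderiv : (C ((i + 1 : R) * (i + 2))) * W ^ (i + 1) =
      C (i + 2 : R) * (X * d⁄dX R (W ^ (i + 1))) -
        C (2 * (i + 1) : R) * (X * d⁄dX R (W ^ (i + 2))) := by
    rw [map_sub, derivative_pow] at hW
    simp only [derivative_pow, map_mul, map_add, map_natCast, map_ofNat, map_one]
    push_cast at hW ⊢
    linear_combination ((i : R⟦X⟧) + 1) * (i + 2) * W ^ i * hW
  have hcoeff := congrArg (coeff n) hderiv
  simp only [map_sub, coeff_C_mul, coeff_X_mul_derivative] at hcoeff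
  push_cast
  linear_combination -hcoeff

end CommRing

/-- This is Lagrange inversion for `W = X * exp (2 * W)`, the solution with linear term `X`. -/
lemma coeff_pow_eq {K : Type*} [Field K] [CharZero K] {W : K⟦X⟧}
    (hW : W = X * d⁄dX K (W - W ^ 2)) (hW₁ : coeff 1 W = 1) (j d : ℕ) :
    (j + d : K) * coeff (j + d) (W ^ j) = j * (2 * (j + d)) ^ d / d ! := by
  have hfactorial : ∀ i : ℕ, (i ! : K) ≠ 0 := fun i => Nat.cast_ne_zero.2 i.factorial_ne_zero
  induction d generalizing j with
  | zero =>
    simp [coeff_pow_self (constantCoeff_eq_zero_of_eq_X_mul_derivative hW), hW₁]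
  | succ d ih =>
    rcases eq_or_ne j 0 with rfl | hj
    · simp [coeff_one]
    have hrec := coeff_pow_recursion hW (j + (d + 1)) hj
    have hind := ih (j + 1)
    rw [show j + 1 + d = j + (d + 1) by omega, eq_div_iff (hfactorial d)] at hind
    rw [eq_div_iff (hfactorial (d + 1)), Nat.factorial_succ]
    apply mul_left_cancel₀ (Nat.cast_add_one_ne_zero j : (j + 1 : K) ≠ 0)
    push_cast at hrec hind ⊢
    linear_combination (j + (d + 1) : K) * d ! * hrec + 2 * j * (j + (d + 1)) * hind

end CoefficientExtraction

section GeneralizedBinomial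

lemma genChoose_succ_succ (a : ℤ) (b : ℕ) :
    genChoose (a + 1) (b + 1) = genChoose a b + genChoose a (b + 1) := by
  have hshift : ∀ i : ℕ, ((a + 1 : ℤ) : ℚ) - (i + 1 : ℕ) = a - i := fun i => by
    push_cast
    ring
  rw [genChoose, genChoose, genChoose, prod_range_succ', prod_range_succ, Nat.factorial_succ]
  simp only [hshift]
  push_cast
  field_simp
  ring

lemma genChoose_zero_right (a : ℤ) : genChoose a 0 = 1 := by
  simp [genChoose]

lemma genChoose_self (b : ℕ) : genChoose b b = 1 := by
  induction b with
  | zero => exact genChoose_zero_right 0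
  | succ b ih =>
    rw [Nat.cast_succ, genChoose_succ_succ, ih]
    simp [genChoose, prod_range_succ]

variable {A : Type*} [CommRing A] [Algebra ℚ A]

lemma sum_genChoose_smul_pow_mul_one_sub (W : A) (k N : ℕ) :
    (∑ i ∈ range (N + 1), genChoose (i - k) i • W ^ i) * (1 - W) =
      ∑ i ∈ range (N + 1), genChoose (i - (k + 1 : ℕ)) i • W ^ i -
        genChoose (N - k) N • W ^ (N + 1) := by
  induction N with
  | zero => simp [genChoose_zero_right]
  | succ N ih =>
    have hpascal := genChoose_succ_succ (N - k) N
    rw [sum_range_succ, add_mul, ih, sum_range_succ _ (N + 1),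
      show ((N + 1 : ℕ) : ℤ) - (k + 1 : ℕ) = N - k by push_cast; ring,
      show ((N + 1 : ℕ) : ℤ) - k = N - k + 1 by push_cast; ring, hpascal]
    simp only [Algebra.smul_def, map_add]
    ring

/-- The truncated binomial expansion of `(1 - W)^(k-1)`, uniform in `k ≥ 0`. -/
lemma pow_dvd_mul_one_sub_pow_sub_sum {M W : A} (hM : M = 1 + W * M) (k N : ℕ) :
    W ^ (N + 1) ∣ M * (1 - W) ^ k - ∑ i ∈ range (N + 1), genChoose (i - k) i • W ^ i := by
  induction k with
  | zero =>
    refine ⟨M, ?_⟩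
    simp only [Nat.cast_zero, sub_zero, genChoose_self, one_smul, pow_zero, mul_one]
    linear_combination (∑ i ∈ range (N + 1), W ^ i) * hM - M * mul_neg_geom_sum W (N + 1)
  | succ k ih =>
    have hstep := (ih.mul_right (1 - W)).sub
      (dvd_mul_left (W ^ (N + 1)) (algebraMap ℚ A (genChoose (N - k) N)))
    rw [← Algebra.smul_def, sub_mul, sum_genChoose_smul_pow_mul_one_sub] at hstep
    convert hstep using 1
    ring

end GeneralizedBinomial

section GeneratingFunctions

open PowerSeries

/-- The generating function `∑ a m z^m / (m!)²` of objects with `m` labelled vertices and `m`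
labelled drivers. -/
noncomputable def doubleEgf (a : ℕ → ℚ) : ℚ⟦X⟧ :=
  PowerSeries.mk fun m => a m / (m ! : ℚ) ^ 2

lemma coeff_doubleEgf (a : ℕ → ℚ) (m : ℕ) : coeff m (doubleEgf a) = a m / (m ! : ℚ) ^ 2 :=
  coeff_mk ..

lemma doubleEgf_mul (a b : ℕ → ℚ) :
    doubleEgf a * doubleEgf b =
      doubleEgf fun m => ∑ r ∈ range (m + 1), (m.choose r : ℚ) ^ 2 * (a r * b (m - r)) := by
  ext m
  rw [coeff_mul, Nat.sum_antidiagonal_eq_sum_range_succ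
    (fun i j => coeff i (doubleEgf a) * coeff j (doubleEgf b)), coeff_doubleEgf, sum_div]
  refine sum_congr rfl fun r hr => ?_
  rw [coeff_doubleEgf, coeff_doubleEgf, Nat.cast_choose ℚ (mem_range_succ_iff.1 hr)]
  field_simp

/-- The generating function of `fillCount · k`; the case `k = 0` is the series `M(z)` of
mapping parking functions with as many drivers as vertices. -/
noncomputable def fillSeries (k : ℕ) : ℚ⟦X⟧ :=
  doubleEgf fun m => fillCount m k

/-- The generating function of `treeCount`. -/
noncomputable def treeSeries : ℚ⟦X⟧ :=
  doubleEgf fun m => treeCount m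

/-- The series `W(z) = z (z H(z))'`, where `H` is `treeSeries`: tree configurations with the exit
counted as a vertex and the choice of a starting point of one more driver. -/
noncomputable def pointedTreeSeries : ℚ⟦X⟧ :=
  X * doubleEgf fun m => (m + 1) * treeCount m

lemma pointedTreeSeries_eq_X_mul_derivative :
    pointedTreeSeries = X * d⁄dX ℚ (X * treeSeries) := by
  rw [pointedTreeSeries]
  congr 1
  ext m
  rw [coeff_derivative, coeff_succ_X_mul, treeSeries, coeff_doubleEgf, coeff_doubleEgf]
  ring

lemma coeff_one_pointedTreeSeries : coeff 1 pointedTreeSeries = 1 := by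
  rw [pointedTreeSeries, ← zero_add 1, coeff_succ_X_mul, coeff_doubleEgf, treeCount_zero]
  simp

lemma fillSeries_succ (k : ℕ) : fillSeries (k + 1) = treeSeries * fillSeries k := by
  rw [fillSeries, fillSeries, treeSeries, doubleEgf_mul]
  congr! 2 with m
  exact_mod_cast fillCount_succ_right m k

lemma fillSeries_eq (k : ℕ) : fillSeries k = treeSeries ^ k * fillSeries 0 := by
  induction k with
  | zero => simp
  | succ k ih => rw [fillSeries_succ, ih, pow_succ']; ring

lemma coeff_fillSeries (m k : ℕ) :
    m * coeff m (fillSeries k) = (m + k) * coeff m (pointedTreeSeries * fillSeries k) := by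
  cases m with
  | zero => simp [pointedTreeSeries]
  | succ m =>
    rw [pointedTreeSeries, mul_assoc, coeff_succ_X_mul, fillSeries, doubleEgf_mul,
      coeff_doubleEgf, coeff_doubleEgf, fillCount_succ_left, Nat.factorial_succ]
    push_cast
    field_simp

lemma fillSeries_zero_eq : fillSeries 0 = 1 + pointedTreeSeries * fillSeries 0 := by
  ext m
  cases m with
  | zero => simp [fillSeries, pointedTreeSeries, coeff_doubleEgf, fillCount_zero_left]
  | succ m =>
    have hrec := coeff_fillSeries (m + 1) 0
    rw [Nat.cast_zero, add_zero] at hrec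
    simpa [coeff_one] using mul_left_cancel₀ (Nat.cast_ne_zero.2 m.succ_ne_zero) hrec

lemma pointedTreeSeries_eq : pointedTreeSeries = X * (treeSeries * fillSeries 0) := by
  rw [pointedTreeSeries]
  congr 1
  ext m
  have hrec := coeff_fillSeries m 1
  have hW : pointedTreeSeries * fillSeries 1 = treeSeries * fillSeries 0 - treeSeries := by
    rw [fillSeries_succ]
    linear_combination -treeSeries * fillSeries_zero_eq
  rw [hW, fillSeries_succ, map_sub, treeSeries, coeff_doubleEgf _ m] at hrec
  rw [coeff_doubleEgf, treeSeries]
  push_cast at hrec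
  linear_combination hrec

lemma X_mul_treeSeries :
    X * treeSeries = pointedTreeSeries * (1 - pointedTreeSeries) := by
  linear_combination -X * treeSeries * fillSeries_zero_eq -
    (1 - pointedTreeSeries) * pointedTreeSeries_eq

lemma pointedTreeSeries_eq_X_mul_derivative_sub_sq :
    pointedTreeSeries = X * d⁄dX ℚ (pointedTreeSeries - pointedTreeSeries ^ 2) := by
  rw [sq, ← mul_one_sub, ← X_mul_treeSeries]
  exact pointedTreeSeries_eq_X_mul_derivative

lemma X_pow_mul_fillSeries (k : ℕ) :
    X ^ k * fillSeries k =
      pointedTreeSeries ^ k * (fillSeries 0 * (1 - pointedTreeSeries) ^ k) := by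
  rw [fillSeries_eq, ← mul_assoc, ← mul_pow, X_mul_treeSeries, mul_pow]
  ring

lemma coeff_fillSeries_eq_sum_coeff_pow (m k : ℕ) :
    coeff m (fillSeries k) = ∑ i ∈ range (m + 1),
      genChoose (i - k) i * coeff (m + k) (pointedTreeSeries ^ (k + i)) := by
  have hW := constantCoeff_eq_zero_of_eq_X_mul_derivative
    pointedTreeSeries_eq_X_mul_derivative_sub_sq
  obtain ⟨F, hF⟩ := pow_dvd_mul_one_sub_pow_sub_sum fillSeries_zero_eq k m
  rw [← coeff_X_pow_mul _ k m, X_pow_mul_fillSeries, eq_add_of_sub_eq hF, mul_add, map_add,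
    ← mul_assoc, ← pow_add, coeff_pow_mul_of_lt hW (by omega), zero_add, mul_sum, map_sum]
  simp_rw [mul_smul_comm, ← pow_add, coeff_smul, smul_eq_mul]

lemma mul_coeff_fillSeries (m k : ℕ) :
    (m + k : ℚ) * coeff m (fillSeries k) =
      ∑ j ∈ range (m + 1), genChoose (m - k - j) (m - j) * (m + k - j) *
        (2 * (m + k)) ^ j / j ! := by
  rw [coeff_fillSeries_eq_sum_coeff_pow, mul_sum, ← sum_range_reflect]
  refine sum_congr rfl fun j hj => ?_
  obtain ⟨i, rfl⟩ := Nat.exists_eq_add_of_le' (mem_range_succ_iff.1 hj)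
  have hcoeff := coeff_pow_eq pointedTreeSeries_eq_X_mul_derivative_sub_sq
    coeff_one_pointedTreeSeries (k + i) j
  rw [show i + j + 1 - 1 - j = i by omega, Nat.add_sub_cancel,
    show ((i + j : ℕ) : ℤ) - k - j = i - k by push_cast; ring, show i + j + k = k + i + j by ring]
  push_cast at hcoeff ⊢
  rw [mul_left_comm, show (i + j + k : ℚ) = k + i + j by ring, hcoeff]
  ring

end GeneratingFunctions

end MappingParking

/-- (Lackner–Panholzer, Theorem 4.5) For all `n ≥ 1` and `0 ≤ m ≤ n`,
`M_{n,m} = ((n-1)! m! n^(n-m) / (n-m)!) Σ_{j=0}^{m} binom(2m-n-j, m-j) (n-j)(2n)^j / j!`,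
as an identity of rational numbers (with generalized binomial coefficients). -/
theorem lackner_panholzer_theorem_4_5 (n m : ℕ) (hn : 1 ≤ n) (hm : m ≤ n) :
    (MCount n m : ℚ) =
      (Nat.factorial (n - 1) : ℚ) * (Nat.factorial m : ℚ) * (n : ℚ) ^ (n - m) /
          (Nat.factorial (n - m) : ℚ) *
        ∑ j ∈ Finset.range (m + 1),
          genChoose (2 * (m : ℤ) - (n : ℤ) - (j : ℤ)) (m - j) * ((n : ℚ) - (j : ℚ)) *
              (2 * (n : ℚ)) ^ j / (Nat.factorial j : ℚ) := by
  obtain ⟨k, rfl⟩ : ∃ k, n = m + k := Nat.exists_eq_add_of_le hm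
  have hcoeff := MappingParking.mul_coeff_fillSeries m k
  have hsub : 2 * (m : ℤ) - (m + k) = m - k := by ring
  simp only [Nat.cast_add, hsub, Nat.add_sub_cancel_left]
  rw [← hcoeff, MappingParking.fillSeries, MappingParking.coeff_doubleEgf,
    MappingParking.mCount_add_left]
  push_cast
  rw [Nat.cast_choose ℚ (Nat.le_add_right m k), Nat.add_sub_cancel_left,
    ← Nat.mul_factorial_pred (Nat.one_le_iff_ne_zero.1 hn)]
  push_cast
  field_simp
end

section
/- (Lackner–Panholzer, Corollary 4.6) For all n ≥ 1 and 0 ≤ m ≤ n, the total number F_{n,m} of (n,m)-tree parking functions equals F_{n,m} = ((n−1)!·m!·n^(n−m−1)/(n−m)!) · Σ_{j=0}^{m} binomial(2m−n−j, m−j) · (n−j)·(2n)^j / j!, where binomial(a,b) for integer a (possibly negative) and nonnegative integer b denotes the generalized binomial coefficient a(a−1)⋯(a−b+1)/b!, and the identity is an identity of rational numbers. -/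
/-!
Reveal the parent of a vertex only at the moment a driver parks there. All that matters for the
drivers still to come is the parking map `ψ`, which sends a starting vertex to the place where a
driver starting there would park, or to `none` if that driver is blocked. If the next driver parks
at `u` and `w` is the parent of `u`, then the drivers sent to `u` are redirected to `ψ w`; so the
revealing process is a walk on parking maps with an explicit transition matrix.

Among all ways of completing a partially revealed map to a map on `n` vertices, the proportion of
trees is `1 / n` times the number of blocked vertices (times `1` if there are none), provided that
the blocked vertices form a tree. Averaged over the parents of `u` that lead to the same next
parking map, this proportion does not change, so being a tree is uncorrelated with the walk, and
`n ^ (m + 1) * F_{n,m}` is `n ^ n` times the number of walks of `m` steps from the empty lot.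

The number of walks of `k` steps ending at `ψ` is `k!` times a product over the basins of `ψ` of
weights that depend only on the sizes of the basins. With `T = X * exp (2 * T)`, the exponential
generating functions of these weights are `K = (1 - T) * exp (2 * T)` for a free vertex, which is
itself not counted, and `B = 1 / (1 - T)` for the blocked vertices. The recursion over the last step
of the walk amounts to `K' = E ^ 2` and `B = 1 + X * E * B`, where `E = (X * K)' = exp (2 * T)`.
Summing over `ψ` produces a coefficient of `K ^ (n - m) * B`, and Lagrange inversion turns it into
the binomial sum.
-/

namespace TreeParking

open Finset PowerSeries
open scoped Nat

section GeneratingFunctions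

theorem derivative_prod {R ι : Type*} [CommSemiring R] [DecidableEq ι] (s : Finset ι)
    (P : ι → R⟦X⟧) :
    d⁄dX R (∏ i ∈ s, P i) = ∑ j ∈ s, ∏ i ∈ s, Function.update P j (d⁄dX R (P j)) i := by
  induction s using Finset.induction_on with
  | empty => simp
  | insert a s ha ih =>
    have prod_update_a :
        ∏ i ∈ s, Function.update P a (d⁄dX R (P a)) i = ∏ i ∈ s, P i :=
      prod_update_of_notMem ha P _
    have prod_insert_update {j : ι} (hj : j ∈ s) :
        ∏ i ∈ insert a s, Function.update P j (d⁄dX R (P j)) i =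
          P a * ∏ i ∈ s, Function.update P j (d⁄dX R (P j)) i := by
      rw [prod_insert ha, Function.update_of_ne (ne_of_mem_of_not_mem hj ha).symm]
    rw [prod_insert ha, Derivation.leibniz, ih, sum_insert ha, prod_insert ha, prod_update_a,
      Function.update_self, sum_congr rfl fun j hj => prod_insert_update hj, ← mul_sum,
      smul_eq_mul, smul_eq_mul, mul_comm (∏ i ∈ s, P i), add_comm]

/-- The exponential generating function `∑ a p X ^ p / p!` of a sequence of rationals. -/
noncomputable def egf (a : ℕ → ℚ) : ℚ⟦X⟧ := .mk fun p => a p / p !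

theorem factorial_mul_coeff_egf (a : ℕ → ℚ) (p : ℕ) : p ! * coeff p (egf a) = a p := by
  rw [egf, coeff_mk, mul_div_cancel₀ _ (Nat.cast_ne_zero.2 p.factorial_ne_zero)]

theorem egf_factorial_mul_coeff (P : ℚ⟦X⟧) : egf (fun p => p ! * coeff p P) = P := by
  ext p
  rw [egf, coeff_mk, mul_div_cancel_left₀ _ (Nat.cast_ne_zero.2 p.factorial_ne_zero)]

theorem derivative_egf (a : ℕ → ℚ) : d⁄dX ℚ (egf a) = egf fun p => a (p + 1) := by
  ext p
  rw [coeff_derivative, egf, egf, coeff_mk, coeff_mk, Nat.factorial_succ]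
  push_cast
  field_simp

theorem sum_powerset_mul_eq_coeff_egf_mul {α : Type*} (s : Finset α) (a b : ℕ → ℚ) :
    ∑ D ∈ s.powerset, a #D * b (#s - #D) = (#s)! * coeff #s (egf a * egf b) := by
  rw [sum_powerset_apply_card fun i => a i * b (#s - i), coeff_mul,
    Finset.Nat.sum_antidiagonal_eq_sum_range_succ_mk, mul_sum]
  refine sum_congr rfl fun i hi => ?_
  have choose_mul : ((#s).choose i : ℚ) * i ! * (#s - i)! = (#s)! := by
    exact_mod_cast Nat.choose_mul_factorial_mul_factorial (Nat.lt_succ_iff.1 (mem_range.1 hi))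
  rw [← choose_mul, ← factorial_mul_coeff_egf a, ← factorial_mul_coeff_egf b, nsmul_eq_mul]
  ring

variable {ι : Type*} [DecidableEq ι] [Fintype ι]

theorem prod_update_shift_card_fiber {m : ℕ} (G : ι → ℕ → ℚ) (j : ι) (c : Fin m → ι) :
    ∏ i, Function.update G j (fun p => G j (p + 1)) i #{x | c x = i} =
      ∏ i, G i #{x | (Fin.cons j c : Fin (m + 1) → ι) x = i} := by
  refine prod_congr rfl fun i _ => ?_
  have card_fiber_cons : #{x | (Fin.cons j c : Fin (m + 1) → ι) x = i} =
      #{x | c x = i} + if j = i then 1 else 0 := by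
    rw [card_filter, card_filter, Fin.sum_univ_succ, add_comm]
    simp only [Fin.cons_zero, Fin.cons_succ]
  rw [card_fiber_cons]
  by_cases h : j = i
  · subst h
    rw [Function.update_self, if_pos rfl]
  · rw [Function.update_of_ne (Ne.symm h), if_neg h, add_zero]

theorem sum_prod_card_fiber_fin (m : ℕ) (G : ι → ℕ → ℚ) :
    ∑ c : Fin m → ι, ∏ i, G i #{x | c x = i} = m ! * coeff m (∏ i, egf (G i)) := by
  induction m generalizing G with
  | zero => simp [map_prod, egf]
  | succ m ih =>
    have egf_update (j i : ι) : Function.update (fun i => egf (G i)) j (d⁄dX ℚ (egf (G j))) i =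
        egf (Function.update G j (fun p => G j (p + 1)) i) := by
      rw [derivative_egf, Function.apply_update fun _ => egf]
    calc ∑ c : Fin (m + 1) → ι, ∏ i, G i #{x | c x = i}
        = ∑ j, ∑ c : Fin m → ι, ∏ i, G i #{x | (Fin.cons j c : Fin (m + 1) → ι) x = i} := by
          rw [← (Fin.consEquiv fun _ => ι).sum_comp, Fintype.sum_prod_type]
          rfl
      _ = m ! * coeff m (d⁄dX ℚ (∏ i, egf (G i))) := by
          simp_rw [derivative_prod, map_sum, mul_sum, egf_update, ← ih,
            prod_update_shift_card_fiber]
      _ = (m + 1)! * coeff (m + 1) (∏ i, egf (G i)) := by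
          rw [coeff_derivative, Nat.factorial_succ]
          push_cast
          ring

theorem sum_prod_card_fiber {α : Type*} [DecidableEq α] [Fintype α] (G : ι → ℕ → ℚ) :
    ∑ c : α → ι, ∏ i, G i #{x | c x = i} =
      (Fintype.card α)! * coeff (Fintype.card α) (∏ i, egf (G i)) := by
  rw [← sum_prod_card_fiber_fin]
  let e : α ≃ Fin (Fintype.card α) := Fintype.equivFin α
  refine Fintype.sum_equiv (e.arrowCongr (Equiv.refl ι)) _ _ fun c => ?_
  refine prod_congr rfl fun i _ => congrArg (G i) (card_equiv e fun x => ?_)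
  simp

end GeneratingFunctions

section LagrangeInversion

theorem exists_eq_sum_coeff_smul_X_pow_add {R : Type*} [CommRing R] (G : R⟦X⟧) (m : ℕ) :
    ∃ H : R⟦X⟧, G = (∑ d ∈ range m, coeff d G • X ^ d) + X ^ m * H := by
  obtain ⟨H, hH⟩ : X ^ m ∣ G - ∑ d ∈ range m, coeff d G • X ^ d := by
    rw [X_pow_dvd_iff]
    intro i hi
    simp [coeff_X_pow, hi]
  exact ⟨H, sub_eq_iff_eq_add'.1 hH⟩

variable {k : Type*} [Field k] {P T : k⟦X⟧}

theorem eq_X_mul_subst_of_subst_eq_X (hP : constantCoeff P ≠ 0) (hT : HasSubst T)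
    (hinv : (X * P⁻¹).subst T = X) : T = X * P.subst T := by
  have inv_mul : P⁻¹.subst T * P.subst T = 1 := by
    rw [← subst_mul hT, PowerSeries.inv_mul_cancel P hP, ← coe_substAlgHom hT, map_one]
  rw [subst_mul hT, subst_X hT] at hinv
  rw [← hinv, mul_assoc, inv_mul, mul_one]

variable [CharZero k]

theorem coeff_pow_mul_one_sub_logDeriv (hP : constantCoeff P ≠ 0) (j : ℕ) :
    coeff j (P ^ j * (1 - X * d⁄dX k P * P⁻¹)) = if j = 0 then 1 else 0 := by
  rcases j with _ | j
  · simp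
  have expand : P ^ (j + 1) * (1 - X * d⁄dX k P * P⁻¹) =
      P ^ (j + 1) - X * (P ^ j * d⁄dX k P) := by
    linear_combination (-X * d⁄dX k P * P ^ j) * PowerSeries.mul_inv_cancel P hP
  have coeff_pow : coeff (j + 1) (P ^ (j + 1)) * (j + 1) =
      coeff j (P ^ j * d⁄dX k P) * (j + 1) := by
    rw [← coeff_derivative, derivative_pow, mul_assoc, Nat.add_sub_cancel, ← map_natCast C,
      coeff_C_mul, mul_comm]
    push_cast
    rfl
  rw [expand, map_sub, coeff_succ_X_mul, mul_right_cancel₀ (Nat.cast_add_one_ne_zero j) coeff_pow,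
    sub_self, if_neg j.succ_ne_zero]

theorem coeff_X_mul_inv_pow_mul (hP : constantCoeff P ≠ 0) {d m : ℕ} (hdm : d ≤ m) :
    coeff m ((X * P⁻¹) ^ d * (P ^ m * (1 - X * d⁄dX k P * P⁻¹))) = if d = m then 1 else 0 := by
  obtain ⟨j, rfl⟩ := Nat.exists_eq_add_of_le hdm
  have cancel : P⁻¹ ^ d * P ^ d = 1 := by
    rw [← mul_pow, PowerSeries.inv_mul_cancel P hP, one_pow]
  have regroup : (X * P⁻¹) ^ d * (P ^ (d + j) * (1 - X * d⁄dX k P * P⁻¹)) =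
      X ^ d * (P ^ j * (1 - X * d⁄dX k P * P⁻¹)) := by
    rw [mul_pow, pow_add]
    linear_combination X ^ d * P ^ j * (1 - X * d⁄dX k P * P⁻¹) * cancel
  rw [regroup, add_comm d j, coeff_X_pow_mul, coeff_pow_mul_one_sub_logDeriv hP]
  simp

theorem coeff_eq_coeff_subst_mul (hP : constantCoeff P ≠ 0) (G : k⟦X⟧) (m : ℕ) :
    coeff m G = coeff m (G.subst (X * P⁻¹) * (P ^ m * (1 - X * d⁄dX k P * P⁻¹))) := by
  have hsubst : HasSubst (X * P⁻¹) := HasSubst.of_constantCoeff_zero' (by simp)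
  obtain ⟨R, hR⟩ := exists_eq_sum_coeff_smul_X_pow_add G (m + 1)
  have subst_eq : G.subst (X * P⁻¹) = (∑ d ∈ range (m + 1), coeff d G • (X * P⁻¹) ^ d) +
      X ^ (m + 1) * (P⁻¹ ^ (m + 1) * R.subst (X * P⁻¹)) := by
    conv_lhs => rw [hR]
    rw [← coe_substAlgHom hsubst]
    simp only [map_add, map_sum, map_smul, map_mul, map_pow, substAlgHom_X]
    ring
  have coeff_term (d : ℕ) (hd : d ∈ range (m + 1)) :
      coeff m (coeff d G • (X * P⁻¹) ^ d * (P ^ m * (1 - X * d⁄dX k P * P⁻¹))) =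
        if d = m then coeff d G else 0 := by
    rw [smul_mul_assoc, coeff_smul,
      coeff_X_mul_inv_pow_mul hP (Nat.lt_succ_iff.1 (mem_range.1 hd)), smul_eq_mul, mul_ite,
      mul_one, mul_zero]
  rw [subst_eq, add_mul, sum_mul, map_add, map_sum, mul_assoc (X ^ _), coeff_X_pow_mul',
    if_neg (Nat.not_succ_le_self m), add_zero, sum_congr rfl coeff_term]
  simp

theorem coeff_subst_of_subst_eq_X (hP : constantCoeff P ≠ 0) (hT : HasSubst T)
    (hinv : T.subst (X * P⁻¹) = X) (H : k⟦X⟧) (m : ℕ) :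
    coeff m (H.subst T) = coeff m (H * (P ^ m * (1 - X * d⁄dX k P * P⁻¹))) := by
  have hz : HasSubst (X * P⁻¹) := HasSubst.of_constantCoeff_zero' (by simp)
  rw [coeff_eq_coeff_subst_mul hP, subst_comp_subst_apply hT hz, hinv, X_subst]

end LagrangeInversion

section TreeSeries

/-- The power series `T` with `T = X * exp (2 * T)`, defined as the compositional inverse of
`X * exp (-2 * X)`. -/
noncomputable def treeSeries : ℚ⟦X⟧ :=
  (X * (exp ℚ ^ 2)⁻¹).substInvOfIsUnit (by simp)

/-- The series `exp (2 * T)`, the exponential generating function of basins of a free vertex with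
a marked element, counted by their number of further elements. -/
noncomputable def expTreeSeries : ℚ⟦X⟧ := (exp ℚ ^ 2).subst treeSeries

/-- The series `exp (2 * T) * (1 - T)`, the exponential generating function of basins of a free
vertex, counted by their number of further elements. -/
noncomputable def freeSeries : ℚ⟦X⟧ := expTreeSeries * (1 - treeSeries)

/-- The series `1 / (1 - T)`, the exponential generating function of blocked basins. -/
noncomputable def blockedSeries : ℚ⟦X⟧ := (1 - treeSeries)⁻¹

theorem constantCoeff_exp_sq_ne_zero : constantCoeff (exp ℚ ^ 2) ≠ 0 := by
  simp

theorem hasSubst_treeSeries : HasSubst treeSeries :=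
  HasSubst.substInvOfIsUnit ..

theorem constantCoeff_treeSeries : constantCoeff treeSeries = 0 :=
  constantCoeff_substInvOfIsUnit ..

theorem constantCoeff_expTreeSeries : constantCoeff expTreeSeries = 1 := by
  have sub_one := constantCoeff_subst_eq_zero constantCoeff_treeSeries (exp ℚ ^ 2 - 1) (by simp)
  rw [← coe_substAlgHom hasSubst_treeSeries, map_sub, map_one, map_sub, map_one,
    coe_substAlgHom] at sub_one
  exact sub_eq_zero.1 sub_one

theorem treeSeries_eq_X_mul : treeSeries = X * expTreeSeries :=
  eq_X_mul_subst_of_subst_eq_X constantCoeff_exp_sq_ne_zero hasSubst_treeSeries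
    (subst_substInvOfIsUnit_right _ (by simp) _)

theorem derivative_exp_sq : d⁄dX ℚ (exp ℚ ^ 2) = 2 * exp ℚ ^ 2 := by
  rw [derivative_pow, derivative_exp]
  push_cast
  ring

theorem derivative_expTreeSeries :
    d⁄dX ℚ expTreeSeries = 2 * d⁄dX ℚ treeSeries * expTreeSeries := by
  rw [expTreeSeries, derivative_subst hasSubst_treeSeries, derivative_exp_sq, two_mul (exp ℚ ^ 2),
    subst_add hasSubst_treeSeries]
  ring

theorem derivative_treeSeries_mul :
    d⁄dX ℚ treeSeries * (1 - 2 * treeSeries) = expTreeSeries := by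
  have deriv_eq : d⁄dX ℚ treeSeries = X * d⁄dX ℚ expTreeSeries + expTreeSeries := by
    conv_lhs => rw [treeSeries_eq_X_mul]
    rw [Derivation.leibniz, derivative_X, smul_eq_mul, smul_eq_mul, mul_one]
  rw [derivative_expTreeSeries] at deriv_eq
  linear_combination deriv_eq - 2 * d⁄dX ℚ treeSeries * treeSeries_eq_X_mul

theorem derivative_X_mul_freeSeries : d⁄dX ℚ (X * freeSeries) = expTreeSeries := by
  have X_mul_freeSeries : X * freeSeries = treeSeries - treeSeries ^ 2 := by
    rw [freeSeries]
    linear_combination (treeSeries - 1) * treeSeries_eq_X_mul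
  rw [X_mul_freeSeries, map_sub, derivative_pow]
  push_cast
  linear_combination derivative_treeSeries_mul

theorem derivative_freeSeries : d⁄dX ℚ freeSeries = expTreeSeries ^ 2 := by
  rw [freeSeries, Derivation.leibniz, map_sub, Derivation.map_one_eq_zero,
    derivative_expTreeSeries, smul_eq_mul, smul_eq_mul]
  linear_combination expTreeSeries * derivative_treeSeries_mul

theorem one_sub_treeSeries_mul_blockedSeries : (1 - treeSeries) * blockedSeries = 1 :=
  PowerSeries.mul_inv_cancel _ (by simp [constantCoeff_treeSeries])

theorem blockedSeries_eq_one_add :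
    blockedSeries = 1 + X * (expTreeSeries * blockedSeries) := by
  linear_combination one_sub_treeSeries_mul_blockedSeries + blockedSeries * treeSeries_eq_X_mul

theorem coeff_freeSeries_pow_mul_blockedSeries (c m : ℕ) :
    coeff m (freeSeries ^ c * blockedSeries) =
      coeff m (PowerSeries.mk 1 * (1 - X) ^ c * ((1 - 2 * X) * exp ℚ ^ (2 * (m + c)))) := by
  have subst_one_sub_X : (1 - X : ℚ⟦X⟧).subst treeSeries = 1 - treeSeries := by
    rw [← coe_substAlgHom hasSubst_treeSeries, map_sub, map_one, substAlgHom_X]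
  have subst_mk_one : (.mk 1 : ℚ⟦X⟧).subst treeSeries = blockedSeries := by
    have mul_one_sub := congrArg (subst treeSeries) (mk_one_mul_one_sub_eq_one ℚ)
    rw [subst_mul hasSubst_treeSeries, subst_one_sub_X, ← coe_substAlgHom hasSubst_treeSeries,
      map_one, coe_substAlgHom] at mul_one_sub
    linear_combination (norm := ring1) blockedSeries * mul_one_sub -
      (.mk 1 : ℚ⟦X⟧).subst treeSeries * one_sub_treeSeries_mul_blockedSeries
  have subst_eq : freeSeries ^ c * blockedSeries =
      (PowerSeries.mk 1 * (1 - X) ^ c * (exp ℚ ^ 2) ^ c).subst treeSeries := by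
    rw [subst_mul hasSubst_treeSeries, subst_mul hasSubst_treeSeries,
      subst_pow hasSubst_treeSeries, subst_pow hasSubst_treeSeries, subst_one_sub_X, subst_mk_one,
      freeSeries, expTreeSeries, mul_pow]
    ring
  rw [subst_eq, coeff_subst_of_subst_eq_X constantCoeff_exp_sq_ne_zero hasSubst_treeSeries
    (subst_substInvOfIsUnit_left _ (by simp) _), derivative_exp_sq]
  congr 1
  linear_combination (norm := ring1)
    (-2 * X * PowerSeries.mk 1 * (1 - X) ^ c * exp ℚ ^ (2 * (m + c))) *
      PowerSeries.mul_inv_cancel (exp ℚ ^ 2) constantCoeff_exp_sq_ne_zero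

end TreeSeries

section BasinWeights

/-- The total weight of the ways in which `p` vertices can form the basin of a free vertex; the
value `1` at `0` makes the empty basins of occupied vertices neutral in a product. -/
noncomputable def freeWeight : ℕ → ℚ
  | 0 => 1
  | p + 1 => p ! * coeff p freeSeries

/-- The total weight of the ways in which `p` vertices can form the blocked basin. -/
noncomputable def blockedWeight (p : ℕ) : ℚ := p ! * coeff p blockedSeries

theorem freeWeight_one : freeWeight 1 = 1 := by
  simp [freeWeight, freeSeries, constantCoeff_expTreeSeries, constantCoeff_treeSeries]

theorem blockedWeight_zero : blockedWeight 0 = 1 := by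
  simp [blockedWeight, blockedSeries, constantCoeff_treeSeries]

theorem egf_blockedWeight : egf blockedWeight = blockedSeries :=
  egf_factorial_mul_coeff blockedSeries

theorem egf_freeWeight_succ : (egf fun p => freeWeight (p + 1)) = freeSeries :=
  egf_factorial_mul_coeff freeSeries

theorem egf_succ_mul_freeWeight_succ :
    (egf fun p => (p + 1) * freeWeight (p + 1)) = expTreeSeries := by
  rw [← derivative_X_mul_freeSeries]
  ext p
  rw [coeff_derivative, coeff_succ_X_mul, ← egf_freeWeight_succ, egf, egf, coeff_mk, coeff_mk]
  ring

variable {α : Type*} (s : Finset α)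

theorem sum_powerset_freeWeight_mul_freeWeight :
    ∑ D ∈ s.powerset, (#D + 1) * freeWeight (#D + 1) *
      (((#s - #D : ℕ) + 1) * freeWeight (#s - #D + 1)) = freeWeight (#s + 2) := by
  rw [sum_powerset_mul_eq_coeff_egf_mul s (fun p => (p + 1) * freeWeight (p + 1))
      fun p => (p + 1) * freeWeight (p + 1),
    egf_succ_mul_freeWeight_succ, ← sq, ← derivative_freeSeries, coeff_derivative, freeWeight,
    Nat.factorial_succ]
  push_cast
  ring

theorem card_succ_mul_sum_powerset_freeWeight_mul_blockedWeight :
    (#s + 1) * ∑ D ∈ s.powerset, (#D + 1) * freeWeight (#D + 1) * blockedWeight (#s - #D) =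
      blockedWeight (#s + 1) := by
  rw [sum_powerset_mul_eq_coeff_egf_mul s (fun p => (p + 1) * freeWeight (p + 1)) blockedWeight,
    egf_succ_mul_freeWeight_succ, egf_blockedWeight, blockedWeight, blockedSeries_eq_one_add,
    map_add, coeff_succ_X_mul, Nat.factorial_succ, ← blockedSeries_eq_one_add]
  simp [coeff_one, mul_assoc]

end BasinWeights

section BinomialSum

theorem genChoose_eq_choose (a : ℤ) (b : ℕ) : genChoose a b = Ring.choose (a : ℚ) b := by
  rw [Ring.choose_eq_smul, ← Polynomial.aeval_eq_smeval, Polynomial.aeval_def,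
    ← Polynomial.eval_map, descPochhammer_map, descPochhammer_eval_eq_prod_range, smul_eq_mul,
    genChoose, div_eq_inv_mul]

theorem genChoose_sub_natCast (c b : ℕ) :
    genChoose (b - c) b = coeff b (PowerSeries.mk 1 * (1 - X) ^ c : ℚ⟦X⟧) := by
  induction c generalizing b with
  | zero => simp [genChoose_eq_choose, Ring.choose_natCast]
  | succ c ih =>
    rcases b with _ | b
    · simp [genChoose]
    have pascal : genChoose ((b + 1 : ℕ) - c) (b + 1) =
        genChoose (b - c) b + genChoose ((b + 1 : ℕ) - (c + 1 : ℕ)) (b + 1) := by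
      simp only [genChoose_eq_choose]
      convert Ring.choose_succ_succ ((b : ℚ) - c) b using 2 <;> push_cast <;> ring_nf
    rw [pow_succ, ← mul_assoc, mul_one_sub, map_sub, coeff_succ_mul_X, ← ih, ← ih, pascal,
      add_sub_cancel_left]

theorem natCast_mul_coeff_one_sub_mul_exp_pow (n j : ℕ) :
    (n : ℚ) * coeff j ((1 - 2 * X) * exp ℚ ^ (2 * n)) = (n - j) * (2 * n) ^ j / j ! := by
  have coeff_exp_pow (i : ℕ) : coeff i (exp ℚ ^ (2 * n)) = (2 * n) ^ i / i ! := by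
    simp [exp_pow_eq_rescale_exp, coeff_exp, div_eq_mul_inv]
  rw [sub_mul, one_mul, mul_assoc, ← map_ofNat C 2, map_sub, coeff_C_mul, coeff_exp_pow]
  rcases j with _ | j
  · simp
  rw [coeff_succ_X_mul, coeff_exp_pow, Nat.factorial_succ]
  push_cast
  field_simp
  ring

theorem sum_genChoose_eq_coeff (n c m : ℕ) :
    ∑ j ∈ range (m + 1), genChoose ((m - j : ℕ) - c) (m - j) * ((n - j) * (2 * n) ^ j / j !) =
      n * coeff m (PowerSeries.mk 1 * (1 - X) ^ c * ((1 - 2 * X) * exp ℚ ^ (2 * n))) := by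
  rw [mul_comm (PowerSeries.mk 1 * _), coeff_mul, mul_sum,
    Finset.Nat.sum_antidiagonal_eq_sum_range_succ_mk]
  refine sum_congr rfl fun j _ => ?_
  rw [genChoose_sub_natCast, ← natCast_mul_coeff_one_sub_mul_exp_pow]
  ring

end BinomialSum

section Parking

variable {V : Type*}

open Classical in
/-- The vertex at which a driver starting at `v` and following the step map `f` parks when the
occupied vertices are those of `O`; it is `none` when the whole route is occupied. -/
noncomputable def firstFree (f : V → V) (O : Finset V) (v : V) : Option V :=
  if h : ∃ i, f^[i] v ∉ O then some (f^[Nat.find h] v) else none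

variable {f g : V → V} {O : Finset V} {u v : V}

theorem firstFree_eq_none_iff : firstFree f O v = none ↔ ∀ i, f^[i] v ∈ O := by
  simp [firstFree]

theorem firstFree_eq_some_iff :
    firstFree f O v = some u ↔ ∃ i, f^[i] v = u ∧ u ∉ O ∧ ∀ j < i, f^[j] v ∈ O := by
  classical
  unfold firstFree
  split_ifs with h
  · rw [Option.some.injEq]
    constructor
    · rintro rfl
      exact ⟨Nat.find h, rfl, Nat.find_spec h, fun j hj => not_not.1 (Nat.find_min h hj)⟩
    · rintro ⟨i, rfl, hi, hlt⟩
      rw [(Nat.find_eq_iff h).2 ⟨hi, fun j hj => not_not.2 (hlt j hj)⟩]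
  · simp only [false_iff]
    rintro ⟨i, rfl, hi, -⟩
    exact h ⟨i, hi⟩

theorem firstFree_of_notMem (hv : v ∉ O) : firstFree f O v = some v :=
  firstFree_eq_some_iff.2 ⟨0, rfl, hv, fun _ hj => absurd hj (Nat.not_lt_zero _)⟩

theorem firstFree_empty (f : V → V) : firstFree f ∅ = some :=
  funext fun v => firstFree_of_notMem (notMem_empty v)

theorem firstFree_apply_of_mem (hv : v ∈ O) : firstFree f O (f v) = firstFree f O v := by
  rcases hfv : firstFree f O (f v) with _ | u
  · rw [firstFree_eq_none_iff] at hfv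
    exact (firstFree_eq_none_iff.2 fun i => i.casesOn hv hfv).symm
  · obtain ⟨i, hi, hu, hlt⟩ := firstFree_eq_some_iff.1 hfv
    refine (firstFree_eq_some_iff.2 ⟨i + 1, hi, hu, ?_⟩).symm
    rintro (_ | j) hj
    · exact hv
    · exact hlt j (Nat.lt_of_succ_lt_succ hj)

theorem firstFree_iterate {i : ℕ} (h : ∀ j < i, f^[j] v ∈ O) :
    firstFree f O (f^[i] v) = firstFree f O v := by
  induction i with
  | zero => rfl
  | succ i ih =>
    rw [Function.iterate_succ_apply', firstFree_apply_of_mem (h i i.lt_succ_self),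
      ih fun j hj => h j (hj.trans i.lt_succ_self)]

theorem iterate_eq_iterate_of_eqOn (hfg : Set.EqOn f g O) {i : ℕ} (h : ∀ j < i, f^[j] v ∈ O) :
    g^[i] v = f^[i] v := by
  induction i with
  | zero => rfl
  | succ i ih =>
    rw [Function.iterate_succ_apply', Function.iterate_succ_apply',
      ih fun j hj => h j (hj.trans i.lt_succ_self), hfg (h i i.lt_succ_self)]

theorem firstFree_congr (hfg : Set.EqOn f g O) : firstFree f O = firstFree g O := by
  funext v
  rcases hf : firstFree f O v with _ | u
  · rw [firstFree_eq_none_iff] at hf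
    refine (firstFree_eq_none_iff.2 fun i => ?_).symm
    rw [iterate_eq_iterate_of_eqOn hfg fun j _ => hf j]
    exact hf i
  · obtain ⟨i, hi, hu, hlt⟩ := firstFree_eq_some_iff.1 hf
    refine (firstFree_eq_some_iff.2 ⟨i, ?_, hu, fun j hj => ?_⟩).symm
    · rw [iterate_eq_iterate_of_eqOn hfg hlt, hi]
    · rw [iterate_eq_iterate_of_eqOn hfg fun k hk => hlt k (hk.trans hj)]
      exact hlt j hj

theorem exists_lt_card_iterate_eq [Fintype V] (f : V → V) (v : V) (k : ℕ) :
    ∃ i < Fintype.card V, f^[i] v = f^[k] v := by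
  induction k using Nat.strong_induction_on with
  | _ k ih =>
    rcases lt_or_ge k (Fintype.card V) with hk | hk
    · exact ⟨k, hk, rfl⟩
    obtain ⟨i, j, hne, hij⟩ := Fintype.exists_ne_map_eq_of_card_lt
      (fun i : Fin (Fintype.card V + 1) => f^[i] v) (by simp)
    wlog hlt : i < j generalizing i j
    · exact this j i hne.symm hij.symm (lt_of_le_of_ne (not_lt.1 hlt) hne.symm)
    obtain ⟨r, hr, hrk⟩ := ih (k - j + i) (by omega)
    refine ⟨r, hr, ?_⟩
    rw [hrk, Function.iterate_add_apply, hij, ← Function.iterate_add_apply,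
      Nat.sub_add_cancel (by omega)]

variable [DecidableEq V]

/-- The parking map obtained from `ψ : V → Option V` (in the sense of `firstFree`) when the free
vertex `u` gets occupied and its parent is `w`: the drivers who used to park at `u` go on to `w`,
and drive in circles if they come back to `u` from there. -/
def reroute (ψ : V → Option V) (u w : V) (v : V) : Option V :=
  if ψ v = some u then if ψ w = some u then none else ψ w else ψ v

theorem firstFree_insert_of_ne (hv : firstFree f O v ≠ some u) :
    firstFree f (insert u O) v = firstFree f O v := by
  rcases hx : firstFree f O v with _ | x
  · rw [firstFree_eq_none_iff] at hx ⊢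
    exact fun i => mem_insert_of_mem (hx i)
  · obtain ⟨i, hi, hxO, hlt⟩ := firstFree_eq_some_iff.1 hx
    have hxu : x ≠ u := fun h => hv (h ▸ hx)
    exact firstFree_eq_some_iff.2
      ⟨i, hi, by simp [hxu, hxO], fun j hj => mem_insert_of_mem (hlt j hj)⟩

theorem firstFree_insert_self_of_eq (h : firstFree f O (f u) = some u) :
    firstFree f (insert u O) u = none := by
  obtain ⟨i, hi, -, hlt⟩ := firstFree_eq_some_iff.1 h
  have hperiodic : Function.IsPeriodicPt f (i + 1) u := hi
  refine firstFree_eq_none_iff.2 fun k => ?_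
  have hmod : k % (i + 1) < i + 1 := Nat.mod_lt k i.succ_pos
  rw [← hperiodic.iterate_mod_apply]
  rcases hr : k % (i + 1) with _ | r
  · exact mem_insert_self u O
  · exact mem_insert_of_mem (hlt r (by omega))

theorem firstFree_insert (f : V → V) (O : Finset V) (u : V) :
    firstFree f (insert u O) = reroute (firstFree f O) u (f u) := by
  funext v
  unfold reroute
  split_ifs with hv hfu
  · obtain ⟨i, hi, -, hlt⟩ := firstFree_eq_some_iff.1 hv
    rw [← firstFree_iterate fun j hj => mem_insert_of_mem (hlt j hj), hi,
      firstFree_insert_self_of_eq hfu]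
  · obtain ⟨i, hi, -, hlt⟩ := firstFree_eq_some_iff.1 hv
    rw [← firstFree_iterate fun j hj => mem_insert_of_mem (hlt j hj), hi,
      ← firstFree_apply_of_mem (mem_insert_self u O), firstFree_insert_of_ne hfu]
  · exact firstFree_insert_of_ne hv

/-- The drivers in the list, arriving in this order, all find a place when they follow the step
map `f` and the vertices in the finset are occupied beforehand. -/
def Parks (f : V → V) : Finset V → List V → Prop
  | _, [] => True
  | O, v :: l => ∃ u, firstFree f O v = some u ∧ Parks f (insert u O) l

variable [Fintype V]

/-- The basin of `x`: the starting vertices of the drivers who park at `x`, where the basin of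
`none` consists of the blocked starting vertices. -/
def basin (ψ : V → Option V) (x : Option V) : Finset V := {v | ψ v = x}

open Classical in
/-- The number of preference sequences of `r` drivers who all find a place when the vertices in
`O` are occupied beforehand. -/
noncomputable def parkingCount (f : V → V) (O : Finset V) (r : ℕ) : ℕ :=
  #{s : Fin r → V | Parks f O (List.ofFn s)}

theorem parkingCount_zero (f : V → V) (O : Finset V) : parkingCount f O 0 = 1 := by
  simp [parkingCount, Parks]

theorem parkingCount_succ (f : V → V) (O : Finset V) (r : ℕ) :
    parkingCount f O (r + 1) =
      ∑ u, #(basin (firstFree f O) (some u)) * parkingCount f (insert u O) r := by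
  classical
  calc parkingCount f O (r + 1)
      = ∑ v, ∑ s : Fin r → V, if Parks f O (v :: List.ofFn s) then 1 else 0 := by
        rw [parkingCount, card_filter, ← (Fin.consEquiv fun _ => V).sum_comp,
          Fintype.sum_prod_type]
        simp [Fin.consEquiv, List.ofFn_succ]
    _ = ∑ v, ∑ u, if firstFree f O v = some u then parkingCount f (insert u O) r else 0 := by
        refine sum_congr rfl fun v _ => ?_
        rcases hv : firstFree f O v with _ | u
        · simp [Parks, hv]
        · simp [Parks, hv, parkingCount]
    _ = ∑ u, #(basin (firstFree f O) (some u)) * parkingCount f (insert u O) r := by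
        rw [sum_comm]
        simp [basin, ← sum_filter]

end Parking

section Trees

variable {V : Type*}

/-- `f` is the parent map of a rooted tree on `V`, the root being the fixed point of `f`. -/
def IsTreeMap (f : V → V) : Prop := ∃ r, f r = r ∧ ∀ v, ∃ k, f^[k] v = r

/-- The blocked vertices form a rooted tree under the part of `f` that is visible on the set `O`
of occupied vertices. -/
def IsPartialTree (f : V → V) (O : Finset V) : Prop :=
  ∃ r, ∀ v, firstFree f O v = none → f r = r ∧ ∃ k, f^[k] v = r

variable {f g : V → V} {O : Finset V} {u w : V}

theorem isPartialTree_congr (hfg : Set.EqOn f g O) : IsPartialTree f O ↔ IsPartialTree g O := by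
  suffices imp : ∀ {f g : V → V}, Set.EqOn f g O → IsPartialTree f O → IsPartialTree g O from
    ⟨imp hfg, imp hfg.symm⟩
  rintro f g hfg ⟨r, hr⟩
  refine ⟨r, fun v hv => ?_⟩
  rw [← firstFree_congr hfg] at hv
  obtain ⟨hroot, k, hk⟩ := hr v hv
  rw [firstFree_eq_none_iff] at hv
  exact ⟨hfg (hk ▸ hv k) ▸ hroot, k, iterate_eq_iterate_of_eqOn hfg (fun j _ => hv j) ▸ hk⟩

theorem isPartialTree_univ [Fintype V] : IsPartialTree f univ ↔ IsTreeMap f := by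
  have blocked (v : V) : firstFree f univ v = none :=
    firstFree_eq_none_iff.2 fun _ => mem_univ _
  exact ⟨fun ⟨r, hr⟩ => ⟨r, (hr r (blocked r)).1, fun v => (hr v (blocked v)).2⟩,
    fun ⟨r, hroot, hr⟩ => ⟨r, fun v _ => ⟨hroot, hr v⟩⟩⟩

variable [DecidableEq V]

theorem isPartialTree_insert_of_ne (hfu : firstFree f O (f u) ≠ some u) :
    IsPartialTree f (insert u O) ↔ IsPartialTree f O := by
  unfold IsPartialTree
  rw [firstFree_insert]
  refine exists_congr fun r => ⟨fun hr v hv => hr v (by simp [reroute, hv]), fun hr v hv => ?_⟩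
  unfold reroute at hv
  split_ifs at hv with hvu
  · obtain ⟨hroot, k, hk⟩ := hr _ hv
    obtain ⟨i, hi, -⟩ := firstFree_eq_some_iff.1 hvu
    exact ⟨hroot, k + (i + 1), by
      rw [Function.iterate_add_apply, Function.iterate_succ_apply', hi, hk]⟩
  · exact hr v hv

theorem isPartialTree_insert_of_eq (hu : u ∉ O) (hfu : firstFree f O (f u) = some u) :
    IsPartialTree f (insert u O) ↔ (∀ v, firstFree f O v ≠ none) ∧ f u = u := by
  unfold IsPartialTree
  rw [firstFree_insert]
  constructor
  · rintro ⟨r, hr⟩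
    obtain ⟨hroot, k, hk⟩ := hr u (by simp [reroute, firstFree_of_notMem hu, hfu])
    obtain ⟨i, hi, -⟩ := firstFree_eq_some_iff.1 hfu
    have hperiodic : Function.IsPeriodicPt f (i + 1) u := hi
    have hur : u = r := by
      rw [← (hperiodic.mul_const k).eq, add_one_mul, Function.iterate_add_apply, hk,
        Function.iterate_fixed hroot]
    refine ⟨fun v hv => ?_, hur ▸ hroot⟩
    obtain ⟨-, j, hj⟩ := hr v (by simp [reroute, hv])
    exact hu (hur ▸ hj ▸ firstFree_eq_none_iff.1 hv j)
  · rintro ⟨hne, hroot⟩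
    refine ⟨u, fun v hv => ⟨hroot, ?_⟩⟩
    unfold reroute at hv
    split_ifs at hv with hvu
    · obtain ⟨i, hi, -⟩ := firstFree_eq_some_iff.1 hvu
      exact ⟨i, hi⟩
    · exact absurd hv (hne v)

theorem eqOn_update (f : V → V) (hu : u ∉ O) (w : V) : Set.EqOn f (Function.update f u w) O :=
  fun _ hv => (Function.update_of_ne (ne_of_mem_of_not_mem hv hu) w f).symm

theorem firstFree_update_insert (f : V → V) (hu : u ∉ O) (w : V) :
    firstFree (Function.update f u w) (insert u O) = reroute (firstFree f O) u w := by
  rw [firstFree_insert, Function.update_self, ← firstFree_congr (eqOn_update f hu w)]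

theorem isPartialTree_update_insert_of_ne (hu : u ∉ O) (hw : firstFree f O w ≠ some u) :
    IsPartialTree (Function.update f u w) (insert u O) ↔ IsPartialTree f O := by
  have hfg := eqOn_update f hu w
  rw [isPartialTree_congr hfg, isPartialTree_insert_of_ne]
  rwa [← firstFree_congr hfg, Function.update_self]

theorem isPartialTree_update_insert_of_eq (hu : u ∉ O) (hw : firstFree f O w = some u) :
    IsPartialTree (Function.update f u w) (insert u O) ↔
      (∀ v, firstFree f O v ≠ none) ∧ w = u := by
  have hfg := eqOn_update f hu w
  rw [isPartialTree_insert_of_eq hu, ← firstFree_congr hfg, Function.update_self]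
  rwa [← firstFree_congr hfg, Function.update_self]

variable [Fintype V]

theorem mem_basin {ψ : V → Option V} {x : Option V} {v : V} : v ∈ basin ψ x ↔ ψ v = x := by
  simp [basin]

theorem basin_reroute_none_of_ne {ψ : V → Option V} (hw : ψ w ≠ none) (hwu : ψ w ≠ some u) :
    basin (reroute ψ u w) none = basin ψ none := by
  ext v
  simp only [mem_basin, reroute, if_neg hwu]
  split_ifs with hv <;> simp [hv, hw]

theorem basin_reroute_none_of_mem {ψ : V → Option V}
    (hw : w ∈ basin ψ (some u) ∪ basin ψ none) :
    basin (reroute ψ u w) none = basin ψ (some u) ∪ basin ψ none := by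
  ext v
  simp only [mem_basin, mem_union, reroute] at hw ⊢
  split_ifs with hv hwu
  · simp [hv]
  · simp [hv, hw.resolve_left hwu]
  · simp [hv]

theorem reroute_eq_reroute_self {ψ : V → Option V} (hu : ψ u = some u)
    (hw : w ∈ basin ψ (some u) ∪ basin ψ none) : reroute ψ u w = reroute ψ u u := by
  simp only [mem_basin, mem_union] at hw
  funext v
  rcases hw with hw | hw <;> simp [reroute, hu, hw]

theorem disjoint_basin {ψ : V → Option V} {x y : Option V} (hxy : x ≠ y) :
    Disjoint (basin ψ x) (basin ψ y) :=
  disjoint_left.2 fun _ hx hy => hxy ((mem_basin.1 hx).symm.trans (mem_basin.1 hy))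

open Classical in
/-- The weight of the part of `f` visible on `O`: among the `n ^ (n - #O)` ways to redefine `f`
outside `O`, a proportion of `treeWeight f O / n` yields tree maps. -/
noncomputable def treeWeight (f : V → V) (O : Finset V) : ℕ :=
  if IsPartialTree f O then max 1 #(basin (firstFree f O) none) else 0

theorem treeWeight_update_insert_of_notMem (hu : u ∉ O)
    (hw : w ∉ basin (firstFree f O) (some u) ∪ basin (firstFree f O) none) :
    treeWeight (Function.update f u w) (insert u O) = treeWeight f O := by
  classical
  simp only [mem_union, mem_basin, not_or] at hw
  rw [treeWeight, treeWeight, firstFree_update_insert f hu, basin_reroute_none_of_ne hw.2 hw.1]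
  exact if_congr (isPartialTree_update_insert_of_ne hu hw.1) rfl rfl

theorem card_pos_basin_union (hu : u ∉ O) :
    1 ≤ #(basin (firstFree f O) (some u) ∪ basin (firstFree f O) none) :=
  card_pos.2 ⟨u, mem_union_left _ (mem_basin.2 (firstFree_of_notMem hu))⟩

open Classical in
theorem treeWeight_update_insert_of_mem (hu : u ∉ O)
    (hw : w ∈ basin (firstFree f O) (some u) ∪ basin (firstFree f O) none) :
    treeWeight (Function.update f u w) (insert u O) =
      if IsPartialTree (Function.update f u w) (insert u O) then
        #(basin (firstFree f O) (some u) ∪ basin (firstFree f O) none) else 0 := by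
  rw [treeWeight, firstFree_update_insert f hu, basin_reroute_none_of_mem hw,
    max_eq_right (card_pos_basin_union hu)]

open Classical in
theorem card_isPartialTree_update_insert (hu : u ∉ O) :
    #{w ∈ basin (firstFree f O) (some u) ∪ basin (firstFree f O) none |
      IsPartialTree (Function.update f u w) (insert u O)} = treeWeight f O := by
  have filter_none : {w ∈ basin (firstFree f O) none |
      IsPartialTree (Function.update f u w) (insert u O)} =
        if IsPartialTree f O then basin (firstFree f O) none else ∅ := by
    rw [← filter_const]
    refine filter_congr fun w hw => isPartialTree_update_insert_of_ne hu ?_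
    simp [mem_basin.1 hw]
  have filter_some : {w ∈ basin (firstFree f O) (some u) |
      IsPartialTree (Function.update f u w) (insert u O)} =
        if ∀ v, firstFree f O v ≠ none then {u} else ∅ := by
    rw [filter_congr fun w hw => isPartialTree_update_insert_of_eq hu (mem_basin.1 hw)]
    ext w
    split_ifs with hne
    · simp only [mem_filter, mem_basin, mem_singleton]
      exact ⟨fun h => h.2.2, fun h => ⟨h.symm ▸ firstFree_of_notMem hu, hne, h⟩⟩
    · simp [hne]
  rw [filter_union, filter_none, filter_some, treeWeight]
  by_cases hne : ∀ v, firstFree f O v ≠ none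
  · have partial_tree : IsPartialTree f O := ⟨u, fun v hv => absurd hv (hne v)⟩
    have no_blocked : basin (firstFree f O) none = ∅ :=
      eq_empty_of_forall_notMem fun v hv => hne v (mem_basin.1 hv)
    simp [hne, partial_tree, no_blocked]
  · obtain ⟨v, hv⟩ : ∃ v, firstFree f O v = none := by simpa using hne
    have blocked_pos : 1 ≤ #(basin (firstFree f O) none) := card_pos.2 ⟨v, mem_basin.2 hv⟩
    rw [if_neg hne, empty_union, apply_ite card, card_empty, max_eq_right blocked_pos]

theorem sum_treeWeight_update_mul (hu : u ∉ O) (G : (V → Option V) → ℚ) :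
    ∑ w, treeWeight (Function.update f u w) (insert u O) * G (reroute (firstFree f O) u w) =
      treeWeight f O * ∑ w, G (reroute (firstFree f O) u w) := by
  classical
  set S := basin (firstFree f O) (some u) ∪ basin (firstFree f O) none with hS
  have sum_mem : ∑ w ∈ S, (treeWeight (Function.update f u w) (insert u O) : ℚ) =
      #S * treeWeight f O := by
    rw [← card_isPartialTree_update_insert hu, ← hS, mul_comm, ← nsmul_eq_mul, ← sum_const,
      sum_filter]
    refine sum_congr rfl fun w hw => ?_
    rw [treeWeight_update_insert_of_mem hu hw, Nat.cast_ite, Nat.cast_zero]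
  have reroute_const (w : V) (hw : w ∈ S) :
      G (reroute (firstFree f O) u w) = G (reroute (firstFree f O) u u) := by
    rw [reroute_eq_reroute_self (firstFree_of_notMem hu) hw]
  have sum_notMem : ∑ w ∈ Sᶜ, treeWeight (Function.update f u w) (insert u O) *
      G (reroute (firstFree f O) u w) =
        treeWeight f O * ∑ w ∈ Sᶜ, G (reroute (firstFree f O) u w) := by
    rw [mul_sum]
    refine sum_congr rfl fun w hw => ?_
    rw [treeWeight_update_insert_of_notMem hu (mem_compl.1 hw)]
  rw [← sum_add_sum_compl S, ← sum_add_sum_compl S fun w => G _, sum_notMem,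
    sum_congr rfl fun w hw => by rw [reroute_const w hw], ← sum_mul, sum_mem,
    sum_congr rfl reroute_const, sum_const, nsmul_eq_mul]
  ring

end Trees

section TreeExtensions

open scoped Matrix

variable {V : Type*} [DecidableEq V] [Fintype V] {f : V → V} {O : Finset V}

open Classical in
/-- The tree maps that agree with `f` on `O`. -/
noncomputable def treeExtensions (f : V → V) (O : Finset V) : Finset (V → V) :=
  {g | IsTreeMap g ∧ Set.EqOn f g O}

theorem mem_treeExtensions {g : V → V} :
    g ∈ treeExtensions f O ↔ IsTreeMap g ∧ Set.EqOn f g O := by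
  simp [treeExtensions]

theorem mem_treeExtensions_update_insert {g : V → V} {u w : V} (hu : u ∉ O) :
    g ∈ treeExtensions (Function.update f u w) (insert u O) ↔
      g ∈ treeExtensions f O ∧ g u = w := by
  have agree : Set.EqOn (Function.update f u w) g ↑(insert u O) ↔ Set.EqOn f g O ∧ g u = w := by
    simp only [Set.EqOn, mem_coe, forall_mem_insert, Function.update_self]
    rw [and_comm, eq_comm]
    exact and_congr_left' ⟨(eqOn_update f hu w).trans, (eqOn_update f hu w).symm.trans⟩
  rw [mem_treeExtensions, mem_treeExtensions, agree, and_assoc]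

theorem sum_treeExtensions_eq_sum_update {u : V} (hu : u ∉ O) (F : (V → V) → ℚ) :
    ∑ g ∈ treeExtensions f O, F g =
      ∑ w, ∑ g ∈ treeExtensions (Function.update f u w) (insert u O), F g := by
  rw [← sum_fiberwise _ fun g => g u]
  refine sum_congr rfl fun w _ => sum_congr ?_ fun _ _ => rfl
  ext g
  rw [mem_filter, mem_treeExtensions_update_insert hu]

theorem card_mul_card_treeExtensions_univ (f : V → V) :
    Fintype.card V * #(treeExtensions f univ) = treeWeight f univ := by
  classical
  have all_blocked : basin (firstFree f univ) none = univ :=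
    eq_univ_of_forall fun v => mem_basin.2 (firstFree_eq_none_iff.2 fun _ => mem_univ _)
  rw [treeWeight, all_blocked, card_univ, isPartialTree_univ]
  split_ifs with hf
  · have only_self : treeExtensions f univ = {f} := by
      ext g
      rw [mem_treeExtensions, coe_univ, Set.eqOn_univ, mem_singleton, eq_comm]
      exact and_iff_right_of_imp fun h => h ▸ hf
    obtain ⟨root, -⟩ := hf
    rw [only_self, card_singleton, mul_one, max_eq_right (Fintype.card_pos_iff.2 ⟨root⟩)]
  · have no_extension : treeExtensions f univ = ∅ :=
      eq_empty_of_forall_notMem fun g hg => hf <| by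
        rw [mem_treeExtensions, coe_univ, Set.eqOn_univ] at hg
        exact hg.2 ▸ hg.1
    rw [no_extension, card_empty, mul_zero]

theorem card_pow_mul_card_treeExtensions (f : V → V) (O : Finset V) :
    (Fintype.card V : ℚ) ^ (#O + 1) * #(treeExtensions f O) =
      Fintype.card V ^ Fintype.card V * treeWeight f O := by
  induction hO : #Oᶜ generalizing f O with
  | zero =>
    obtain rfl : O = univ := by rwa [card_eq_zero, compl_eq_empty_iff] at hO
    rw [card_univ, pow_succ, mul_assoc]
    exact_mod_cast congrArg _ (card_mul_card_treeExtensions_univ f)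
  | succ k ih =>
    obtain ⟨u, hu⟩ : Oᶜ.Nonempty := card_pos.1 (hO ▸ k.succ_pos)
    have step (w : V) := ih (Function.update f u w) (insert u O) (by
      rw [compl_insert, card_erase_of_mem hu, hO, Nat.add_sub_cancel])
    rw [mem_compl] at hu
    have : Nonempty V := ⟨u⟩
    refine mul_left_cancel₀ (Nat.cast_ne_zero.2 (Fintype.card_ne_zero (α := V))) ?_
    calc (Fintype.card V : ℚ) * (Fintype.card V ^ (#O + 1) * #(treeExtensions f O))
        = ∑ w, (Fintype.card V : ℚ) ^ (#(insert u O) + 1) *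
            #(treeExtensions (Function.update f u w) (insert u O)) := by
          have split := sum_treeExtensions_eq_sum_update (f := f) hu 1
          simp only [Pi.one_apply, sum_const, nsmul_one] at split
          rw [split, ← mul_sum, card_insert_of_notMem hu, pow_succ' _ (#O + 1), mul_assoc]
      _ = Fintype.card V ^ Fintype.card V *
            ∑ w, (treeWeight (Function.update f u w) (insert u O) : ℚ) := by
          rw [mul_sum, sum_congr rfl fun w _ => step w]
      _ = Fintype.card V * (Fintype.card V ^ Fintype.card V * treeWeight f O) := by
          have average := sum_treeWeight_update_mul (f := f) hu 1
          simp only [Pi.one_apply, mul_one, sum_const, card_univ, nsmul_one] at average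
          rw [average]
          ring

/-- Entry `ψ ψ'` counts the pairs of a preference and of a parent for the vertex taken by the
driver with that preference for which the parking map `ψ` turns into `ψ'`. -/
def transition (V : Type*) [DecidableEq V] [Fintype V] :
    Matrix (V → Option V) (V → Option V) ℚ :=
  .of fun ψ ψ' => ∑ u, #(basin ψ (some u)) * #{w | reroute ψ u w = ψ'}

theorem transition_mulVec (G : (V → Option V) → ℚ) (ψ : V → Option V) :
    (transition V *ᵥ G) ψ = ∑ u, #(basin ψ (some u)) * ∑ w, G (reroute ψ u w) := by
  simp only [Matrix.mulVec, dotProduct, transition, Matrix.of_apply, sum_mul]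
  rw [sum_comm]
  refine sum_congr rfl fun u _ => ?_
  rw [← sum_fiberwise univ (reroute ψ u), mul_sum]
  refine sum_congr rfl fun ψ' _ => ?_
  rw [sum_congr rfl fun w hw => by rw [(mem_filter.1 hw).2], sum_const, nsmul_eq_mul, mul_assoc]

theorem basin_firstFree_eq_empty {u : V} (hu : u ∈ O) : basin (firstFree f O) (some u) = ∅ :=
  eq_empty_of_forall_notMem fun _ hv =>
    let ⟨_, _, huO, _⟩ := firstFree_eq_some_iff.1 (mem_basin.1 hv)
    huO hu

theorem card_pow_mul_sum_parkingCount (f : V → V) (O : Finset V) (r : ℕ) :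
    (Fintype.card V : ℚ) ^ (#O + r + 1) * ∑ g ∈ treeExtensions f O, (parkingCount g O r : ℚ) =
      Fintype.card V ^ Fintype.card V *
        (treeWeight f O * (transition V ^ r *ᵥ 1) (firstFree f O)) := by
  induction r generalizing f O with
  | zero => simpa [parkingCount_zero] using card_pow_mul_card_treeExtensions f O
  | succ r ih =>
    have count_succ (g : V → V) (hg : g ∈ treeExtensions f O) :
        (parkingCount g O (r + 1) : ℚ) =
          ∑ u, #(basin (firstFree f O) (some u)) * (parkingCount g (insert u O) r : ℚ) := by
      rw [parkingCount_succ, ← firstFree_congr (mem_treeExtensions.1 hg).2]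
      push_cast
      rfl
    have park_at (u : V) : (Fintype.card V : ℚ) ^ (#O + (r + 1) + 1) *
        (#(basin (firstFree f O) (some u)) *
          ∑ g ∈ treeExtensions f O, (parkingCount g (insert u O) r : ℚ)) =
        Fintype.card V ^ Fintype.card V * (treeWeight f O * (#(basin (firstFree f O) (some u)) *
          ∑ w, (transition V ^ r *ᵥ 1) (reroute (firstFree f O) u w))) := by
      by_cases hu : u ∈ O
      · simp [basin_firstFree_eq_empty hu]
      · rw [mul_left_comm, sum_treeExtensions_eq_sum_update hu, mul_sum]
        simp_rw [show #O + (r + 1) + 1 = #(insert u O) + r + 1 by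
          rw [card_insert_of_notMem hu]; ring, ih, firstFree_update_insert f hu]
        rw [← mul_sum, sum_treeWeight_update_mul hu]
        ring
    rw [sum_congr rfl count_succ, sum_comm, pow_succ' (transition V), ← Matrix.mulVec_mulVec,
      transition_mulVec]
    simp_rw [← mul_sum]
    rw [mul_sum, sum_congr rfl fun u _ => park_at u, ← mul_sum, ← mul_sum]

theorem card_pow_mul_sum_parkingCount_empty [Nonempty V] (m : ℕ) :
    (Fintype.card V : ℚ) ^ (m + 1) * ∑ g ∈ treeExtensions (id : V → V) ∅, (parkingCount g ∅ m : ℚ) =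
      Fintype.card V ^ Fintype.card V * ∑ ψ, (transition V ^ m) (some : V → Option V) ψ := by
  classical
  have no_blocked : basin (some : V → Option V) none = ∅ :=
    eq_empty_of_forall_notMem fun v hv => by simp [mem_basin] at hv
  have partial_tree : IsPartialTree (id : V → V) ∅ :=
    ⟨Classical.arbitrary V, fun v hv => by simp [firstFree_empty] at hv⟩
  have weight : treeWeight (id : V → V) ∅ = 1 := by
    rw [treeWeight, if_pos partial_tree, firstFree_empty, no_blocked, card_empty, max_eq_left]
    exact zero_le_one
  have count := card_pow_mul_sum_parkingCount (id : V → V) ∅ m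
  rwa [weight, firstFree_empty, card_empty, zero_add, Nat.cast_one, one_mul, Matrix.mulVec,
    dotProduct_one] at count

end TreeExtensions

section FCount

theorem isSome_parkAux_iff {n : ℕ} (f : Fin n → Fin n) (occ l : List (Fin n)) :
    (parkAux n f occ l).isSome ↔ Parks f occ.toFinset l := by
  induction l generalizing occ with
  | nil => simp [parkAux, Parks]
  | cons v l ih =>
    unfold parkAux Parks
    rcases hx : (List.range n).find? (fun i => decide (f^[i] v ∉ occ)) with _ | i
    · have blocked : firstFree f occ.toFinset v = none := by
        rw [List.find?_eq_none] at hx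
        refine firstFree_eq_none_iff.2 fun k => ?_
        obtain ⟨i, hi, hik⟩ := exists_lt_card_iterate_eq f v k
        rw [Fintype.card_fin] at hi
        simpa [hik] using hx i (List.mem_range.2 hi)
      simp [blocked]
    · have parks : firstFree f occ.toFinset v = some (f^[i] v) := by
        obtain ⟨hi, -, hlt⟩ := List.find?_range_eq_some.1 hx
        exact firstFree_eq_some_iff.2
          ⟨i, rfl, by simpa using hi, fun j hj => by simpa using hlt j hj⟩
      simp [parks, ih]

theorem bijective_parent_labelledRootedTree (n : ℕ) :
    Function.Bijective fun T : LabelledRootedTree n =>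
      (⟨T.parent, T.root, T.parent_root, T.reaches_root⟩ : {f : Fin n → Fin n // IsTreeMap f}) := by
  constructor
  · rintro ⟨r, f, hr, hreach⟩ ⟨r', f', hr', hreach'⟩ heq
    obtain rfl : f = f' := congrArg Subtype.val heq
    obtain ⟨k, hk⟩ := hreach' r
    obtain rfl : r = r' := by rwa [Function.iterate_fixed hr] at hk
    rfl
  · rintro ⟨f, r, hr, hreach⟩
    exact ⟨⟨r, f, hr, hreach⟩, rfl⟩

theorem FCount_eq_sum_parkingCount (n m : ℕ) :
    FCount n m = ∑ f ∈ treeExtensions (id : Fin n → Fin n) ∅, parkingCount f ∅ m := by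
  classical
  let treeEquiv := Equiv.ofBijective _ (bijective_parent_labelledRootedTree n)
  have : Fintype (LabelledRootedTree n) := Fintype.ofEquiv _ treeEquiv.symm
  have count (T : LabelledRootedTree n) :
      Nat.card {s : Fin m → Fin n // IsTreeParking T s} = parkingCount T.parent ∅ m := by
    rw [Nat.card_eq_fintype_card, Fintype.card_subtype, parkingCount]
    simp only [IsTreeParking, ParkingSucceeds, isSome_parkAux_iff, List.toFinset_nil]
  rw [FCount, Nat.card_congr (Equiv.subtypeProdEquivSigmaSubtype IsTreeParking), Nat.card_sigma,
    sum_congr rfl fun T _ => count T,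
    sum_subtype (treeExtensions id ∅) (p := IsTreeMap) (by simp [mem_treeExtensions])]
  exact treeEquiv.sum_comp fun f => parkingCount f.1 ∅ m

end FCount

section Detachment

variable {V : Type*} [DecidableEq V]

/-- Every vertex at which a driver parks according to `ψ` is free: a driver starting there parks
there. This holds for the parking maps `firstFree f O`. -/
def IsIdempotent (ψ : V → Option V) : Prop := ∀ ⦃v y⦄, ψ v = some y → ψ y = some y

variable {ψ : V → Option V} {u w : V} {D : Finset V}

theorem reroute_ne_some_self (v : V) : reroute ψ u w v ≠ some u := by
  unfold reroute
  split_ifs <;> simp_all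

theorem IsIdempotent.reroute (hψ : IsIdempotent ψ) (u w : V) : IsIdempotent (reroute ψ u w) := by
  intro v y hv
  have hyu : y ≠ u := fun h => reroute_ne_some_self v (h ▸ hv)
  have hy : ψ y = some y := by
    unfold TreeParking.reroute at hv
    split_ifs at hv <;> exact hψ hv
  simp [TreeParking.reroute, hy, hyu]

/-- The parking map obtained from `ψ` when the occupied vertex `u` is vacated and the drivers
starting in `insert u D` park there. -/
def detach (ψ : V → Option V) (u : V) (D : Finset V) (v : V) : Option V :=
  if v ∈ insert u D then some u else ψ v

variable [Fintype V]

/-- The vertices at which no driver can park. -/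
def occupied (ψ : V → Option V) : Finset V := {v | ψ v ≠ some v}

theorem mem_occupied {v : V} : v ∈ occupied ψ ↔ ψ v ≠ some v := by
  simp [occupied]

theorem IsIdempotent.basin_eq_empty (hψ : IsIdempotent ψ) (hu : u ∈ occupied ψ) :
    basin ψ (some u) = ∅ :=
  eq_empty_of_forall_notMem fun _ hv => mem_occupied.1 hu (hψ (mem_basin.1 hv))

theorem IsIdempotent.eq_some_self (hψ : IsIdempotent ψ) (hu : #(basin ψ (some u)) ≠ 0) :
    ψ u = some u := by
  contrapose! hu
  rw [hψ.basin_eq_empty (mem_occupied.2 hu), card_empty]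

theorem IsIdempotent.occupied_reroute (hψ : IsIdempotent ψ) (u w : V) :
    occupied (TreeParking.reroute ψ u w) = insert u (occupied ψ) := by
  ext v
  rw [mem_insert, mem_occupied, mem_occupied]
  rcases eq_or_ne v u with rfl | hvu
  · simp [reroute_ne_some_self]
  · unfold TreeParking.reroute
    split_ifs with hv hw
    · simp [hv, Ne.symm hvu]
    · have hwv : ψ w ≠ some v := fun h => by simp [hψ h, hvu] at hv
      simp [hv, hwv, Ne.symm hvu]
    · simp [hvu]

/-- The drivers other than the one starting at `u` who may have parked at `u` before `u` got
occupied and who are sent to `ψ u` since then. -/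
def detachable (ψ : V → Option V) (u : V) : Finset V :=
  {v ∈ basin ψ (ψ u) | v ≠ u ∧ v ∈ occupied ψ}

theorem mem_detachable {v : V} :
    v ∈ detachable ψ u ↔ ψ v = ψ u ∧ v ≠ u ∧ v ∈ occupied ψ := by
  rw [detachable, mem_filter, mem_basin]

theorem insert_detachable_subset_basin : insert u (detachable ψ u) ⊆ basin ψ (ψ u) :=
  insert_subset (mem_basin.2 rfl) (filter_subset _ _)

theorem notMem_of_subset_detachable (hD : D ⊆ detachable ψ u) : u ∉ D :=
  fun hu => (mem_detachable.1 (hD hu)).2.1 rfl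

theorem IsIdempotent.detach (hψ : IsIdempotent ψ) (hu : u ∈ occupied ψ)
    (hD : D ⊆ detachable ψ u) : IsIdempotent (detach ψ u D) := by
  intro v y hv
  unfold TreeParking.detach at hv ⊢
  split_ifs at hv with hvD
  · simp [Option.some.inj hv]
  · have hy : ψ y = some y := hψ hv
    have hyu : y ≠ u := fun h => mem_occupied.1 hu (h ▸ hy)
    have hyD : y ∉ D := fun h => mem_occupied.1 (mem_detachable.1 (hD h)).2.2 hy
    simp [hyu, hyD, hy]

theorem detach_reroute (hu : ψ u = some u) (w : V) :
    detach (reroute ψ u w) u ((basin ψ (some u)).erase u) = ψ := by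
  funext v
  rw [detach, insert_erase (mem_basin.2 hu)]
  split_ifs with hv
  · exact (mem_basin.1 hv).symm
  · exact if_neg fun h => hv (mem_basin.2 h)

theorem IsIdempotent.basin_erase_subset_detachable (hψ : IsIdempotent ψ) (hu : ψ u = some u)
    (w : V) : (basin ψ (some u)).erase u ⊆ detachable (TreeParking.reroute ψ u w) u := by
  intro v hv
  rw [mem_erase, mem_basin] at hv
  refine mem_detachable.2 ⟨by simp [TreeParking.reroute, hv.2, hu], hv.1, ?_⟩
  rw [hψ.occupied_reroute]
  refine mem_insert_of_mem (mem_occupied.2 ?_)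
  simp [hv.2, Ne.symm hv.1]

theorem IsIdempotent.basin_detach_self (hψ : IsIdempotent ψ) (hu : u ∈ occupied ψ) :
    basin (TreeParking.detach ψ u D) (some u) = insert u D := by
  ext v
  have hv : ψ v ≠ some u := fun h => mem_occupied.1 hu (hψ h)
  rw [mem_basin, TreeParking.detach]
  split_ifs with hvD <;> simp only [hvD, hv]

theorem basin_detach_of_ne {x : Option V} (hx : x ≠ some u) :
    basin (detach ψ u D) x = basin ψ x \ insert u D := by
  ext v
  rw [mem_sdiff, mem_basin, mem_basin, detach]
  split_ifs with hv <;> simp [hv, hx.symm]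

theorem injOn_detach (hψ : IsIdempotent ψ) (hu : u ∈ occupied ψ) :
    Set.InjOn (detach ψ u) (detachable ψ u).powerset := by
  intro D hD E hE hDE
  rw [mem_coe, mem_powerset] at hD hE
  rw [← erase_insert (notMem_of_subset_detachable hD), ← hψ.basin_detach_self hu, hDE,
    hψ.basin_detach_self hu, erase_insert (notMem_of_subset_detachable hE)]

theorem reroute_detach_eq_iff (hψ : IsIdempotent ψ) (hu : u ∈ occupied ψ)
    (hD : D ⊆ detachable ψ u) :
    reroute (detach ψ u D) u w = ψ ↔
      (if detach ψ u D w = some u then none else detach ψ u D w) = ψ u := by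
  have mem_iff (v : V) : detach ψ u D v = some u ↔ v ∈ insert u D := by
    rw [← hψ.basin_detach_self hu, mem_basin]
  constructor
  · intro h
    conv_rhs => rw [← h, reroute, if_pos ((mem_iff u).2 (mem_insert_self u D))]
  · intro h
    funext v
    rw [reroute, h]
    split_ifs with hv
    · rcases mem_insert.1 ((mem_iff v).1 hv) with rfl | hvD
      · rfl
      · exact (mem_detachable.1 (hD hvD)).1.symm
    · exact if_neg fun h => hv ((mem_iff v).2 h)

theorem filter_reroute_detach_of_eq_none (hψ : IsIdempotent ψ) (hu : ψ u = none)
    (hD : D ⊆ detachable ψ u) :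
    ({w | reroute (detach ψ u D) u w = ψ} : Finset V) = basin ψ none := by
  have hocc : u ∈ occupied ψ := mem_occupied.2 (by simp [hu])
  have hsub : insert u D ⊆ basin ψ none :=
    hu ▸ (insert_subset_insert u hD).trans insert_detachable_subset_basin
  ext w
  rw [mem_filter_univ, reroute_detach_eq_iff hψ hocc hD, hu, mem_basin, detach]
  split_ifs with hw hw' hw'
  · simpa using mem_basin.1 (hsub hw)
  · simp at hw'
  · exact absurd (hψ hw') (mem_occupied.1 hocc)
  · rfl

theorem filter_reroute_detach_of_eq_some {y : V} (hψ : IsIdempotent ψ) (hu : u ∈ occupied ψ)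
    (hy : ψ u = some y) (hD : D ⊆ detachable ψ u) :
    ({w | reroute (detach ψ u D) u w = ψ} : Finset V) = basin ψ (some y) \ insert u D := by
  have hyu : some y ≠ some u := hy ▸ mem_occupied.1 hu
  ext w
  rw [mem_filter_univ, reroute_detach_eq_iff hψ hu hD, hy, ← basin_detach_of_ne hyu, mem_basin]
  split_ifs with hw
  · simp [hw, hyu.symm]
  · rfl

end Detachment

section Weight

open scoped Matrix

variable {V : Type*} [DecidableEq V] [Fintype V] {ψ : V → Option V} {u : V} {D : Finset V}

/-- The factor contributed by the basin of `x`, as a function of its size. -/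
noncomputable def basinWeight : Option V → ℕ → ℚ
  | none => blockedWeight
  | some _ => freeWeight

open Classical in
/-- The product of the weights of the basins of `ψ`, and `0` if `ψ` is not idempotent. Up to a
factorial, it counts the runs of the transition matrix from the empty parking lot to `ψ`. -/
noncomputable def weight (ψ : V → Option V) : ℚ :=
  if IsIdempotent ψ then ∏ x, basinWeight x #(basin ψ x) else 0

theorem isIdempotent_of_weight_ne_zero (h : weight ψ ≠ 0) : IsIdempotent ψ := by
  by_contra hψ
  exact h (if_neg hψ)

/-- The part of `weight ψ` that is unchanged when vertices are moved from the basin of `ψ u` to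
the basin of `u`. -/
noncomputable def weightAway (ψ : V → Option V) (u : V) : ℚ :=
  ∏ x ∈ (univ.erase (ψ u)).erase (some u), basinWeight x #(basin ψ x)

theorem prod_basinWeight_eq {x : Option V} (hx : x ≠ some u) (χ : V → Option V) :
    ∏ z, basinWeight z #(basin χ z) =
      basinWeight x #(basin χ x) * freeWeight #(basin χ (some u)) *
        ∏ z ∈ (univ.erase x).erase (some u), basinWeight z #(basin χ z) := by
  rw [← mul_prod_erase univ _ (mem_univ x), ← mul_prod_erase (univ.erase x) _
    (mem_erase.2 ⟨hx.symm, mem_univ (some u)⟩), mul_assoc]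
  rfl

theorem weight_eq_mul_weightAway (hψ : IsIdempotent ψ) (hu : u ∈ occupied ψ) :
    weight ψ = basinWeight (ψ u) #(basin ψ (ψ u)) * weightAway ψ u := by
  rw [weight, if_pos hψ, prod_basinWeight_eq (mem_occupied.1 hu), hψ.basin_eq_empty hu,
    card_empty, freeWeight, mul_one, weightAway]

theorem card_basin_sdiff_insert (hD : D ⊆ detachable ψ u) :
    #(basin ψ (ψ u) \ insert u D) = #(basin ψ (ψ u)) - (#D + 1) := by
  rw [card_sdiff_of_subset ((insert_subset_insert u hD).trans insert_detachable_subset_basin),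
    card_insert_of_notMem (notMem_of_subset_detachable hD)]

theorem weight_detach (hψ : IsIdempotent ψ) (hu : u ∈ occupied ψ) (hD : D ⊆ detachable ψ u) :
    weight (detach ψ u D) =
      basinWeight (ψ u) (#(basin ψ (ψ u)) - (#D + 1)) * freeWeight (#D + 1) *
        weightAway ψ u := by
  have hsub := (insert_subset_insert u hD).trans insert_detachable_subset_basin
  have basin_away (x : Option V) (hx : x ∈ (univ.erase (ψ u)).erase (some u)) :
      basin (detach ψ u D) x = basin ψ x := by
    rw [mem_erase, mem_erase] at hx
    rw [basin_detach_of_ne hx.1, sdiff_eq_self_of_disjoint]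
    exact (disjoint_basin hx.2.1).mono_right hsub
  rw [weight, if_pos (hψ.detach hu hD), prod_basinWeight_eq (mem_occupied.1 hu),
    hψ.basin_detach_self hu, card_insert_of_notMem (notMem_of_subset_detachable hD),
    basin_detach_of_ne (mem_occupied.1 hu), card_basin_sdiff_insert hD,
    prod_congr rfl fun x hx => by rw [basin_away x hx], weightAway]

theorem card_basin_of_eq_none (hu : ψ u = none) : #(basin ψ none) = #(detachable ψ u) + 1 := by
  have basin_eq : basin ψ none = insert u (detachable ψ u) := by
    refine Subset.antisymm (fun v hv => ?_) (hu ▸ insert_detachable_subset_basin)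
    rw [mem_basin] at hv
    simp [mem_detachable, mem_occupied, hv, hu, em]
  rw [basin_eq, card_insert_of_notMem (notMem_of_subset_detachable Subset.rfl)]

theorem IsIdempotent.card_basin_of_eq_some {y : V} (hψ : IsIdempotent ψ) (hu : u ∈ occupied ψ)
    (hy : ψ u = some y) : #(basin ψ (some y)) = #(detachable ψ u) + 2 := by
  have hyy : ψ y = some y := hψ hy
  have hyu : y ≠ u := by
    rintro rfl
    exact mem_occupied.1 hu hy
  have basin_eq : basin ψ (some y) = insert y (insert u (detachable ψ u)) := by
    refine Subset.antisymm (fun v hv => ?_)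
      (insert_subset (mem_basin.2 hyy) (hy ▸ insert_detachable_subset_basin))
    rw [mem_basin] at hv
    simp only [mem_insert, mem_detachable, mem_occupied, hv, hy, true_and, ne_eq,
      Option.some.injEq]
    tauto
  have hy_notMem : y ∉ insert u (detachable ψ u) := by
    simp [mem_detachable, mem_occupied, hyu, hyy]
  rw [basin_eq, card_insert_of_notMem hy_notMem,
    card_insert_of_notMem (notMem_of_subset_detachable Subset.rfl)]

theorem sum_weight_detach_of_eq_none (hψ : IsIdempotent ψ) (hu : ψ u = none) :
    ∑ D ∈ (detachable ψ u).powerset, weight (detach ψ u D) *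
      (#(basin (detach ψ u D) (some u)) * #{w | reroute (detach ψ u D) u w = ψ}) =
        weight ψ := by
  have hocc : u ∈ occupied ψ := mem_occupied.2 (by simp [hu])
  rw [weight_eq_mul_weightAway hψ hocc, hu, basinWeight, card_basin_of_eq_none hu,
    ← card_succ_mul_sum_powerset_freeWeight_mul_blockedWeight, mul_sum, sum_mul]
  refine sum_congr rfl fun D hD => ?_
  rw [mem_powerset] at hD
  rw [weight_detach hψ hocc hD, hψ.basin_detach_self hocc,
    card_insert_of_notMem (notMem_of_subset_detachable hD),
    filter_reroute_detach_of_eq_none hψ hu hD, hu, basinWeight, card_basin_of_eq_none hu,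
    Nat.add_sub_add_right]
  push_cast
  ring

theorem sum_weight_detach_of_eq_some {y : V} (hψ : IsIdempotent ψ) (hu : u ∈ occupied ψ)
    (hy : ψ u = some y) :
    ∑ D ∈ (detachable ψ u).powerset, weight (detach ψ u D) *
      (#(basin (detach ψ u D) (some u)) * #{w | reroute (detach ψ u D) u w = ψ}) =
        weight ψ := by
  rw [weight_eq_mul_weightAway hψ hu, hy, basinWeight, hψ.card_basin_of_eq_some hu hy,
    ← sum_powerset_freeWeight_mul_freeWeight, sum_mul]
  refine sum_congr rfl fun D hD => ?_
  rw [mem_powerset] at hD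
  have card_sub : #(detachable ψ u) + 2 - (#D + 1) = #(detachable ψ u) - #D + 1 := by
    have := card_le_card hD
    omega
  rw [weight_detach hψ hu hD, hψ.basin_detach_self hu,
    card_insert_of_notMem (notMem_of_subset_detachable hD),
    filter_reroute_detach_of_eq_some hψ hu hy hD, ← hy, card_basin_sdiff_insert hD, hy,
    basinWeight, hψ.card_basin_of_eq_some hu hy, card_sub]
  push_cast
  ring

theorem IsIdempotent.exists_reroute_eq (hψ : IsIdempotent ψ) {χ : V → Option V}
    (h : (#(basin ψ (some u)) * #{w | TreeParking.reroute ψ u w = χ} : ℚ) ≠ 0) :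
    ψ u = some u ∧ ∃ w, TreeParking.reroute ψ u w = χ := by
  obtain ⟨hbasin, hreroute⟩ := mul_ne_zero_iff.1 h
  rw [Nat.cast_ne_zero] at hbasin hreroute
  exact ⟨hψ.eq_some_self hbasin, by simpa [Finset.Nonempty] using hreroute⟩

theorem sum_weight_mul_eq_weight (hψ : IsIdempotent ψ) (hu : u ∈ occupied ψ) :
    ∑ χ, weight χ * (#(basin χ (some u)) * #{w | reroute χ u w = ψ}) = weight ψ := by
  have mem_image (χ : V → Option V)
      (hχ : weight χ * (#(basin χ (some u)) * #{w | reroute χ u w = ψ}) ≠ 0) :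
      χ ∈ (detachable ψ u).powerset.image (detach ψ u) := by
    obtain ⟨hweight, hstep⟩ := mul_ne_zero_iff.1 hχ
    have idempotent := isIdempotent_of_weight_ne_zero hweight
    obtain ⟨hχu, w, rfl⟩ := idempotent.exists_reroute_eq hstep
    exact mem_image.2 ⟨(basin χ (some u)).erase u,
      mem_powerset.2 (idempotent.basin_erase_subset_detachable hχu w), detach_reroute hχu w⟩
  rw [← sum_subset (subset_univ _) fun χ _ hχ => by_contra fun h => hχ (mem_image χ h),
    sum_image (injOn_detach hψ hu)]
  rcases hy : ψ u with _ | y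
  · exact sum_weight_detach_of_eq_none hψ hy
  · exact sum_weight_detach_of_eq_some hψ hu hy

theorem card_occupied_of_weight_mul_transition_ne_zero {χ : V → Option V}
    (h : weight ψ * transition V ψ χ ≠ 0) : #(occupied χ) = #(occupied ψ) + 1 := by
  obtain ⟨hweight, htransition⟩ := mul_ne_zero_iff.1 h
  have idempotent := isIdempotent_of_weight_ne_zero hweight
  obtain ⟨u, -, hstep⟩ := exists_ne_zero_of_sum_ne_zero htransition
  obtain ⟨hu, w, rfl⟩ := idempotent.exists_reroute_eq hstep
  rw [idempotent.occupied_reroute, card_insert_of_notMem (by simp [mem_occupied, hu])]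

theorem weight_vecMul_transition :
    weight ᵥ* transition V = fun ψ => #(occupied ψ) * weight ψ := by
  funext ψ
  have sum_eq (u : V) : ∑ χ, weight χ * (#(basin χ (some u)) * #{w | reroute χ u w = ψ}) =
      if u ∈ occupied ψ then weight ψ else 0 := by
    split_ifs with hu
    · by_cases hψ : IsIdempotent ψ
      · exact sum_weight_mul_eq_weight hψ hu
      · rw [weight, if_neg hψ]
        refine sum_eq_zero fun χ _ => by_contra fun h => ?_
        obtain ⟨hweight, hstep⟩ := mul_ne_zero_iff.1 h
        have idempotent := isIdempotent_of_weight_ne_zero hweight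
        obtain ⟨-, w, rfl⟩ := idempotent.exists_reroute_eq hstep
        exact hψ (idempotent.reroute u w)
    · refine sum_eq_zero fun χ _ => ?_
      have no_step : ({w | reroute χ u w = ψ} : Finset V) = ∅ := by
        refine filter_eq_empty_iff.2 ?_
        rintro w - rfl
        exact hu (mem_occupied.2 (reroute_ne_some_self u))
      rw [no_step, card_empty, Nat.cast_zero, mul_zero, mul_zero]
  simp_rw [Matrix.vecMul, dotProduct, transition, Matrix.of_apply, mul_sum]
  rw [sum_comm, sum_congr rfl fun u _ => sum_eq u, sum_ite_mem, univ_inter, sum_const,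
    nsmul_eq_mul]

theorem weight_some : weight (some : V → Option V) = 1 := by
  have idempotent : IsIdempotent (some : V → Option V) := fun _ _ _ => rfl
  have basin_none : basin (some : V → Option V) none = ∅ := by simp [basin]
  have basin_some (y : V) : basin some (some y) = {y} := by ext; simp [mem_basin]
  simp [weight, idempotent, Fintype.prod_option, basinWeight, basin_none, basin_some,
    blockedWeight_zero, freeWeight_one]

theorem transition_pow_apply_some (k : ℕ) (ψ : V → Option V) :
    (transition V ^ k) some ψ = if #(occupied ψ) = k then k ! * weight ψ else 0 := by
  induction k generalizing ψ with
  | zero =>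
    have occupied_eq_empty_iff : #(occupied ψ) = 0 ↔ some = ψ := by
      rw [card_eq_zero, occupied, filter_eq_empty_iff, eq_comm, funext_iff]
      simp
    rw [pow_zero, Matrix.one_apply]
    simp only [occupied_eq_empty_iff]
    split_ifs with h
    · simp [← h, weight_some]
    · rfl
  | succ k ih =>
    have step (χ : V → Option V) : (transition V ^ k) some χ * transition V χ ψ =
        if #(occupied ψ) = k + 1 then k ! * (weight χ * transition V χ ψ) else 0 := by
      by_cases h : weight χ * transition V χ ψ = 0
      · rw [ih, h, mul_zero, ite_self, ite_mul, mul_assoc, h, mul_zero, zero_mul, ite_self]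
      · simp only [ih, card_occupied_of_weight_mul_transition_ne_zero h,
          Nat.add_right_cancel_iff, ite_mul, zero_mul, mul_assoc]
    rw [pow_succ, Matrix.mul_apply, sum_congr rfl fun χ _ => step χ]
    split_ifs with h
    · have invariant : ∑ χ, weight χ * transition V χ ψ = #(occupied ψ) * weight ψ :=
        congrFun weight_vecMul_transition ψ
      rw [← mul_sum, invariant, h, Nat.factorial_succ]
      push_cast
      ring
    · exact sum_const_zero

end Weight

section TotalWeight

variable {V : Type*} [DecidableEq V] {S : Finset V}

/-- The parking map with occupied vertices `S` which sends the drivers starting in `S` to the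
places prescribed by `c`. -/
def assign [Fintype V] (c : S → Option ↥Sᶜ) (v : V) : Option V :=
  if hv : v ∈ S then (c ⟨v, hv⟩).map Subtype.val else some v

variable [Fintype V]

theorem assign_coe (c : S → Option ↥Sᶜ) (v : S) : assign c v = (c v).map Subtype.val := by
  simp [assign]

theorem assign_of_notMem (c : S → Option ↥Sᶜ) {v : V} (hv : v ∉ S) : assign c v = some v :=
  dif_neg hv

theorem isIdempotent_assign (c : S → Option ↥Sᶜ) : IsIdempotent (assign c) := by
  intro v y hv
  by_cases hvS : v ∈ S
  · obtain ⟨⟨z, hz⟩, -, rfl⟩ := Option.map_eq_some_iff.1 ((assign_coe c ⟨v, hvS⟩).symm.trans hv)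
    exact assign_of_notMem c (mem_compl.1 hz)
  · obtain rfl : v = y := Option.some.inj ((assign_of_notMem c hvS).symm.trans hv)
    exact hv

theorem injective_assign : Function.Injective (assign : (S → Option ↥Sᶜ) → V → Option V) := by
  intro c d hcd
  funext v
  refine Option.map_injective Subtype.val_injective ?_
  rw [← assign_coe, ← assign_coe, hcd]

theorem occupied_assign (c : S → Option ↥Sᶜ) : occupied (assign c) = S := by
  ext v
  rw [mem_occupied]
  refine ⟨fun h => by_contra fun hv => h (assign_of_notMem c hv), fun hv h => ?_⟩
  obtain ⟨⟨z, hz⟩, -, rfl⟩ := Option.map_eq_some_iff.1 ((assign_coe c ⟨v, hv⟩).symm.trans h)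
  exact mem_compl.1 hz hv

theorem IsIdempotent.exists_assign_eq {ψ : V → Option V} (hψ : IsIdempotent ψ) :
    ∃ c : occupied ψ → Option ↥(occupied ψ)ᶜ, assign c = ψ := by
  have lift (v : V) : ∃ x : Option ↥(occupied ψ)ᶜ, x.map Subtype.val = ψ v := by
    rcases hv : ψ v with _ | y
    · exact ⟨none, rfl⟩
    · exact ⟨some ⟨y, by simp [mem_occupied, hψ hv]⟩, rfl⟩
  choose c hc using lift
  refine ⟨fun v => c v, funext fun v => ?_⟩
  by_cases hv : v ∈ occupied ψ
  · exact (assign_coe _ ⟨v, hv⟩).trans (hc v)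
  · rw [assign_of_notMem _ hv]
    exact (not_not.1 fun h => hv (mem_occupied.2 h)).symm

theorem mem_map_fiber_iff (c : S → Option ↥Sᶜ) (x : Option ↥Sᶜ) (v : V) :
    v ∈ ({s | c s = x} : Finset S).map (.subtype _) ↔ v ∈ S ∧ assign c v = x.map Subtype.val := by
  rw [mem_map]
  constructor
  · rintro ⟨s, hs, rfl⟩
    rw [Function.Embedding.subtype_apply, assign_coe, (mem_filter.1 hs).2]
    exact ⟨s.2, rfl⟩
  · rintro ⟨hv, hx⟩
    rw [← Subtype.coe_mk v hv, assign_coe] at hx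
    exact ⟨⟨v, hv⟩, mem_filter.2 ⟨mem_univ _, Option.map_injective Subtype.val_injective hx⟩, rfl⟩

theorem card_basin_assign_none (c : S → Option ↥Sᶜ) :
    #(basin (assign c) none) = #{v | c v = none} := by
  rw [← card_map (.subtype _)]
  congr 1
  ext v
  rw [mem_map_fiber_iff, mem_basin]
  exact (and_iff_right_of_imp fun h => by_contra fun hv => by
    simp [assign_of_notMem c hv] at h).symm

theorem card_basin_assign_some (c : S → Option ↥Sᶜ) (y : ↥Sᶜ) :
    #(basin (assign c) (some ↑y)) = #{v | c v = some y} + 1 := by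
  have hy : ↑y ∉ S := mem_compl.1 y.2
  have basin_eq : basin (assign c) (some ↑y) =
      insert ↑y (({s | c s = some y} : Finset S).map (.subtype _)) := by
    ext v
    rw [mem_basin, mem_insert, mem_map_fiber_iff, Option.map_some]
    by_cases hv : v ∈ S
    · simp [hv, ne_of_mem_of_not_mem hv hy]
    · simp [hv, assign_of_notMem]
  rw [basin_eq, card_insert_of_notMem fun h => hy ((mem_map_fiber_iff c _ _).1 h).1, card_map]

theorem weight_assign (c : S → Option ↥Sᶜ) :
    weight (assign c) = blockedWeight #{v | c v = none} *
      ∏ y, freeWeight (#{v | c v = some y} + 1) := by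
  rw [weight, if_pos (isIdempotent_assign c), Fintype.prod_option]
  simp only [basinWeight, card_basin_assign_none]
  rw [← prod_subset (subset_univ Sᶜ), ← prod_coe_sort]
  · simp only [card_basin_assign_some]
  · intro y _ hy
    rw [(isIdempotent_assign c).basin_eq_empty, card_empty, freeWeight]
    rwa [occupied_assign, ← notMem_compl]

theorem sum_weight_occupied_eq (S : Finset V) :
    ∑ ψ : V → Option V with occupied ψ = S, weight ψ =
      (#S)! * coeff #S (freeSeries ^ #Sᶜ * blockedSeries) := by
  have reindex : ∑ ψ : V → Option V with occupied ψ = S, weight ψ =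
      ∑ c : S → Option ↥Sᶜ, weight (assign c) := by
    rw [← sum_image injective_assign.injOn]
    refine (sum_subset (fun ψ hψ => ?_) fun ψ hψ hψ' => ?_).symm
    · obtain ⟨c, -, rfl⟩ := mem_image.1 hψ
      exact mem_filter.2 ⟨mem_univ _, occupied_assign c⟩
    · obtain rfl := (mem_filter.1 hψ).2
      refine by_contra fun h => hψ' ?_
      obtain ⟨c, hc⟩ := (isIdempotent_of_weight_ne_zero h).exists_assign_eq
      exact mem_image.2 ⟨c, mem_univ c, hc⟩
  have weights := sum_prod_card_fiber (α := S) (ι := Option ↥Sᶜ)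
    fun x => x.elim blockedWeight fun _ p => freeWeight (p + 1)
  simp only [Fintype.prod_option, Option.elim, egf_blockedWeight, egf_freeWeight_succ, prod_const,
    card_univ, Fintype.card_coe] at weights
  rw [reindex, mul_comm (freeSeries ^ _), ← weights]
  exact sum_congr rfl fun c _ => weight_assign c

theorem sum_transition_pow_some (V : Type*) [DecidableEq V] [Fintype V] (m : ℕ) :
    ∑ ψ, (transition V ^ m) (some : V → Option V) ψ =
      m ! * ((Fintype.card V).choose m *
        (m ! * coeff m (freeSeries ^ (Fintype.card V - m) * blockedSeries))) := by
  calc ∑ ψ, (transition V ^ m) (some : V → Option V) ψ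
      = m ! * ∑ ψ : V → Option V with #(occupied ψ) = m, weight ψ := by
        rw [sum_congr rfl fun ψ _ => transition_pow_apply_some m ψ, ← sum_filter, mul_sum]
    _ = m ! * ∑ S ∈ powersetCard m (univ : Finset V),
          ∑ ψ : V → Option V with occupied ψ = S, weight ψ := by
        rw [← sum_fiberwise_of_maps_to (g := occupied) (t := powersetCard m univ)
          fun ψ hψ => mem_powersetCard_univ.2 (mem_filter.1 hψ).2]
        congr 1
        refine sum_congr rfl fun S hS => sum_congr ?_ fun _ _ => rfl
        rw [filter_filter]
        refine filter_congr fun ψ _ => and_iff_right_of_imp ?_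
        rintro rfl
        exact mem_powersetCard_univ.1 hS
    _ = m ! * ((Fintype.card V).choose m *
          (m ! * coeff m (freeSeries ^ (Fintype.card V - m) * blockedSeries))) := by
        congr 1
        rw [← card_univ, ← card_powersetCard, ← nsmul_eq_mul, ← sum_const]
        refine sum_congr rfl fun S hS => ?_
        rw [sum_weight_occupied_eq, card_compl, mem_powersetCard_univ.1 hS, card_univ]

end TotalWeight

section Count

theorem pow_succ_mul_FCount {n m : ℕ} [NeZero n] (hm : m ≤ n) :
    (n : ℚ) ^ (m + 1) * FCount n m = n ^ n * (m ! * (n.choose m * (m ! *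
      coeff m (PowerSeries.mk 1 * (1 - X) ^ (n - m) * ((1 - 2 * X) * exp ℚ ^ (2 * n)))))) := by
  have count := card_pow_mul_sum_parkingCount_empty (V := Fin n) m
  rw [sum_transition_pow_some, Fintype.card_fin, coeff_freeSeries_pow_mul_blockedSeries,
    Nat.add_sub_cancel' hm, ← Nat.cast_sum, ← FCount_eq_sum_parkingCount] at count
  exact count

theorem sum_genChoose_two_mul_sub_eq_coeff {n m : ℕ} (hm : m ≤ n) :
    ∑ j ∈ range (m + 1), genChoose (2 * m - n - j) (m - j) * (n - j) * (2 * n) ^ j / j ! =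
      n * coeff m (PowerSeries.mk 1 * (1 - X) ^ (n - m) * ((1 - 2 * X) * exp ℚ ^ (2 * n))) := by
  rw [← sum_genChoose_eq_coeff]
  refine sum_congr rfl fun j hj => ?_
  have index : (2 * m - n - j : ℤ) = (m - j : ℕ) - (n - m : ℕ) := by
    have := mem_range.1 hj
    omega
  rw [index, mul_assoc, mul_div_assoc]

end Count

end TreeParking

/-- (Lackner–Panholzer, Corollary 4.6) For all `n ≥ 1` and `0 ≤ m ≤ n`,
`F_{n,m} = ((n-1)! m! n^(n-m-1) / (n-m)!) Σ_{j=0}^{m} binom(2m-n-j, m-j) (n-j)(2n)^j / j!`,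
as an identity of rational numbers (with generalized binomial coefficients; the power
`n^(n-m-1)` is taken with integer exponent, since it equals `n^{-1}` when `m = n`). -/
theorem lackner_panholzer_corollary_4_6 (n m : ℕ) (hn : 1 ≤ n) (hm : m ≤ n) :
    (FCount n m : ℚ) =
      (Nat.factorial (n - 1) : ℚ) * (Nat.factorial m : ℚ) *
            (n : ℚ) ^ ((n : ℤ) - (m : ℤ) - 1) /
          (Nat.factorial (n - m) : ℚ) *
        ∑ j ∈ Finset.range (m + 1),
          genChoose (2 * (m : ℤ) - (n : ℤ) - (j : ℤ)) (m - j) * ((n : ℚ) - (j : ℚ)) *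
              (2 * (n : ℚ)) ^ j / (Nat.factorial j : ℚ) := by
  have : NeZero n := NeZero.of_pos hn
  have hn0 : (n : ℚ) ≠ 0 := NeZero.ne _
  have choose_eq :
      (n.choose m : ℚ) = n * (n - 1).factorial / (m.factorial * (n - m).factorial) := by
    rw [Nat.cast_choose ℚ hm, ← Nat.mul_factorial_pred (NeZero.ne n), Nat.cast_mul]
  have pow_eq : (n : ℚ) ^ ((n : ℤ) - m - 1) = n ^ n / n ^ (m + 1) := by
    rw [sub_sub, zpow_sub₀ hn0, zpow_natCast]
    norm_cast
  have count := TreeParking.pow_succ_mul_FCount hm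
  rw [choose_eq] at count
  rw [TreeParking.sum_genChoose_two_mul_sub_eq_coeff hm, pow_eq]
  refine mul_left_cancel₀ (pow_ne_zero (m + 1) hn0) (count.trans ?_)
  field_simp
end
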